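/- arXiv:1906.00191 — 13 statements merged into one kernel-verified Lean document; each statement's English description precedes it below -/
import Mathlib

section
/- Let A, B, C be pairwise disjoint finite point sets in the plane such that A ∪ B ∪ C is in general position, A contains at least two points, and A separates B from C. Then every crossing family in A ∪ B ∪ C emanates from A, or emanates from B, or emanates from C. -/
open Set

abbrev Pt : Type := ℝ × ℝ

/-- Signed area determinant of the triple `(p, q, r)`: positive iff `r` lies strictly to the
left of the directed line from `p` to `q`. -/
def det2 (p q r : Pt) : ℝ :=
  (q.1 - p.1) * (r.2 - p.2) - (q.2 - p.2) * (r.1 - p.1)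

/-- `P` is in general position: no three distinct points of `P` are collinear. -/
def GenPos (P : Set Pt) : Prop :=
  ∀ p ∈ P, ∀ q ∈ P, ∀ r ∈ P, p ≠ q → p ≠ r → q ≠ r →
    ¬ Collinear ℝ ({p, q, r} : Set Pt)

/-- The open segment (relative interior) of an unordered pair of points. -/
def segOpen : Sym2 Pt → Set Pt :=
  Sym2.lift ⟨fun p q => openSegment ℝ p q, fun p q => openSegment_symm ℝ p q⟩

/-- `F` is a crossing family in `P`: a finite set of segments, each joining two distinct
points of `P`, such that every two distinct segments have internally intersecting
open segments. -/
def IsCrossingFamily (P : Set Pt) (F : Finset (Sym2 Pt)) : Prop :=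
  (∀ s ∈ F, ¬ s.IsDiag ∧ ∀ x ∈ s, x ∈ P) ∧
  (∀ s ∈ F, ∀ t ∈ F, s ≠ t → (segOpen s ∩ segOpen t).Nonempty)

/-- A family of segments emanates from `X` if every segment has an endpoint in `X`. -/
def EmanatesFrom (F : Finset (Sym2 Pt)) (X : Set Pt) : Prop :=
  ∀ s ∈ F, ∃ x ∈ s, x ∈ X

/-- `A` and `B` can be separated by a line. -/
def LineSeparated (A B : Set Pt) : Prop :=
  ∃ a b c : ℝ, (a, b) ≠ ((0 : ℝ), (0 : ℝ)) ∧
    (∀ p ∈ A, a * p.1 + b * p.2 < c) ∧ (∀ p ∈ B, c < a * p.1 + b * p.2)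

/-- `A` separates `B` from `C`: `A` and `B ∪ C` are separable by a line, and every line
through two distinct points of `A` has all of `B` strictly on one side and all of `C`
strictly on the other side. -/
def SeparatesFrom (A B C : Set Pt) : Prop :=
  LineSeparated A (B ∪ C) ∧
  ∀ p ∈ A, ∀ q ∈ A, p ≠ q →
    ((∀ x ∈ B, 0 < det2 p q x) ∧ (∀ y ∈ C, det2 p q y < 0)) ∨
    ((∀ x ∈ B, det2 p q x < 0) ∧ (∀ y ∈ C, 0 < det2 p q y))

/-- Two distinct points of `A` that include `x` and `y` whenever those lie in `A`. -/
lemma exists_pair (A : Finset Pt) (hA : 2 ≤ A.card) (x y : Pt) :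
    ∃ p ∈ A, ∃ q ∈ A, p ≠ q ∧ (x ∈ A → x = p ∨ x = q) ∧ (y ∈ A → y = p ∨ y = q) := by
  have key : ∀ z ∈ A, ∃ w ∈ A, z ≠ w := by
    intro z _
    obtain ⟨w, hw, hne⟩ := Finset.exists_mem_ne (by omega : 1 < A.card) z
    exact ⟨w, hw, hne.symm⟩
  by_cases hx : x ∈ A
  · by_cases hy : y ∈ A
    · by_cases hxy : x = y
      · obtain ⟨w, hw, hne⟩ := key x hx
        exact ⟨x, hx, w, hw, hne, fun _ => Or.inl rfl, fun _ => Or.inl hxy.symm⟩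
      · exact ⟨x, hx, y, hy, hxy, fun _ => Or.inl rfl, fun _ => Or.inr rfl⟩
    · obtain ⟨w, hw, hne⟩ := key x hx
      exact ⟨x, hx, w, hw, hne, fun _ => Or.inl rfl, fun h => absurd h hy⟩
  · by_cases hy : y ∈ A
    · obtain ⟨w, hw, hne⟩ := key y hy
      exact ⟨y, hy, w, hw, hne, fun h => absurd h hx, fun _ => Or.inl rfl⟩
    · obtain ⟨p, hp, q, hq, hne⟩ := Finset.one_lt_card.mp (by omega : 1 < A.card)
      exact ⟨p, hp, q, hq, hne, fun h => absurd h hx, fun h => absurd h hy⟩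

/-- Two open segments weakly separated by an affine form, strictly at one end of each,
do not meet. -/
lemma no_cross (a b c : ℝ) (x u y v : Pt)
    (hx : a * x.1 + b * x.2 ≤ c) (hu : a * u.1 + b * u.2 < c)
    (hy : c ≤ a * y.1 + b * y.2) (hv : c < a * v.1 + b * v.2) :
    ¬ (segOpen s(x, u) ∩ segOpen s(y, v)).Nonempty := by
  rintro ⟨z, h1, h2⟩
  change z ∈ openSegment ℝ x u at h1
  change z ∈ openSegment ℝ y v at h2
  obtain ⟨α, β, hα, hβ, hs, rfl⟩ := h1
  obtain ⟨γ, δ, hγ, hδ, hs', he⟩ := h2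
  have e1 := congrArg Prod.fst he
  have e2 := congrArg Prod.snd he
  simp only [Prod.fst_add, Prod.snd_add, Prod.smul_fst, Prod.smul_snd, smul_eq_mul] at e1 e2
  have i1 := mul_le_mul_of_nonneg_left hx hα.le
  have i2 := mul_lt_mul_of_pos_left hu hβ
  have i3 := mul_le_mul_of_nonneg_left hy hγ.le
  have i4 := mul_lt_mul_of_pos_left hv hδ
  have s1 : α * c + β * c = c := by rw [← add_mul, hs, one_mul]
  have s2 : γ * c + δ * c = c := by rw [← add_mul, hs', one_mul]
  have e3 := congrArg (fun t => a * t) e1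
  have e4 := congrArg (fun t => b * t) e2
  nlinarith

/-- A segment with both ends in `A ∪ X` but not both in `A` has an end in `X`. -/
lemma exists_form {A X : Finset Pt} (s : Sym2 Pt) (h : ∀ x ∈ s, x ∈ A ∨ x ∈ X)
    (hn : ∃ x ∈ s, x ∉ A) : ∃ x u, s = s(x, u) ∧ (x ∈ A ∨ x ∈ X) ∧ u ∈ X := by
  obtain ⟨u, hu, huA⟩ := hn
  obtain ⟨x, rfl⟩ := Sym2.mem_iff_exists.mp hu
  exact ⟨x, u, Sym2.eq_swap, h x (Sym2.mem_mk_right _ _), (h u hu).resolve_left huA⟩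

theorem crossing_family_emanates_of_separates
    (A B C : Finset Pt)
    (hAB : Disjoint A B) (hAC : Disjoint A C) (hBC : Disjoint B C)
    (hgen : GenPos (↑A ∪ ↑B ∪ ↑C))
    (hA : 2 ≤ A.card)
    (hsep : SeparatesFrom ↑A ↑B ↑C)
    (F : Finset (Sym2 Pt))
    (hF : IsCrossingFamily (↑A ∪ ↑B ∪ ↑C) F) :
    EmanatesFrom F ↑A ∨ EmanatesFrom F ↑B ∨ EmanatesFrom F ↑C := by
  by_contra hcon
  simp only [EmanatesFrom, not_or, not_forall, not_exists, not_and, Finset.mem_coe] at hcon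
  obtain ⟨⟨r, hr, hrA⟩, ⟨s, hs, hsB⟩, ⟨t, ht, htC⟩⟩ := hcon
  obtain ⟨hF1, hF2⟩ := hF
  obtain ⟨⟨a, b, c, -, hlA, hlBC⟩, hdet⟩ := hsep
  have hP : ∀ s ∈ F, ∀ x ∈ s, (x ∈ A ∨ x ∈ B) ∨ x ∈ C := by
    intro s hs x hx
    simpa using (hF1 s hs).2 x hx
  -- no segment of the family lies inside `A`
  have hnoA : ∀ s ∈ F, ∃ x ∈ s, x ∉ A := by
    intro s hs
    by_contra hall
    push Not at hall
    have hne : s ≠ r := by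
      rintro rfl
      induction s with
      | _ x u => exact hrA x (Sym2.mem_mk_left _ _) (hall x (Sym2.mem_mk_left _ _))
    have hbc : ∀ x ∈ r, c < a * x.1 + b * x.2 := by
      intro x hx
      apply hlBC
      have h1 := hP r hr x hx
      have h2 := hrA x hx
      simp only [Set.mem_union, Finset.mem_coe]
      tauto
    have hcr := hF2 s hs r hr hne
    induction s with
    | _ x u =>
      induction r with
      | _ y v =>
        exact no_cross a b c x u y v
          (hlA x (hall x (Sym2.mem_mk_left _ _))).le (hlA u (hall u (Sym2.mem_mk_right _ _)))
          (hbc y (Sym2.mem_mk_left _ _)).le (hbc v (Sym2.mem_mk_right _ _)) hcr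
  obtain ⟨x, u, rfl, hx, hu⟩ := exists_form (A := A) (X := C) s
    (fun x hx => by have h1 := hP s hs x hx; have h2 := hsB x hx; tauto) (hnoA s hs)
  obtain ⟨y, v, rfl, hy, hv⟩ := exists_form (A := A) (X := B) t
    (fun x hx => by have h1 := hP t ht x hx; have h2 := htC x hx; tauto) (hnoA t ht)
  have hne : s(x, u) ≠ s(y, v) := by
    intro h
    exact hsB v (h ▸ Sym2.mem_mk_right _ _) hv
  have hcr := hF2 _ hs _ ht hne
  obtain ⟨p, hp, q, hq, hpq, hxp, hyp⟩ := exists_pair A hA x y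
  have zero : ∀ z, z = p ∨ z = q → det2 p q z = 0 := by
    rintro z (rfl | rfl) <;> simp only [det2] <;> ring
  rcases hdet p hp q hq hpq with ⟨hB, hC⟩ | ⟨hB, hC⟩
  · have h1 : det2 p q x ≤ 0 := hx.elim (fun h => (zero x (hxp h)).le) (fun h => (hC x h).le)
    have h2 : 0 ≤ det2 p q y := hy.elim (fun h => (zero y (hyp h)).ge) (fun h => (hB y h).le)
    have h3 := hC u hu
    have h4 := hB v hv
    simp only [det2] at h1 h2 h3 h4
    refine no_cross (-(q.2 - p.2)) (q.1 - p.1) ((q.1 - p.1) * p.2 - (q.2 - p.2) * p.1)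
      x u y v ?_ ?_ ?_ ?_ hcr <;> linarith
  · have h1 : 0 ≤ det2 p q x := hx.elim (fun h => (zero x (hxp h)).ge) (fun h => (hC x h).le)
    have h2 : det2 p q y ≤ 0 := hy.elim (fun h => (zero y (hyp h)).le) (fun h => (hB y h).le)
    have h3 := hC u hu
    have h4 := hB v hv
    simp only [det2] at h1 h2 h3 h4
    refine no_cross (q.2 - p.2) (-(q.1 - p.1)) (-((q.1 - p.1) * p.2 - (q.2 - p.2) * p.1))
      x u y v ?_ ?_ ?_ ?_ hcr <;> linarith
end

section
/- Let A, B, C, D be pairwise disjoint finite point sets in the plane such that A ∪ B ∪ C ∪ D is in general position, each of A, B, C contains at least two points, the triple {A, B, C} satisfies the full separating property, and D lies in the core of {A, B, C}. Then every crossing family in A ∪ B ∪ C ∪ D emanates from one of A, B, C, or D. -/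
open Set

/-- The cross product of two plane vectors. -/
def cross2 (u v : Pt) : ℝ := u.1 * v.2 - u.2 * v.1

/-- The triple of pairwise disjoint sets `A, B, C` satisfies the full separating property:
each of them separates the other two from each other. -/
def FullSep (A B C : Set Pt) : Prop :=
  SeparatesFrom A C B ∧ SeparatesFrom B A C ∧ SeparatesFrom C B A

/-- `D` lies in the core of `{A, B, C}`: for every triple of pairwise non-parallel lines,
the first through two distinct points of `A`, the second through two distinct points of `B`,
and the third through two distinct points of `C`, every point of `D` lies in the open
triangle whose vertices are the three pairwise intersection points of the lines. -/
def InCore (A B C D : Set Pt) : Prop :=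
  ∀ p₁ ∈ A, ∀ q₁ ∈ A, p₁ ≠ q₁ →
  ∀ p₂ ∈ B, ∀ q₂ ∈ B, p₂ ≠ q₂ →
  ∀ p₃ ∈ C, ∀ q₃ ∈ C, p₃ ≠ q₃ →
  cross2 (q₁ - p₁) (q₂ - p₂) ≠ 0 →
  cross2 (q₁ - p₁) (q₃ - p₃) ≠ 0 →
  cross2 (q₂ - p₂) (q₃ - p₃) ≠ 0 →
  ∀ v₁₂ v₁₃ v₂₃ : Pt,
    det2 p₁ q₁ v₁₂ = 0 → det2 p₂ q₂ v₁₂ = 0 →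
    det2 p₁ q₁ v₁₃ = 0 → det2 p₃ q₃ v₁₃ = 0 →
    det2 p₂ q₂ v₂₃ = 0 → det2 p₃ q₃ v₂₃ = 0 →
    D ⊆ interior (convexHull ℝ ({v₁₂, v₁₃, v₂₃} : Set Pt))

/-- Affine functions on the plane. -/
def AffF (f : Pt → ℝ) : Prop := ∃ u v w : ℝ, ∀ x : Pt, f x = u * x.1 + v * x.2 + w

lemma affF_det2 (k : ℝ) (p q : Pt) : AffF (fun x => k * det2 p q x) :=
  ⟨-k * (q.2 - p.2), k * (q.1 - p.1), k * (-(q.1 - p.1) * p.2 + (q.2 - p.2) * p.1),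
    fun x => by simp only [det2]; ring⟩

lemma AffF.combo {f : Pt → ℝ} (hf : AffF f) {a b : ℝ} (hab : a + b = 1) (p q : Pt) :
    f (a • p + b • q) = a * f p + b * f q := by
  obtain ⟨u, v, w, h⟩ := hf
  simp only [h, Prod.fst_add, Prod.snd_add, Prod.smul_fst, Prod.smul_snd, smul_eq_mul]
  have : b = 1 - a := by linarith
  subst this
  ring

lemma AffF.combo3 {f : Pt → ℝ} (hf : AffF f) {a b c : ℝ} (hab : a + b + c = 1) (p q r : Pt) :
    f (a • p + b • q + c • r) = a * f p + b * f q + c * f r := by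
  obtain ⟨u, v, w, h⟩ := hf
  simp only [h, Prod.fst_add, Prod.snd_add, Prod.smul_fst, Prod.smul_snd, smul_eq_mul]
  have : c = 1 - a - b := by linarith
  subst this
  ring

lemma AffF.neg {f : Pt → ℝ} (hf : AffF f) : AffF (fun x => - f x) := by
  obtain ⟨u, v, w, h⟩ := hf
  exact ⟨-u, -v, -w, fun x => by simp only [h]; ring⟩

/-- Pairwise crossing. -/
def PairCross (F : Finset (Sym2 Pt)) : Prop :=
  ∀ s ∈ F, ∀ t ∈ F, s ≠ t → (segOpen s ∩ segOpen t).Nonempty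

lemma noCross {F : Finset (Sym2 Pt)} (hF : PairCross F) {f : Pt → ℝ} (hf : AffF f)
    {p q r s : Pt} (h1 : s(p, q) ∈ F) (h2 : s(r, s) ∈ F)
    (hp : f p ≤ 0) (hq : f q ≤ 0) (hr : 0 ≤ f r) (hs : 0 ≤ f s)
    (hst : f p < 0 ∨ f q < 0 ∨ 0 < f r ∨ 0 < f s) : False := by
  by_cases he : s(p, q) = s(r, s)
  · rw [Sym2.eq_iff] at he
    rcases he with ⟨rfl, rfl⟩ | ⟨rfl, rfl⟩
    · rcases hst with h | h | h | h <;> linarith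
    · rcases hst with h | h | h | h <;> linarith
  · obtain ⟨x, hx1, hx2⟩ := hF _ h1 _ h2 he
    change x ∈ openSegment ℝ p q at hx1
    change x ∈ openSegment ℝ r s at hx2
    obtain ⟨a, b, ha, hb, hab, rfl⟩ := hx1
    obtain ⟨c, d, hc, hd, hcd, hx⟩ := hx2
    have e := congrArg f hx
    rw [hf.combo hab, hf.combo hcd] at e
    have t1 := mul_nonneg ha.le (neg_nonneg.2 hp)
    have t2 := mul_nonneg hb.le (neg_nonneg.2 hq)
    have t3 := mul_nonneg hc.le hr
    have t4 := mul_nonneg hd.le hs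
    rcases hst with h | h | h | h
    · have := mul_pos ha (neg_pos.2 h); linarith
    · have := mul_pos hb (neg_pos.2 h); linarith
    · have := mul_pos hc h; linarith
    · have := mul_pos hd h; linarith

lemma noShare {F : Finset (Sym2 Pt)} (hF : PairCross F)
    {p q r : Pt} (h1 : s(p, q) ∈ F) (h2 : s(p, r) ∈ F) (h : det2 p q r ≠ 0) : False := by
  have he : s(p, q) ≠ s(p, r) := by
    intro he
    rw [Sym2.congr_right] at he
    subst he
    apply h
    simp only [det2]; ring
  obtain ⟨x, hx1, hx2⟩ := hF _ h1 _ h2 he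
  change x ∈ openSegment ℝ p q at hx1
  change x ∈ openSegment ℝ p r at hx2
  obtain ⟨a, b, ha, hb, hab, rfl⟩ := hx1
  obtain ⟨c, d, hc, hd, hcd, hx⟩ := hx2
  have hf : AffF (fun x => 1 * det2 p q x) := affF_det2 1 p q
  have e := congrArg (fun x => 1 * det2 p q x) hx
  have e1 := hf.combo hab p q
  have e2 := hf.combo hcd p r
  beta_reduce at e e1 e2
  rw [e1, e2] at e
  have z1 : det2 p q p = 0 := by simp only [det2]; ring
  have z2 : det2 p q q = 0 := by simp only [det2]; ring
  rw [z1, z2] at e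
  have : d * det2 p q r = 0 := by linarith
  rcases mul_eq_zero.1 this with h' | h'
  · exact hd.ne' h'
  · exact h h'

/-- Chirality pattern. -/
def Chir (f₁ f₂ f₃ : Pt → ℝ) (A B C : Set Pt) : Prop :=
  (∀ b ∈ B, 0 < f₁ b) ∧ (∀ c ∈ C, f₁ c < 0) ∧ (∀ c ∈ C, 0 < f₂ c) ∧ (∀ a ∈ A, f₂ a < 0) ∧
  (∀ a ∈ A, 0 < f₃ a) ∧ (∀ b ∈ B, f₃ b < 0)

/-- The core property in terms of affine functions. -/
def KeyProp (A B C D : Set Pt) : Prop :=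
  ∀ a₁ ∈ A, ∀ a₂ ∈ A, a₁ ≠ a₂ → ∀ b₁ ∈ B, ∀ b₂ ∈ B, b₁ ≠ b₂ →
  ∀ c₁ ∈ C, ∀ c₂ ∈ C, c₁ ≠ c₂ → D.Nonempty →
  ∃ f₁ f₂ f₃ : Pt → ℝ, AffF f₁ ∧ AffF f₂ ∧ AffF f₃ ∧
    (f₁ a₁ = 0 ∧ f₁ a₂ = 0) ∧ (f₂ b₁ = 0 ∧ f₂ b₂ = 0) ∧ (f₃ c₁ = 0 ∧ f₃ c₂ = 0) ∧
    (∀ d ∈ D, 0 < f₁ d ∧ 0 < f₂ d ∧ 0 < f₃ d) ∧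
    (Chir f₁ f₂ f₃ A B C ∨ Chir f₁ f₃ f₂ A C B)

lemma Chir.cyc {f₁ f₂ f₃ : Pt → ℝ} {A B C : Set Pt} (h : Chir f₁ f₂ f₃ A B C) :
    Chir f₂ f₃ f₁ B C A :=
  ⟨h.2.2.1, h.2.2.2.1, h.2.2.2.2.1, h.2.2.2.2.2, h.1, h.2.1⟩

/-- The separating property in terms of affine functions. -/
def SepAff (A B C : Set Pt) : Prop :=
  (∃ f, AffF f ∧ (∀ a ∈ A, f a < 0) ∧ (∀ b ∈ B, 0 < f b) ∧ (∀ c ∈ C, 0 < f c)) ∧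
  ∀ a₁ ∈ A, ∀ a₂ ∈ A, a₁ ≠ a₂ → ∃ f, AffF f ∧ f a₁ = 0 ∧ f a₂ = 0 ∧
    (∀ b ∈ B, 0 < f b) ∧ (∀ c ∈ C, f c < 0)

lemma SepAff.swap {A B C : Set Pt} (h : SepAff A B C) : SepAff A C B := by
  obtain ⟨⟨f, h1, h2, h3, h4⟩, h5⟩ := h
  refine ⟨⟨f, h1, h2, h4, h3⟩, fun a₁ ha₁ a₂ ha₂ hne => ?_⟩
  obtain ⟨g, g1, g2, g3, g4, g5⟩ := h5 a₁ ha₁ a₂ ha₂ hne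
  refine ⟨fun x => - g x, g1.neg, by simp [g2], by simp [g3], fun c hc => ?_, fun b hb => ?_⟩
  · have := g5 c hc; simpa using this
  · have := g4 b hb; simpa using this

/-- Two points. -/
def Two (A : Set Pt) : Prop := A.Nonempty ∧ ∀ a ∈ A, ∃ a' ∈ A, a ≠ a'

/-- No collinear transversal. -/
def Gen3 (A B C : Set Pt) : Prop := ∀ a ∈ A, ∀ b ∈ B, ∀ c ∈ C, det2 a b c ≠ 0

lemma Gen3.cyc {A B C : Set Pt} (h : Gen3 A B C) : Gen3 B C A := by
  intro b hb c hc a ha e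
  apply h a ha b hb c hc
  rw [← e]; simp only [det2]; ring

lemma Gen3.swap {A B C : Set Pt} (h : Gen3 A B C) : Gen3 B A C := by
  intro b hb a ha c hc e
  apply h a ha b hb c hc
  have : det2 a b c = - det2 b a c := by simp only [det2]; ring
  rw [this, e, neg_zero]

structure Cfg (A B C D : Set Pt) : Prop where
  twoA : Two A
  twoB : Two B
  twoC : Two C
  sA : SepAff A B C
  sB : SepAff B C A
  sC : SepAff C A B
  g1 : Gen3 A B C
  g2 : Gen3 A B D
  g3 : Gen3 B C D
  g4 : Gen3 C A D
  key : KeyProp A B C D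

lemma Cfg.cyc {A B C D : Set Pt} (h : Cfg A B C D) : Cfg B C A D where
  twoA := h.twoB
  twoB := h.twoC
  twoC := h.twoA
  sA := h.sB
  sB := h.sC
  sC := h.sA
  g1 := h.g1.cyc
  g2 := h.g3
  g3 := h.g4
  g4 := h.g2
  key := by
    intro b₁ hb₁ b₂ hb₂ hb c₁ hc₁ c₂ hc₂ hc a₁ ha₁ a₂ ha₂ ha hD
    obtain ⟨f₁, f₂, f₃, k1, k2, k3, z1, z2, z3, hd, hch⟩ :=
      h.key a₁ ha₁ a₂ ha₂ ha b₁ hb₁ b₂ hb₂ hb c₁ hc₁ c₂ hc₂ hc hD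
    refine ⟨f₂, f₃, f₁, k2, k3, k1, z2, z3, z1,
      fun d h => ⟨(hd d h).2.1, (hd d h).2.2, (hd d h).1⟩, ?_⟩
    rcases hch with h | h
    · exact Or.inl h.cyc
    · exact Or.inr h.cyc.cyc

lemma Cfg.swap {A B C D : Set Pt} (h : Cfg A B C D) : Cfg A C B D where
  twoA := h.twoA
  twoB := h.twoC
  twoC := h.twoB
  sA := h.sA.swap
  sB := h.sC.swap
  sC := h.sB.swap
  g1 := h.g1.swap.cyc
  g2 := h.g4.swap
  g3 := h.g3.swap
  g4 := h.g2.swap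
  key := by
    intro a₁ ha₁ a₂ ha₂ ha c₁ hc₁ c₂ hc₂ hc b₁ hb₁ b₂ hb₂ hb hD
    obtain ⟨f₁, f₂, f₃, k1, k2, k3, z1, z2, z3, hd, hch⟩ :=
      h.key a₁ ha₁ a₂ ha₂ ha b₁ hb₁ b₂ hb₂ hb c₁ hc₁ c₂ hc₂ hc hD
    exact ⟨f₁, f₃, f₂, k1, k3, k2, z1, z3, z2,
      fun d h => ⟨(hd d h).1, (hd d h).2.2, (hd d h).2.1⟩, hch.symm⟩

/-- `F` has a segment of type `XY`. -/
def Has (F : Finset (Sym2 Pt)) (X Y : Set Pt) : Prop :=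
  ∃ x ∈ X, ∃ y ∈ Y, x ≠ y ∧ s(x, y) ∈ F

lemma Has.symm {F : Finset (Sym2 Pt)} {X Y : Set Pt} (h : Has F X Y) : Has F Y X := by
  obtain ⟨x, hx, y, hy, hne, hm⟩ := h
  exact ⟨y, hy, x, hx, hne.symm, by rwa [Sym2.eq_swap]⟩

section
variable {A B C D : Set Pt} {F : Finset (Sym2 Pt)}

lemma Cfg.AA_BB (h : Cfg A B C D) (hF : PairCross F) (h1 : Has F A A) (h2 : Has F B B) :
    False := by
  obtain ⟨a, ha, a', ha', hne, hm⟩ := h1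
  obtain ⟨b, hb, b', hb', -, hm'⟩ := h2
  obtain ⟨f, hf, z, z', hB, hC⟩ := h.sA.2 a ha a' ha' hne
  exact noCross hF hf hm hm' z.le z'.le (hB b hb).le (hB b' hb').le (by simp [hB b hb])

lemma Cfg.AA_BC (h : Cfg A B C D) (hF : PairCross F) (h1 : Has F A A) (h2 : Has F B C) :
    False := by
  obtain ⟨a, ha, a', ha', hne, hm⟩ := h1
  obtain ⟨b, hb, c, hc, -, hm'⟩ := h2
  obtain ⟨f, hf, hA, hB, hC⟩ := h.sA.1
  exact noCross hF hf hm hm' (hA a ha).le (hA a' ha').le (hB b hb).le (hC c hc).le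
    (by simp [hB b hb])

lemma Cfg.AA_BD (h : Cfg A B C D) (hF : PairCross F) (h1 : Has F A A) (h2 : Has F B D) :
    False := by
  obtain ⟨a, ha, a', ha', hne, hm⟩ := h1
  obtain ⟨b, hb, d, hd, -, hm'⟩ := h2
  obtain ⟨b', hb', hbb⟩ := h.twoB.2 b hb
  obtain ⟨c, hc⟩ := h.twoC.1
  obtain ⟨c', hc', hcc⟩ := h.twoC.2 c hc
  obtain ⟨f₁, f₂, f₃, k1, k2, k3, z1, z2, z3, hD, hch⟩ :=
    h.key a ha a' ha' hne b hb b' hb' hbb c hc c' hc' hcc ⟨d, hd⟩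
  obtain ⟨d1, d2, d3⟩ := hD d hd
  rcases hch with ⟨e1, e2, e3, e4, e5, e6⟩ | ⟨e1, e2, e3, e4, e5, e6⟩
  · exact noCross hF k1 hm hm' z1.1.le z1.2.le (e1 b hb).le d1.le (by simp [d1])
  · exact noCross hF k3 hm hm' (e4 a ha).le (e4 a' ha').le (e3 b hb).le d3.le (by simp [d3])

lemma Cfg.AA_DD (h : Cfg A B C D) (hF : PairCross F) (h1 : Has F A A) (h2 : Has F D D) :
    False := by
  obtain ⟨a, ha, a', ha', hne, hm⟩ := h1
  obtain ⟨d, hd, d', hd', -, hm'⟩ := h2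
  obtain ⟨b, hb⟩ := h.twoB.1
  obtain ⟨b', hb', hbb⟩ := h.twoB.2 b hb
  obtain ⟨c, hc⟩ := h.twoC.1
  obtain ⟨c', hc', hcc⟩ := h.twoC.2 c hc
  obtain ⟨f₁, f₂, f₃, k1, k2, k3, z1, z2, z3, hD, hch⟩ :=
    h.key a ha a' ha' hne b hb b' hb' hbb c hc c' hc' hcc ⟨d, hd⟩
  exact noCross hF k1 hm hm' z1.1.le z1.2.le (hD d hd).1.le (hD d' hd').1.le
    (by simp [(hD d hd).1])

lemma Cfg.AB_CD (h : Cfg A B C D) (hF : PairCross F) (h1 : Has F A B) (h2 : Has F (C ∪ D) D) :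
    False := by
  obtain ⟨a, ha, b, hb, -, hm⟩ := h1
  obtain ⟨x, hx, d, hd, -, hm'⟩ := h2
  obtain ⟨a', ha', haa⟩ := h.twoA.2 a ha
  obtain ⟨b', hb', hbb⟩ := h.twoB.2 b hb
  obtain ⟨c, hc⟩ := h.twoC.1
  obtain ⟨c', hc', hcc⟩ := h.twoC.2 c hc
  obtain ⟨f₁, f₂, f₃, k1, k2, k3, z1, z2, z3, hD, hch⟩ :=
    h.key a ha a' ha' haa b hb b' hb' hbb c hc c' hc' hcc ⟨d, hd⟩
  obtain ⟨d1, d2, d3⟩ := hD d hd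
  rcases hch with ⟨e1, e2, e3, e4, e5, e6⟩ | ⟨e1, e2, e3, e4, e5, e6⟩
  · have hx' : 0 < f₂ x := by
      rcases hx with hx | hx
      · exact e3 x hx
      · exact (hD x hx).2.1
    exact noCross hF k2 hm hm' (e4 a ha).le z2.1.le hx'.le d2.le (by simp [d2])
  · have hx' : 0 < f₁ x := by
      rcases hx with hx | hx
      · exact e1 x hx
      · exact (hD x hx).1
    exact noCross hF k1 hm hm' z1.1.le (e2 b hb).le hx'.le d1.le (by simp [d1])

lemma Cfg.AB_AC (h : Cfg A B C D) (hF : PairCross F) (h1 : Has F A B) (h2 : Has F A C) :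
    False := by
  obtain ⟨a, ha, b, hb, -, hm⟩ := h1
  obtain ⟨a', ha', c, hc, -, hm'⟩ := h2
  by_cases haa : a = a'
  · subst haa
    exact noShare hF hm hm' (h.g1 a ha b hb c hc)
  · obtain ⟨f, hf, z, z', hB, hC⟩ := h.sA.2 a ha a' ha' haa
    exact noCross hF hf hm' hm z'.le (hC c hc).le z.ge (hB b hb).le (by simp [hB b hb])

lemma Cfg.ABD (h : Cfg A B C D) (hF : PairCross F) (h1 : Has F A B) (h2 : Has F A D)
    (h3 : Has F B D) : False := by
  obtain ⟨a, ha, b, hb, -, hm⟩ := h1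
  obtain ⟨a', ha', d, hd, -, hm'⟩ := h2
  obtain ⟨b', hb', d', hd', -, hm''⟩ := h3
  by_cases haa : a = a'
  · subst haa
    exact noShare hF hm hm' (h.g2 a ha b hb d hd)
  by_cases hbb : b = b'
  · subst hbb
    rw [Sym2.eq_swap] at hm
    exact noShare hF hm hm'' (h.g2.swap b hb a ha d' hd')
  obtain ⟨c, hc⟩ := h.twoC.1
  obtain ⟨c', hc', hcc⟩ := h.twoC.2 c hc
  obtain ⟨f₁, f₂, f₃, k1, k2, k3, z1, z2, z3, hD, hch⟩ :=
    h.key a ha a' ha' haa b hb b' hb' hbb c hc c' hc' hcc ⟨d, hd⟩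
  rcases hch with ⟨e1, e2, e3, e4, e5, e6⟩ | ⟨e1, e2, e3, e4, e5, e6⟩
  · exact noCross hF k2 hm hm'' (e4 a ha).le z2.1.le z2.2.ge (hD d' hd').2.1.le
      (by simp [(hD d' hd').2.1])
  · exact noCross hF k1 hm hm' z1.1.le (e2 b hb).le z1.2.ge (hD d hd).1.le
      (by simp [(hD d hd).1])

lemma Has.mono_left {X X' Y : Set Pt} (hX : X ⊆ X') (h : Has F X Y) : Has F X' Y := by
  obtain ⟨x, hx, r⟩ := h
  exact ⟨x, hX hx, r⟩

lemma not_emanates (hF : IsCrossingFamily (A ∪ B ∪ C ∪ D) F) (hn : ¬ EmanatesFrom F A) :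
    Has F B B ∨ Has F C C ∨ Has F D D ∨ Has F B C ∨ Has F C D ∨ Has F B D := by
  simp only [EmanatesFrom, not_forall, not_exists, not_and] at hn
  obtain ⟨s, hs, hn⟩ := hn
  obtain ⟨h1, h2⟩ := hF.1 s hs
  induction s using Sym2.ind with
  | _ x y =>
    have hx := h2 x (Sym2.mem_mk_left x y)
    have hy := h2 y (Sym2.mem_mk_right x y)
    have nx := hn x (Sym2.mem_mk_left x y)
    have ny := hn y (Sym2.mem_mk_right x y)
    have hne : x ≠ y := by simpa using h1
    have key : ∀ X Y : Set Pt, x ∈ X → y ∈ Y → Has F X Y :=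
      fun X Y hx hy => ⟨x, hx, y, hy, hne, hs⟩
    have key' : ∀ X Y : Set Pt, x ∈ Y → y ∈ X → Has F X Y :=
      fun X Y hx hy => (key Y X hx hy).symm
    rcases hx with ((hx | hx) | hx) | hx <;> rcases hy with ((hy | hy) | hy) | hy <;>
      first
      | exact absurd hx nx
      | exact absurd hy ny
      | simp [key B B hx hy]
      | simp [key C C hx hy]
      | simp [key D D hx hy]
      | simp [key B C hx hy]
      | simp [key C D hx hy]
      | simp [key B D hx hy]
      | simp [key' B C hx hy]
      | simp [key' C D hx hy]
      | simp [key' B D hx hy]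

lemma union_aux1 (A B C D : Set Pt) : C ∪ A ∪ B ∪ D = A ∪ B ∪ C ∪ D := by
  rw [Set.union_assoc C A B, Set.union_comm C]

lemma union_aux2 (A B C D : Set Pt) : D ∪ A ∪ B ∪ C = A ∪ B ∪ C ∪ D := by
  rw [Set.union_assoc D A B, Set.union_assoc D, Set.union_comm D]

lemma Cfg.main (h : Cfg A B C D) (hF : IsCrossingFamily (A ∪ B ∪ C ∪ D) F) :
    EmanatesFrom F A ∨ EmanatesFrom F B ∨ EmanatesFrom F C ∨ EmanatesFrom F D := by
  have hP : PairCross F := hF.2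
  by_contra hcon
  simp only [not_or] at hcon
  obtain ⟨nA, nB, nC, nD⟩ := hcon
  have tA := not_emanates hF nA
  have tB := not_emanates (A := B) (B := A) (C := C) (D := D)
    (by rwa [show B ∪ A ∪ C ∪ D = A ∪ B ∪ C ∪ D by rw [Set.union_comm B A]]) nB
  have tC := not_emanates (A := C) (B := A) (C := B) (D := D)
    (by rwa [show C ∪ A ∪ B ∪ D = A ∪ B ∪ C ∪ D from union_aux1 A B C D]) nC
  have tD := not_emanates (A := D) (B := A) (C := B) (D := C)
    (by rwa [show D ∪ A ∪ B ∪ C = A ∪ B ∪ C ∪ D from union_aux2 A B C D]) nD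
  have sBA : Has F B A ↔ Has F A B := ⟨Has.symm, Has.symm⟩
  have sCA : Has F C A ↔ Has F A C := ⟨Has.symm, Has.symm⟩
  have sCB : Has F C B ↔ Has F B C := ⟨Has.symm, Has.symm⟩
  have c1 := h
  have c2 := h.cyc
  have c3 := h.cyc.cyc
  have aux : ∀ {A B C : Set Pt}, Cfg A B C D → Has F A A → ¬ Has F B B ∧ ¬ Has F C C ∧
      ¬ Has F B C ∧ ¬ Has F B D ∧ ¬ Has F C D ∧ ¬ Has F D D := fun c h1 =>
    ⟨c.AA_BB hP h1, c.swap.AA_BB hP h1, c.AA_BC hP h1, c.AA_BD hP h1, c.swap.AA_BD hP h1,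
      c.AA_DD hP h1⟩
  have aux2 : ∀ {A B C : Set Pt}, Cfg A B C D → Has F A B → ¬ Has F C D ∧ ¬ Has F D D ∧
      ¬ Has F A C ∧ ¬ (Has F A D ∧ Has F B D) := fun c h1 =>
    ⟨fun h2 => c.AB_CD hP h1 (h2.mono_left Set.subset_union_left),
      fun h2 => c.AB_CD hP h1 (h2.mono_left Set.subset_union_right),
      c.AB_AC hP h1, fun h2 => c.ABD hP h1 h2.1 h2.2⟩
  have a1 := aux c1
  have a2 := aux c2
  have a3 := aux c3
  have b1 := aux2 c1
  have b2 := aux2 c2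
  have b3 := aux2 c3
  simp only [sBA, sCA, sCB] at *
  clear aux aux2 sBA sCA sCB c1 c2 c3 h hF hP nA nB nC nD
  generalize Has F A A = AA at *
  generalize Has F B B = BB at *
  generalize Has F C C = CC at *
  generalize Has F D D = DD at *
  generalize Has F A B = AB at *
  generalize Has F A C = AC at *
  generalize Has F B C = BC at *
  generalize Has F A D = AD at *
  generalize Has F B D = BD at *
  generalize Has F C D = CD at *
  grind

end

/-! ### From the frozen hypotheses to `Cfg` -/

lemma SepAff.of_separatesFrom {A B C : Set Pt} (h : SeparatesFrom A B C) : SepAff A B C := by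
  obtain ⟨⟨a, b, c, -, h1, h2⟩, h3⟩ := h
  refine ⟨⟨fun x => a * x.1 + b * x.2 - c, ⟨a, b, -c, fun x => by ring⟩, fun p hp => ?_,
    fun p hp => ?_, fun p hp => ?_⟩, fun p hp q hq hne => ?_⟩
  · have := h1 p hp; simp only; linarith
  · have := h2 p (Or.inl hp); simp only; linarith
  · have := h2 p (Or.inr hp); simp only; linarith
  · have z1 : det2 p q p = 0 := by simp only [det2]; ring
    have z2 : det2 p q q = 0 := by simp only [det2]; ring
    rcases h3 p hp q hq hne with ⟨e1, e2⟩ | ⟨e1, e2⟩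
    · refine ⟨_, affF_det2 1 p q, by simp [z1], by simp [z2], fun x hx => ?_, fun x hx => ?_⟩
      · simpa using e1 x hx
      · simpa using e2 x hx
    · refine ⟨_, affF_det2 (-1) p q, by simp [z1], by simp [z2], fun x hx => ?_, fun x hx => ?_⟩
      · simpa using e1 x hx
      · simpa using e2 x hx

lemma sep_mul {A B C : Set Pt} (h : SeparatesFrom A B C) {p q : Pt} (hp : p ∈ A) (hq : q ∈ A)
    (hne : p ≠ q) {b c : Pt} (hb : b ∈ B) (hc : c ∈ C) : det2 p q b * det2 p q c < 0 := by
  rcases h.2 p hp q hq hne with ⟨e1, e2⟩ | ⟨e1, e2⟩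
  · exact mul_neg_of_pos_of_neg (e1 b hb) (e2 c hc)
  · exact mul_neg_of_neg_of_pos (e1 b hb) (e2 c hc)

lemma cross_ne {p₁ q₁ p₂ q₂ c : Pt} (h1 : det2 p₁ q₁ p₂ * det2 p₁ q₁ c < 0)
    (h2 : det2 p₂ q₂ p₁ * det2 p₂ q₂ c < 0) : cross2 (q₁ - p₁) (q₂ - p₂) ≠ 0 := by
  intro h0
  simp only [cross2, Prod.fst_sub, Prod.snd_sub] at h0
  set N := (q₁.1 - p₁.1) ^ 2 + (q₁.2 - p₁.2) ^ 2 with hN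
  set m := (q₁.1 - p₁.1) * (q₂.1 - p₂.1) + (q₁.2 - p₁.2) * (q₂.2 - p₂.2) with hm
  have hN0 : 0 < N := by
    have hne : N ≠ 0 := by
      intro hz
      have x1 : q₁.1 - p₁.1 = 0 := by nlinarith [sq_nonneg (q₁.1 - p₁.1), sq_nonneg (q₁.2 - p₁.2)]
      have x2 : q₁.2 - p₁.2 = 0 := by nlinarith [sq_nonneg (q₁.1 - p₁.1), sq_nonneg (q₁.2 - p₁.2)]
      simp [det2, x1, x2] at h1
    exact lt_of_le_of_ne (by positivity) hne.symm
  have key : ∀ x : Pt, N * det2 p₂ q₂ x = m * (det2 p₁ q₁ x - det2 p₁ q₁ p₂) := by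
    intro x
    simp only [hN, hm, det2]
    linear_combination (-((x.1 - p₂.1) * (q₁.1 - p₁.1)) - (x.2 - p₂.2) * (q₁.2 - p₁.2)) * h0
  have k1 := key p₁
  have k2 := key c
  have z : det2 p₁ q₁ p₁ = 0 := by simp only [det2]; ring
  rw [z] at k1
  have e : N ^ 2 * (det2 p₂ q₂ p₁ * det2 p₂ q₂ c)
      = m ^ 2 * (det2 p₁ q₁ p₂ ^ 2 - det2 p₁ q₁ p₂ * det2 p₁ q₁ c) := by
    calc _ = (N * det2 p₂ q₂ p₁) * (N * det2 p₂ q₂ c) := by ring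
      _ = _ := by rw [k1, k2]; ring
  have l : N ^ 2 * (det2 p₂ q₂ p₁ * det2 p₂ q₂ c) < 0 :=
    mul_neg_of_pos_of_neg (by positivity) h2
  have r : 0 ≤ m ^ 2 * (det2 p₁ q₁ p₂ ^ 2 - det2 p₁ q₁ p₂ * det2 p₁ q₁ c) :=
    mul_nonneg (by positivity) (by nlinarith [sq_nonneg (det2 p₁ q₁ p₂)])
  linarith

lemma exists_inter {p q p' q' : Pt} (h : cross2 (q - p) (q' - p') ≠ 0) :
    ∃ v : Pt, det2 p q v = 0 ∧ det2 p' q' v = 0 := by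
  refine ⟨p + (det2 p' q' p / cross2 (q - p) (q' - p')) • (q - p), ?_, ?_⟩
  · simp only [det2, Prod.fst_add, Prod.snd_add, Prod.smul_fst, Prod.smul_snd, smul_eq_mul,
      Prod.fst_sub, Prod.snd_sub]
    ring
  · have e : ∀ t : ℝ, det2 p' q' (p + t • (q - p))
        = det2 p' q' p - t * cross2 (q - p) (q' - p') := by
      intro t
      simp only [det2, cross2, Prod.fst_add, Prod.snd_add, Prod.smul_fst, Prod.smul_snd,
        smul_eq_mul, Prod.fst_sub, Prod.snd_sub]
      ring
    rw [e, div_mul_cancel₀ _ h, sub_self]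

lemma mem_hull3 {x u v w : Pt} (h : x ∈ convexHull ℝ ({u, v, w} : Set Pt)) :
    ∃ a b c : ℝ, 0 ≤ a ∧ 0 ≤ b ∧ 0 ≤ c ∧ a + b + c = 1 ∧ x = a • u + b • v + c • w := by
  rw [convexHull_insert (by simp), convexHull_pair] at h
  simp only [convexJoin_singleton_left, Set.mem_iUnion] at h
  obtain ⟨y, ⟨s, t, hs, ht, hst, rfl⟩, ⟨a, b, ha, hb, hab, rfl⟩⟩ := h
  refine ⟨a, b * s, b * t, ha, mul_nonneg hb hs, mul_nonneg hb ht, ?_, ?_⟩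
  · rw [add_assoc, ← mul_add, hst, mul_one, hab]
  · rw [smul_add, smul_smul, smul_smul, add_assoc]

lemma chir_signs {A B C : Set Pt} {g₁ g₂ g₃ : Pt → ℝ} {K : ℝ} (hK : 0 < K)
    (hsum : ∀ x, g₁ x + g₂ x + g₃ x = K)
    (m1 : ∀ b ∈ B, ∀ c ∈ C, g₁ b * g₁ c < 0) (m2 : ∀ a ∈ A, ∀ c ∈ C, g₂ a * g₂ c < 0)
    (m3 : ∀ a ∈ A, ∀ b ∈ B, g₃ a * g₃ b < 0)
    {a b c : Pt} (ha : a ∈ A) (hb : b ∈ B) (hc : c ∈ C)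
    (za : g₁ a = 0) (zb : g₂ b = 0) (zc : g₃ c = 0) (hneg : g₂ a < 0) :
    Chir g₁ g₂ g₃ A B C := by
  have pn : ∀ {x y : ℝ}, x * y < 0 → x < 0 → 0 < y := fun h hx => by
    by_contra hy; nlinarith
  have np : ∀ {x y : ℝ}, x * y < 0 → 0 < x → y < 0 := fun h hx => by
    by_contra hy; nlinarith
  have pn' : ∀ {x y : ℝ}, x * y < 0 → y < 0 → 0 < x := fun h hx => by
    by_contra hy; nlinarith
  have np' : ∀ {x y : ℝ}, x * y < 0 → 0 < y → x < 0 := fun h hx => by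
    by_contra hy; nlinarith
  have s1 := hsum a
  have s2 := hsum b
  have i3 : 0 < g₃ a := by linarith
  have c2 : ∀ c ∈ C, 0 < g₂ c := fun c hc => pn (m2 a ha c hc) hneg
  have a2 : ∀ a ∈ A, g₂ a < 0 := fun a ha => np' (m2 a ha c hc) (c2 c hc)
  have b3 : ∀ b ∈ B, g₃ b < 0 := fun b hb => np (m3 a ha b hb) i3
  have a3 : ∀ a ∈ A, 0 < g₃ a := fun a ha => pn' (m3 a ha b hb) (b3 b hb)
  have i1 : 0 < g₁ b := by have := b3 b hb; linarith
  have c1 : ∀ c ∈ C, g₁ c < 0 := fun c hc => np (m1 b hb c hc) i1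
  have b1 : ∀ b ∈ B, 0 < g₁ b := fun b hb => pn' (m1 b hb c hc) (c1 c hc)
  exact ⟨b1, c1, c2, a2, a3, b3⟩

lemma det2_self_left (p q : Pt) : det2 p q p = 0 := by simp only [det2]; ring

lemma det2_self_right (p q : Pt) : det2 p q q = 0 := by simp only [det2]; ring

lemma keyProp_of {A B C D : Set Pt} (hfull : FullSep A B C) (hcore : InCore A B C D)
    (gA : ∀ p ∈ A, ∀ q ∈ A, p ≠ q → ∀ d ∈ D, det2 p q d ≠ 0)
    (gB : ∀ p ∈ B, ∀ q ∈ B, p ≠ q → ∀ d ∈ D, det2 p q d ≠ 0)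
    (gC : ∀ p ∈ C, ∀ q ∈ C, p ≠ q → ∀ d ∈ D, det2 p q d ≠ 0) : KeyProp A B C D := by
  intro p₁ hp₁ q₁ hq₁ h₁ p₂ hp₂ q₂ hq₂ h₂ p₃ hp₃ q₃ hq₃ h₃ hD
  obtain ⟨sA, sB, sC⟩ := hfull
  have mA : ∀ b ∈ B, ∀ c ∈ C, det2 p₁ q₁ b * det2 p₁ q₁ c < 0 := fun b hb c hc => by
    rw [mul_comm]; exact sep_mul sA hp₁ hq₁ h₁ hc hb
  have mB : ∀ a ∈ A, ∀ c ∈ C, det2 p₂ q₂ a * det2 p₂ q₂ c < 0 := fun a ha c hc =>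
    sep_mul sB hp₂ hq₂ h₂ ha hc
  have mC : ∀ a ∈ A, ∀ b ∈ B, det2 p₃ q₃ a * det2 p₃ q₃ b < 0 := fun a ha b hb => by
    rw [mul_comm]; exact sep_mul sC hp₃ hq₃ h₃ hb ha
  have n12 : cross2 (q₁ - p₁) (q₂ - p₂) ≠ 0 :=
    cross_ne (mA p₂ hp₂ p₃ hp₃) (mB p₁ hp₁ p₃ hp₃)
  have n13 : cross2 (q₁ - p₁) (q₃ - p₃) ≠ 0 :=
    cross_ne (c := p₂) (by rw [mul_comm]; exact mA p₂ hp₂ p₃ hp₃) (mC p₁ hp₁ p₂ hp₂)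
  have n23 : cross2 (q₂ - p₂) (q₃ - p₃) ≠ 0 :=
    cross_ne (c := p₁) (by rw [mul_comm]; exact mB p₁ hp₁ p₃ hp₃)
      (by rw [mul_comm]; exact mC p₁ hp₁ p₂ hp₂)
  obtain ⟨v₁₂, x1, x2⟩ := exists_inter n12
  obtain ⟨v₁₃, y1, y3⟩ := exists_inter n13
  obtain ⟨v₂₃, w2, w3⟩ := exists_inter n23
  have hsub := hcore p₁ hp₁ q₁ hq₁ h₁ p₂ hp₂ q₂ hq₂ h₂ p₃ hp₃ q₃ hq₃ h₃ n12 n13 n23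
    v₁₂ v₁₃ v₂₃ x1 x2 y1 y3 w2 w3
  set k₁ := cross2 (q₂ - p₂) (q₃ - p₃) with hk₁
  set k₂ := - cross2 (q₁ - p₁) (q₃ - p₃) with hk₂
  set k₃ := cross2 (q₁ - p₁) (q₂ - p₂) with hk₃
  have hk₂0 : k₂ ≠ 0 := neg_ne_zero.2 n13
  obtain ⟨K, hK⟩ : ∃ K : ℝ, ∀ x : Pt,
      k₁ * det2 p₁ q₁ x + k₂ * det2 p₂ q₂ x + k₃ * det2 p₃ q₃ x = K := by
    refine ⟨k₁ * det2 p₁ q₁ 0 + k₂ * det2 p₂ q₂ 0 + k₃ * det2 p₃ q₃ 0, fun x => ?_⟩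
    simp only [hk₁, hk₂, hk₃, det2, cross2, Prod.fst_sub, Prod.snd_sub, Prod.fst_zero,
      Prod.snd_zero]
    ring
  have K1 : k₁ * det2 p₁ q₁ v₂₃ = K := by have := hK v₂₃; rw [w2, w3] at this; linarith
  have K2 : k₂ * det2 p₂ q₂ v₁₃ = K := by have := hK v₁₃; rw [y1, y3] at this; linarith
  have K3 : k₃ * det2 p₃ q₃ v₁₂ = K := by have := hK v₁₂; rw [x1, x2] at this; linarith
  have hd : ∀ d ∈ D, K ≠ 0 ∧ 0 < K * k₁ * det2 p₁ q₁ d ∧ 0 < K * k₂ * det2 p₂ q₂ d ∧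
      0 < K * k₃ * det2 p₃ q₃ d := by
    intro d hd
    obtain ⟨a, b, c, ha, hb, hc, habc, hx⟩ := mem_hull3 (interior_subset (hsub hd))
    have f1 := (affF_det2 k₁ p₁ q₁).combo3 habc v₁₂ v₁₃ v₂₃
    have f2 := (affF_det2 k₂ p₂ q₂).combo3 habc v₁₂ v₁₃ v₂₃
    have f3 := (affF_det2 k₃ p₃ q₃).combo3 habc v₁₂ v₁₃ v₂₃
    rw [← hx] at f1 f2 f3
    simp only [x1, y1, K1, x2, w2, K2, y3, w3, K3, mul_zero, zero_add, add_zero] at f1 f2 f3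
    have g1 : c * K ≠ 0 := by rw [← f1]; exact mul_ne_zero n23 (gA p₁ hp₁ q₁ hq₁ h₁ d hd)
    have g2 : b * K ≠ 0 := by rw [← f2]; exact mul_ne_zero hk₂0 (gB p₂ hp₂ q₂ hq₂ h₂ d hd)
    have g3 : a * K ≠ 0 := by rw [← f3]; exact mul_ne_zero n12 (gC p₃ hp₃ q₃ hq₃ h₃ d hd)
    have hK0 : K ≠ 0 := right_ne_zero_of_mul g1
    have hKK : 0 < K * K := mul_self_pos.2 hK0
    have c0 := lt_of_le_of_ne hc (left_ne_zero_of_mul g1).symm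
    have b0 := lt_of_le_of_ne hb (left_ne_zero_of_mul g2).symm
    have a0 := lt_of_le_of_ne ha (left_ne_zero_of_mul g3).symm
    refine ⟨hK0, ?_, ?_, ?_⟩
    · rw [mul_assoc, f1, mul_left_comm]; exact mul_pos c0 hKK
    · rw [mul_assoc, f2, mul_left_comm]; exact mul_pos b0 hKK
    · rw [mul_assoc, f3, mul_left_comm]; exact mul_pos a0 hKK
  obtain ⟨d₀, hd₀⟩ := hD
  have hK0 : K ≠ 0 := (hd d₀ hd₀).1
  have hKK : 0 < K * K := mul_self_pos.2 hK0
  have scale : ∀ {k x y : ℝ}, k ≠ 0 → x * y < 0 → (K * k * x) * (K * k * y) < 0 := by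
    intro k x y hk h
    have : (K * k * x) * (K * k * y) = (K * k) * (K * k) * (x * y) := by ring
    rw [this]
    exact mul_neg_of_pos_of_neg (mul_self_pos.2 (mul_ne_zero hK0 hk)) h
  have hsum : ∀ x, K * k₁ * det2 p₁ q₁ x + K * k₂ * det2 p₂ q₂ x + K * k₃ * det2 p₃ q₃ x
      = K * K := fun x => by
    calc _ = K * (k₁ * det2 p₁ q₁ x + k₂ * det2 p₂ q₂ x + k₃ * det2 p₃ q₃ x) := by ring
      _ = _ := by rw [hK]
  refine ⟨fun x => K * k₁ * det2 p₁ q₁ x, fun x => K * k₂ * det2 p₂ q₂ x,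
    fun x => K * k₃ * det2 p₃ q₃ x, affF_det2 _ _ _, affF_det2 _ _ _, affF_det2 _ _ _,
    by simp [det2_self_left, det2_self_right], by simp [det2_self_left, det2_self_right],
    by simp [det2_self_left, det2_self_right], fun d h => (hd d h).2, ?_⟩
  have m1 : ∀ b ∈ B, ∀ c ∈ C, (K * k₁ * det2 p₁ q₁ b) * (K * k₁ * det2 p₁ q₁ c) < 0 :=
    fun b hb c hc => scale n23 (mA b hb c hc)
  have m2 : ∀ a ∈ A, ∀ c ∈ C, (K * k₂ * det2 p₂ q₂ a) * (K * k₂ * det2 p₂ q₂ c) < 0 :=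
    fun b hb c hc => scale hk₂0 (mB b hb c hc)
  have m3 : ∀ a ∈ A, ∀ b ∈ B, (K * k₃ * det2 p₃ q₃ a) * (K * k₃ * det2 p₃ q₃ b) < 0 :=
    fun b hb c hc => scale n12 (mC b hb c hc)
  have za : K * k₁ * det2 p₁ q₁ p₁ = 0 := by rw [det2_self_left, mul_zero]
  have zb : K * k₂ * det2 p₂ q₂ p₂ = 0 := by rw [det2_self_left, mul_zero]
  have zc : K * k₃ * det2 p₃ q₃ p₃ = 0 := by rw [det2_self_left, mul_zero]
  rcases lt_or_ge (K * k₂ * det2 p₂ q₂ p₁) 0 with hneg | hpos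
  · left
    exact chir_signs hKK hsum m1 m2 m3 hp₁ hp₂ hp₃ za zb zc hneg
  · right
    have e1 : K * k₂ * det2 p₂ q₂ p₃ < 0 := by
      have := m2 p₁ hp₁ p₃ hp₃
      by_contra hh
      have := mul_nonneg hpos (not_lt.1 hh)
      linarith
    have e2 : 0 < K * k₁ * det2 p₁ q₁ p₃ := by have := hsum p₃; linarith
    have e3 : K * k₁ * det2 p₁ q₁ p₂ < 0 := by
      have := m1 p₂ hp₂ p₃ hp₃
      by_contra hh
      have := mul_nonneg (not_lt.1 hh) e2.le
      linarith
    have e4 : 0 < K * k₃ * det2 p₃ q₃ p₂ := by have := hsum p₂; linarith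
    have e5 : K * k₃ * det2 p₃ q₃ p₁ < 0 := by
      have := m3 p₁ hp₁ p₂ hp₂
      by_contra hh
      have := mul_nonneg (not_lt.1 hh) e4.le
      linarith
    exact chir_signs (g₁ := fun x => K * k₁ * det2 p₁ q₁ x)
      (g₂ := fun x => K * k₃ * det2 p₃ q₃ x) (g₃ := fun x => K * k₂ * det2 p₂ q₂ x)
      hKK (fun x => by rw [← hsum x]; ring)
      (fun c hc b hb => by rw [mul_comm]; exact m1 b hb c hc) m3 m2 hp₁ hp₃ hp₂ za zc zb e5

lemma det2_ne_of_genPos {P : Set Pt} (h : GenPos P) {p q r : Pt} (hp : p ∈ P) (hq : q ∈ P)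
    (hr : r ∈ P) (h1 : p ≠ q) (h2 : p ≠ r) (h3 : q ≠ r) : det2 p q r ≠ 0 := by
  intro e
  apply h p hp q hq r hr h1 h2 h3
  rw [collinear_iff_of_mem (p₀ := p) (by simp)]
  refine ⟨q - p, ?_⟩
  have hN : (q.1 - p.1) ^ 2 + (q.2 - p.2) ^ 2 ≠ 0 := by
    intro hz
    apply h1
    have x1 : q.1 - p.1 = 0 := by nlinarith [sq_nonneg (q.1 - p.1), sq_nonneg (q.2 - p.2)]
    have x2 : q.2 - p.2 = 0 := by nlinarith [sq_nonneg (q.1 - p.1), sq_nonneg (q.2 - p.2)]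
    ext
    · linarith
    · linarith
  intro x hx
  simp only [Set.mem_insert_iff, Set.mem_singleton_iff] at hx
  rcases hx with rfl | rfl | rfl
  · exact ⟨0, by simp⟩
  · exact ⟨1, by simp⟩
  · refine ⟨((q.1 - p.1) * (x.1 - p.1) + (q.2 - p.2) * (x.2 - p.2))
      / ((q.1 - p.1) ^ 2 + (q.2 - p.2) ^ 2), ?_⟩
    simp only [det2] at e
    ext
    · simp only [vadd_eq_add, Prod.fst_add, Prod.smul_fst, Prod.fst_sub, smul_eq_mul]
      field_simp
      linear_combination (-(q.2 - p.2)) * e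
    · simp only [vadd_eq_add, Prod.snd_add, Prod.smul_snd, Prod.snd_sub, smul_eq_mul]
      field_simp
      linear_combination (q.1 - p.1) * e

lemma two_of_card {A : Finset Pt} (h : 2 ≤ A.card) : Two (A : Set Pt) := by
  have h1 : 1 < A.card := h
  refine ⟨?_, fun a ha => ?_⟩
  · have : A.Nonempty := Finset.card_pos.1 (by omega)
    exact_mod_cast this
  · obtain ⟨b, hb, hne⟩ := Finset.exists_mem_ne h1 a
    exact ⟨b, hb, hne.symm⟩

theorem crossing_family_emanates_of_fullSep_core
    (A B C D : Finset Pt)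
    (hAB : Disjoint A B) (hAC : Disjoint A C) (hAD : Disjoint A D)
    (hBC : Disjoint B C) (hBD : Disjoint B D) (hCD : Disjoint C D)
    (hgen : GenPos (↑A ∪ ↑B ∪ ↑C ∪ ↑D))
    (hA : 2 ≤ A.card) (hB : 2 ≤ B.card) (hC : 2 ≤ C.card)
    (hfull : FullSep ↑A ↑B ↑C)
    (hcore : InCore ↑A ↑B ↑C ↑D)
    (F : Finset (Sym2 Pt))
    (hF : IsCrossingFamily (↑A ∪ ↑B ∪ ↑C ∪ ↑D) F) :
    EmanatesFrom F ↑A ∨ EmanatesFrom F ↑B ∨ EmanatesFrom F ↑C ∨ EmanatesFrom F ↑D := by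

  have dj : ∀ {X Y : Finset Pt}, Disjoint X Y → ∀ {x y : Pt}, x ∈ X → y ∈ Y → x ≠ y := by
    intro X Y h x y hx hy e
    subst e
    exact Finset.disjoint_left.1 h hx hy
  have iA : ∀ {x : Pt}, x ∈ A → x ∈ ((A : Set Pt) ∪ ↑B ∪ ↑C ∪ ↑D) :=
    fun h => Or.inl (Or.inl (Or.inl h))
  have iB : ∀ {x : Pt}, x ∈ B → x ∈ ((A : Set Pt) ∪ ↑B ∪ ↑C ∪ ↑D) :=
    fun h => Or.inl (Or.inl (Or.inr h))
  have iC : ∀ {x : Pt}, x ∈ C → x ∈ ((A : Set Pt) ∪ ↑B ∪ ↑C ∪ ↑D) :=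
    fun h => Or.inl (Or.inr h)
  have iD : ∀ {x : Pt}, x ∈ D → x ∈ ((A : Set Pt) ∪ ↑B ∪ ↑C ∪ ↑D) :=
    fun h => Or.inr h
  have cfg : Cfg (A : Set Pt) ↑B ↑C ↑D :=
    { twoA := two_of_card hA
      twoB := two_of_card hB
      twoC := two_of_card hC
      sA := (SepAff.of_separatesFrom hfull.1).swap
      sB := (SepAff.of_separatesFrom hfull.2.1).swap
      sC := (SepAff.of_separatesFrom hfull.2.2).swap
      g1 := fun a ha b hb c hc => det2_ne_of_genPos hgen (iA ha) (iB hb) (iC hc)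
        (dj hAB ha hb) (dj hAC ha hc) (dj hBC hb hc)
      g2 := fun a ha b hb d hd => det2_ne_of_genPos hgen (iA ha) (iB hb) (iD hd)
        (dj hAB ha hb) (dj hAD ha hd) (dj hBD hb hd)
      g3 := fun b hb c hc d hd => det2_ne_of_genPos hgen (iB hb) (iC hc) (iD hd)
        (dj hBC hb hc) (dj hBD hb hd) (dj hCD hc hd)
      g4 := fun c hc a ha d hd => det2_ne_of_genPos hgen (iC hc) (iA ha) (iD hd)
        (dj hAC ha hc).symm (dj hCD hc hd) (dj hAD ha hd)
      key := keyProp_of hfull hcore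
        (fun p hp q hq hne d hd => det2_ne_of_genPos hgen (iA hp) (iA hq) (iD hd)
          hne (dj hAD hp hd) (dj hAD hq hd))
        (fun p hp q hq hne d hd => det2_ne_of_genPos hgen (iB hp) (iB hq) (iD hd)
          hne (dj hBD hp hd) (dj hBD hq hd))
        (fun p hp q hq hne d hd => det2_ne_of_genPos hgen (iC hp) (iC hq) (iD hd)
          hne (dj hCD hp hd) (dj hCD hq hd)) }
  exact cfg.main hF
end

section
/- Let m and f be positive integers with f > 1. If there exists a set of m points in general position in the plane whose maximum crossing family has size f (that is, it contains a crossing family of size f and every crossing family in it has size at most f), then for every positive integer n there exists a set of n points in general position in the plane in which every crossing family has size at most f·⌈n/m⌉. -/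
open Set

section helpers

open Filter Topology

theorem collinear_iff_det2 (p q r : Pt) :
    Collinear ℝ ({p, q, r} : Set Pt) ↔ det2 p q r = 0 := by
  constructor
  · intro h
    rw [collinear_iff_of_mem (p₀ := p) (by simp)] at h
    obtain ⟨v, hv⟩ := h
    obtain ⟨a, ha⟩ := hv q (by simp)
    obtain ⟨b, hb⟩ := hv r (by simp)
    subst ha hb
    simp [det2]
    ring
  · intro h
    rw [collinear_iff_of_mem (p₀ := p) (by simp)]
    by_cases hpq : q = p
    · refine ⟨r - p, ?_⟩
      intro x hx
      simp only [Set.mem_insert_iff, Set.mem_singleton_iff] at hx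
      rcases hx with rfl | rfl | rfl
      · exact ⟨0, by simp⟩
      · exact ⟨0, by simp [hpq]⟩
      · exact ⟨1, by simp⟩
    · refine ⟨q - p, ?_⟩
      intro x hx
      simp only [Set.mem_insert_iff, Set.mem_singleton_iff] at hx
      rcases hx with rfl | rfl | rfl
      · exact ⟨0, by simp⟩
      · exact ⟨1, by simp⟩
      · unfold det2 at h
        by_cases h1 : q.1 - p.1 = 0
        · have h2 : q.2 - p.2 ≠ 0 := by
            intro h2
            exact hpq (Prod.ext (by linarith) (by linarith))
          refine ⟨(x.2 - p.2) / (q.2 - p.2), ?_⟩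
          rw [h1] at h
          have h3 : x.1 - p.1 = 0 := by
            have : (q.2 - p.2) * (x.1 - p.1) = 0 := by linarith
            exact (mul_eq_zero.1 this).resolve_left h2
          ext
          · simp [h1]; linarith
          · simp
            field_simp
            ring
        · refine ⟨(x.1 - p.1) / (q.1 - p.1), ?_⟩
          ext
          · simp
            field_simp
            ring
          · simp
            field_simp
            linarith

theorem no_cross_of_same_side {a b c d : Pt} (h : 0 < det2 a b c * det2 a b d) :
    ¬ (openSegment ℝ a b ∩ openSegment ℝ c d).Nonempty := by
  rintro ⟨x, ⟨u, v, hu, hv, huv, rfl⟩, ⟨w, z, hw, hz, hwz, hx⟩⟩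
  have h1 := congrArg Prod.fst hx
  have h2 := congrArg Prod.snd hx
  simp at h1 h2
  have key : w * det2 a b c + z * det2 a b d = 0 := by
    obtain rfl : u = 1 - v := by linarith
    obtain rfl : w = 1 - z := by linarith
    unfold det2
    linear_combination (b.1 - a.1) * h2 - (b.2 - a.2) * h1
  rcases pos_and_pos_or_neg_and_neg_of_mul_pos h with ⟨h3, h4⟩ | ⟨h3, h4⟩ <;> nlinarith [mul_pos hw hz]

theorem no_cross_of_sep {a b c d : Pt} (h : det2 a c b * det2 a c d < 0) :
    ¬ (openSegment ℝ a b ∩ openSegment ℝ c d).Nonempty := by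
  rintro ⟨x, ⟨u, v, hu, hv, huv, rfl⟩, ⟨w, z, hw, hz, hwz, hx⟩⟩
  have h1 := congrArg Prod.fst hx
  have h2 := congrArg Prod.snd hx
  simp at h1 h2
  have key : z * det2 a c d = v * det2 a c b := by
    obtain rfl : u = 1 - v := by linarith
    obtain rfl : w = 1 - z := by linarith
    unfold det2
    linear_combination (c.1 - a.1) * h2 - (c.2 - a.2) * h1
  have : 0 ≤ (det2 a c b * det2 a c d) * z := by
    have : (det2 a c b * det2 a c d) * z = v * (det2 a c b)^2 := by
      linear_combination det2 a c b * key
    rw [this]; positivity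
  nlinarith

theorem no_cross_of_share {a b c : Pt} (h : det2 a b c ≠ 0) :
    ¬ (openSegment ℝ a b ∩ openSegment ℝ a c).Nonempty := by
  rintro ⟨x, ⟨u, v, hu, hv, huv, rfl⟩, ⟨w, z, hw, hz, hwz, hx⟩⟩
  have h1 := congrArg Prod.fst hx
  have h2 := congrArg Prod.snd hx
  simp at h1 h2
  have key : z * det2 a b c = 0 := by
    obtain rfl : u = 1 - v := by linarith
    obtain rfl : w = 1 - z := by linarith
    unfold det2
    linear_combination (b.1 - a.1) * h2 - (b.2 - a.2) * h1
  rcases mul_eq_zero.1 key with h | h'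
  · exact hz.ne' h
  · exact h h'

theorem cross_of_det {a b c d : Pt} (h1 : det2 a b c * det2 a b d < 0)
    (h2 : det2 c d a * det2 c d b < 0) :
    (openSegment ℝ a b ∩ openSegment ℝ c d).Nonempty := by
  have aux : ∀ x y : ℝ, x * y < 0 → x - y ≠ 0 ∧ 0 < x / (x - y) ∧ 0 < -y / (x - y) := by
    intro x y h
    rcases mul_neg_iff.1 h with ⟨hx, hy⟩ | ⟨hx, hy⟩
    · have : 0 < x - y := by linarith
      exact ⟨this.ne', div_pos hx this, div_pos (by linarith) this⟩
    · have : x - y < 0 := by linarith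
      exact ⟨this.ne, div_pos_of_neg_of_neg hx this, div_pos_of_neg_of_neg (by linarith) this⟩
  obtain ⟨n1, p1, q1⟩ := aux _ _ h1
  obtain ⟨n2, p2, q2⟩ := aux _ _ h2
  refine ⟨(-det2 c d b / (det2 c d a - det2 c d b)) • a +
      (det2 c d a / (det2 c d a - det2 c d b)) • b, ⟨_, _, q2, p2, ?_, rfl⟩,
      ⟨_, _, q1, p1, ?_, ?_⟩⟩
  · field_simp; ring
  · field_simp; ring
  · ext
    · simp
      field_simp
      unfold det2
      ring
    · simp
      field_simp
      unfold det2
      ring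

/-- Deficiency version of Hall's theorem, for edge multisets with bounded fibres. -/
theorem exists_matching {ι α β : Type*} [DecidableEq ι] [DecidableEq α] [DecidableEq β]
    (F : Finset ι) (a : ι → α) (b : ι → β) (k f : ℕ)
    (ha : ∀ x, (F.filter (fun s => a s = x)).card ≤ k)
    (hb : ∀ x, (F.filter (fun s => b s = x)).card ≤ k)
    (hF : f * k < F.card) :
    ∃ M ⊆ F, f < M.card ∧ Set.InjOn a M ∧ Set.InjOn b M := by
  have hfa : ∀ G ⊆ F, G.card ≤ k * (G.image a).card := by
    intro G hG
    refine Finset.card_le_mul_card_image G k ?_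
    intro x _
    exact (Finset.card_le_card (Finset.filter_subset_filter _ hG)).trans (ha x)
  have hfb : ∀ G ⊆ F, G.card ≤ k * (G.image b).card := by
    intro G hG
    refine Finset.card_le_mul_card_image G k ?_
    intro x _
    exact (Finset.card_le_card (Finset.filter_subset_filter _ hG)).trans (hb x)
  set A := F.image a with hA
  have hAf : f + 1 ≤ A.card := by
    by_contra hlt
    have h1 : F.card ≤ k * A.card := hfa F subset_rfl
    have h2 : k * A.card ≤ k * f := Nat.mul_le_mul_left _ (by omega)
    have : k * f = f * k := mul_comm _ _
    omega
  set d := A.card - (f + 1) with hd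
  let t : A → Finset (β ⊕ Fin d) := fun x =>
    ((F.filter (fun s => a s = x)).image b).disjSum Finset.univ
  have hall : ∀ S : Finset A, S.card ≤ (S.biUnion t).card := by
    intro S
    rcases S.eq_empty_or_nonempty with rfl | hS
    · simp
    let T : Finset α := S.image (fun x => x.1)
    have hT : T.card = S.card := Finset.card_image_of_injective _ Subtype.val_injective
    have hTA : T ⊆ A := by
      intro x hx
      obtain ⟨y, _, rfl⟩ := Finset.mem_image.1 hx
      exact y.2
    let N := (F.filter (fun s => a s ∈ T)).image b
    have hsub : N.disjSum (Finset.univ : Finset (Fin d)) ⊆ S.biUnion t := by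
      intro z hz
      rw [Finset.mem_disjSum] at hz
      rw [Finset.mem_biUnion]
      rcases hz with ⟨y, hy, rfl⟩ | ⟨y, hy, rfl⟩
      · obtain ⟨s, hs, rfl⟩ := Finset.mem_image.1 hy
        obtain ⟨hsF, hsT⟩ := Finset.mem_filter.1 hs
        obtain ⟨x, hxS, hx⟩ := Finset.mem_image.1 hsT
        refine ⟨x, hxS, ?_⟩
        simp only [t, Finset.inl_mem_disjSum, Finset.mem_image, Finset.mem_filter]
        exact ⟨s, ⟨hsF, hx.symm⟩, rfl⟩
      · obtain ⟨x, hx⟩ := hS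
        exact ⟨x, hx, by simp [t]⟩
    have hc := Finset.card_le_card hsub
    rw [Finset.card_disjSum, Finset.card_univ, Fintype.card_fin] at hc
    have h1 : (F.filter (fun s => a s ∈ T)).card ≤ k * N.card :=
      hfb (F.filter (fun s => a s ∈ T)) (Finset.filter_subset _ _)
    have h2 := hfa (F.filter (fun s => ¬ a s ∈ T)) (Finset.filter_subset _ _)
    have h3 : (F.filter (fun s => ¬ a s ∈ T)).image a ⊆ A \ T := by
      intro x hx
      obtain ⟨s, hs, rfl⟩ := Finset.mem_image.1 hx
      obtain ⟨hsF, hsT⟩ := Finset.mem_filter.1 hs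
      exact Finset.mem_sdiff.2 ⟨Finset.mem_image_of_mem _ hsF, hsT⟩
    have h4 := Finset.card_le_card h3
    rw [Finset.card_sdiff_of_subset hTA] at h4
    have h5 := Finset.card_filter_add_card_filter_not (s := F) (fun s => a s ∈ T)
    have h6 := Finset.card_le_card hTA
    have h7 : f * k < k * (N.card + (A.card - T.card)) := by
      have := Nat.mul_le_mul_left k h4
      rw [mul_add]
      omega
    have h8 : f < N.card + (A.card - T.card) := by
      rw [mul_comm] at h7
      exact Nat.lt_of_mul_lt_mul_right (a := k) (by rw [mul_comm f k] at *; rw [mul_comm _ k] at *; exact h7)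
    omega
  obtain ⟨g, hg, hgt⟩ := (Finset.all_card_le_biUnion_card_iff_exists_injective t).1 hall
  let A' : Finset A := Finset.univ.filter (fun x => (g x).isLeft = true)
  have hA' : f + 1 ≤ A'.card := by
    have h1 := Finset.card_filter_add_card_filter_not (s := (Finset.univ : Finset A))
      (fun x => (g x).isLeft = true)
    have h2 : (Finset.univ.filter (fun x : A => ¬ (g x).isLeft = true)).card ≤ d := by
      have h3 : ((Finset.univ.filter (fun x : A => ¬ (g x).isLeft = true)).image g) ⊆
          (Finset.univ : Finset (Fin d)).image Sum.inr := by
        intro z hz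
        obtain ⟨x, hx, rfl⟩ := Finset.mem_image.1 hz
        have := (Finset.mem_filter.1 hx).2
        cases hgx : g x with
        | inl y => simp [hgx] at this
        | inr y => simp
      have h4 := Finset.card_le_card h3
      rw [Finset.card_image_of_injective _ hg] at h4
      refine h4.trans (Finset.card_image_le.trans (by simp))
    have h3 : (Finset.univ : Finset A).card = A.card := by simp
    have : A'.card = (Finset.univ.filter (fun x : A => (g x).isLeft = true)).card := rfl
    omega
  have hch : ∀ x : A, ∃ s, x ∈ A' → s ∈ F ∧ a s = x ∧ g x = Sum.inl (b s) := by
    intro x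
    by_cases hx : x ∈ A'
    · have h1 := (Finset.mem_filter.1 hx).2
      have h2 := hgt x
      cases hgx : g x with
      | inl y =>
        rw [hgx] at h2
        simp only [t, Finset.inl_mem_disjSum, Finset.mem_image, Finset.mem_filter] at h2
        obtain ⟨s, ⟨hs1, hs2⟩, rfl⟩ := h2
        exact ⟨s, fun _ => ⟨hs1, hs2, rfl⟩⟩
      | inr y => simp [hgx] at h1
    · obtain ⟨s, _⟩ := Finset.mem_image.1 x.2
      exact ⟨s, fun h => absurd h hx⟩
  choose e he using hch
  refine ⟨A'.image e, ?_, ?_, ?_, ?_⟩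
  · intro s hs
    obtain ⟨x, hx, rfl⟩ := Finset.mem_image.1 hs
    exact (he x hx).1
  · rw [Finset.card_image_of_injOn]
    · omega
    · intro x hx y hy hxy
      apply Subtype.ext
      rw [← (he x hx).2.1, ← (he y hy).2.1]
      exact congrArg a hxy
  · intro s hs t ht hst
    obtain ⟨x, hx, rfl⟩ := Finset.mem_image.1 hs
    obtain ⟨y, hy, rfl⟩ := Finset.mem_image.1 ht
    rw [(he x hx).2.1, (he y hy).2.1] at hst
    rw [Subtype.ext hst]
  · intro s hs t ht hst
    obtain ⟨x, hx, rfl⟩ := Finset.mem_image.1 hs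
    obtain ⟨y, hy, rfl⟩ := Finset.mem_image.1 ht
    have : g x = g y := by rw [(he x hx).2.2, (he y hy).2.2, hst]
    rw [hg this]

/-- The linear functional used to choose the direction of the clusters. -/
def lin (s : ℝ) (p : Pt) : ℝ := p.2 - s * p.1

/-- The `i`-th point of the cluster replacing `p`. -/
def clu (s ε : ℝ) (p : Pt) (i : ℕ) : Pt :=
  (p.1 + ε * i, p.2 + s * ε * i + ε ^ 2 * i ^ 2)

theorem exists_slope (P : Finset Pt) :
    ∃ s : ℝ, ∀ p ∈ P, ∀ q ∈ P, p ≠ q → lin s p ≠ lin s q := by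
  obtain ⟨s, hs⟩ := Infinite.exists_notMem_finset
    ((P ×ˢ P).image (fun z => (z.2.2 - z.1.2) / (z.2.1 - z.1.1)))
  refine ⟨s, fun p hp q hq hpq h => ?_⟩
  unfold lin at h
  by_cases h1 : q.1 - p.1 = 0
  · apply hpq
    have h2 : p.1 = q.1 := by linarith
    rw [h2] at h
    exact Prod.ext h2 (by linarith)
  · apply hs
    refine Finset.mem_image.2 ⟨(p, q), Finset.mem_product.2 ⟨hp, hq⟩, ?_⟩
    simp only
    rw [div_eq_iff h1]
    linarith

theorem exists_eps (P : Finset Pt) (k : ℕ) (s : ℝ) (hP : GenPos ↑P)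
    (hs : ∀ p ∈ P, ∀ q ∈ P, p ≠ q → lin s p ≠ lin s q) :
    ∃ ε : ℝ, 0 < ε ∧
      (∀ p ∈ P, ∀ q ∈ P, ∀ r ∈ P, p ≠ q → p ≠ r → q ≠ r →
        ∀ i < k, ∀ j < k, ∀ l < k,
          0 < det2 (clu s ε p i) (clu s ε q j) (clu s ε r l) * det2 p q r) ∧
      (∀ p ∈ P, ∀ q ∈ P, p ≠ q → ∀ i < k, ∀ j < k, ∀ l < k, i ≠ j →
          0 < det2 (clu s ε p i) (clu s ε p j) (clu s ε q l) *
            (((j : ℝ) - i) * (lin s q - lin s p))) ∧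
      (∀ p ∈ P, ∀ q ∈ P, p ≠ q → ∀ i < k, ∀ j < k, clu s ε p i ≠ clu s ε q j) := by
  have ev : ∀ g : ℝ → ℝ, Continuous g → 0 < g 0 → ∀ᶠ ε in 𝓝[>] (0 : ℝ), 0 < g ε := by
    intro g hg h0
    exact nhdsWithin_le_nhds ((hg.tendsto 0).eventually (lt_mem_nhds h0))
  have E1 : ∀ᶠ ε in 𝓝[>] (0 : ℝ), ∀ p ∈ P, ∀ q ∈ P, ∀ r ∈ P,
      ∀ i ∈ Finset.range k, ∀ j ∈ Finset.range k, ∀ l ∈ Finset.range k,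
      (p ≠ q → p ≠ r → q ≠ r →
          0 < det2 (clu s ε p i) (clu s ε q j) (clu s ε r l) * det2 p q r) := by
    simp only [Filter.eventually_all_finset]
    intro p hp q hq r hr i _ j _ l _
    by_cases h : p ≠ q ∧ p ≠ r ∧ q ≠ r
    · have := ev (fun ε => det2 (clu s ε p i) (clu s ε q j) (clu s ε r l) * det2 p q r)
        (by unfold det2 clu; fun_prop) (by
          have h0 : det2 p q r ≠ 0 := fun h0 =>
            hP p hp q hq r hr h.1 h.2.1 h.2.2 ((collinear_iff_det2 p q r).2 h0)
          have : det2 (clu s 0 p i) (clu s 0 q j) (clu s 0 r l) = det2 p q r := by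
            simp [clu]
          rw [this]
          exact mul_self_pos.2 h0)
      filter_upwards [this] with ε hε _ _ _ using hε
    · refine Filter.Eventually.of_forall fun ε h1 h2 h3 => absurd ⟨h1, h2, h3⟩ h
  have E2 : ∀ᶠ ε in 𝓝[>] (0 : ℝ), ∀ p ∈ P, ∀ q ∈ P,
      ∀ i ∈ Finset.range k, ∀ j ∈ Finset.range k, ∀ l ∈ Finset.range k,
      (p ≠ q → i ≠ j → 0 < det2 (clu s ε p i) (clu s ε p j) (clu s ε q l) *
            (((j : ℝ) - i) * (lin s q - lin s p))) := by
    simp only [Filter.eventually_all_finset]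
    intro p hp q hq i _ j _ l _
    by_cases h : p ≠ q ∧ i ≠ j
    · have := ev (fun ε => ((q.2 + s * ε * l + ε ^ 2 * l ^ 2 - (p.2 + s * ε * i + ε ^ 2 * i ^ 2))
          - (s + ε * (j + i)) * (q.1 + ε * l - (p.1 + ε * i))) * (lin s q - lin s p))
        (by fun_prop) (by
          have h0 : lin s q - lin s p ≠ 0 := sub_ne_zero.2 (hs q hq p hp (Ne.symm h.1))
          have h1 := mul_self_pos.2 h0
          have h2 : (lin s q - lin s p) = q.2 - p.2 - s * (q.1 - p.1) := by unfold lin; ring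
          simp
          rw [h2] at h1 ⊢
          exact h1)
      filter_upwards [this, self_mem_nhdsWithin] with ε hε hε0 _ _
      have hij : (j : ℝ) - i ≠ 0 := sub_ne_zero.2 (by exact_mod_cast Ne.symm h.2)
      have h3 := mul_pos (mul_pos (show (0:ℝ) < ε from hε0) (mul_self_pos.2 hij)) hε
      refine h3.trans_eq ?_
      unfold det2 clu
      ring
    · refine Filter.Eventually.of_forall fun ε h1 h2 => absurd ⟨h1, h2⟩ h
  have E3 : ∀ᶠ ε in 𝓝[>] (0 : ℝ), ∀ p ∈ P, ∀ q ∈ P,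
      ∀ i ∈ Finset.range k, ∀ j ∈ Finset.range k, (p ≠ q → clu s ε p i ≠ clu s ε q j) := by
    simp only [Filter.eventually_all_finset]
    intro p hp q hq i _ j _
    by_cases h : p ≠ q
    · have := ev (fun ε => (lin s (clu s ε p i) - lin s (clu s ε q j)) * (lin s p - lin s q))
        (by unfold lin clu; fun_prop) (by
          have h0 := mul_self_pos.2 (sub_ne_zero.2 (hs p hp q hq h))
          simpa [clu] using h0)
      filter_upwards [this] with ε hε _ heq
      rw [heq] at hε
      simp at hε
    · exact Filter.Eventually.of_forall fun ε h1 => absurd h1 h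
  obtain ⟨ε, ⟨⟨h1, h2⟩, h3⟩, h4⟩ := (((E1.and E2).and E3).and self_mem_nhdsWithin).exists
  refine ⟨ε, h4, ?_, ?_, ?_⟩
  · intro p hp q hq r hr h5 h6 h7 i hi j hj l hl
    exact h1 p hp q hq r hr i (by simpa) j (by simpa) l (by simpa) h5 h6 h7
  · intro p hp q hq h5 i hi j hj l hl h6
    exact h2 p hp q hq i (by simpa) j (by simpa) l (by simpa) h5 h6
  · intro p hp q hq h5 i hi j hj
    exact h3 p hp q hq i (by simpa) j (by simpa) h5

end helpers

theorem crossingFamily_grow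
    (m f : ℕ) (hm : 0 < m) (hf : 1 < f)
    (h : ∃ P : Finset Pt, P.card = m ∧ GenPos ↑P ∧
      (∃ F : Finset (Sym2 Pt), IsCrossingFamily ↑P F ∧ F.card = f) ∧
      (∀ F : Finset (Sym2 Pt), IsCrossingFamily ↑P F → F.card ≤ f)) :
    ∀ n : ℕ, 0 < n → ∃ Q : Finset Pt, Q.card = n ∧ GenPos ↑Q ∧
      ∀ F : Finset (Sym2 Pt), IsCrossingFamily ↑Q F →
        F.card ≤ f * ((n + m - 1) / m) := by
  classical
  intro n hn
  obtain ⟨P, hPm, hP, -, hmax⟩ := h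
  set k := (n + m - 1) / m with hk
  have hnk : n ≤ m * k := by
    have h1 := Nat.div_add_mod (n + m - 1) m
    have h2 := Nat.mod_lt (n + m - 1) hm
    rw [← hk] at h1
    omega
  obtain ⟨s, hs⟩ := exists_slope P
  obtain ⟨ε, hε, H1, H2, H3⟩ := exists_eps P k s hP hs
  have inj1 : ∀ p i j, clu s ε p i = clu s ε p j → i = j := by
    intro p i j hij
    have := congrArg Prod.fst hij
    simp [clu] at this
    rcases this with h | h
    · exact h
    · exact absurd h hε.ne'
  have inj : ∀ p ∈ P, ∀ q ∈ P, ∀ i < k, ∀ j < k, clu s ε p i = clu s ε q j → p = q ∧ i = j := by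
    intro p hp q hq i hi j hj hij
    by_cases hpq : p = q
    · subst hpq
      exact ⟨rfl, inj1 _ _ _ hij⟩
    · exact absurd hij (H3 p hp q hq hpq i hi j hj)
  let Q' : Finset Pt := (P ×ˢ Finset.range k).image (fun z => clu s ε z.1 z.2)
  have hQ'c : Q'.card = m * k := by
    rw [Finset.card_image_of_injOn, Finset.card_product, Finset.card_range, hPm]
    rintro ⟨p, i⟩ hz ⟨q, j⟩ hw hzw
    simp at hz hw
    obtain ⟨h1, h2⟩ := inj p hz.1 q hw.1 i hz.2 j hw.2 hzw
    rw [h1, h2]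
  have memQ' : ∀ x ∈ Q', ∃ p ∈ P, ∃ i < k, clu s ε p i = x := by
    intro x hx
    obtain ⟨⟨p, i⟩, hz, rfl⟩ := Finset.mem_image.1 hx
    simp at hz
    exact ⟨p, hz.1, i, hz.2, rfl⟩
  have detcyc : ∀ a b c : Pt, det2 a b c = det2 b c a := by
    intro a b c; unfold det2; ring
  have det3 : ∀ p ∈ P, ∀ q ∈ P, ∀ r ∈ P, ∀ i < k, ∀ j < k, ∀ l < k,
      (p = q → i ≠ j) → (p = r → i ≠ l) → (q = r → j ≠ l) →
      det2 (clu s ε p i) (clu s ε q j) (clu s ε r l) ≠ 0 := by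
    intro p hp q hq r hr i hi j hj l hl h1 h2 h3 h0
    by_cases hpq : p = q
    · subst hpq
      by_cases hpr : p = r
      · subst hpr
        have h4 : det2 (clu s ε p i) (clu s ε p j) (clu s ε p l) =
            ε ^ 3 * (((j : ℝ) - i) * ((l : ℝ) - i) * ((l : ℝ) - j)) := by
          unfold det2 clu; ring
        rw [h4] at h0
        have a1 : (j : ℝ) - i ≠ 0 := sub_ne_zero.2 (by exact_mod_cast Ne.symm (h1 rfl))
        have a2 : (l : ℝ) - i ≠ 0 := sub_ne_zero.2 (by exact_mod_cast Ne.symm (h2 rfl))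
        have a3 : (l : ℝ) - j ≠ 0 := sub_ne_zero.2 (by exact_mod_cast Ne.symm (h3 rfl))
        exact mul_ne_zero (pow_ne_zero 3 hε.ne') (mul_ne_zero (mul_ne_zero a1 a2) a3) h0
      · have := H2 p hp r hr hpr i hi j hj l hl (h1 rfl)
        rw [h0] at this; simp at this
    · by_cases hpr : p = r
      · subst hpr
        have := H2 p hp q hq hpq l hl i hi j hj (Ne.symm (h2 rfl))
        rw [detcyc, detcyc] at h0
        rw [h0] at this; simp at this
      · by_cases hqr : q = r
        · subst hqr
          have := H2 q hq p hp (Ne.symm hpq) j hj l hl i hi (h3 rfl)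
          rw [detcyc] at h0
          rw [h0] at this; simp at this
        · have := H1 p hp q hq r hr hpq hpr hqr i hi j hj l hl
          rw [h0] at this; simp at this
  have hQ'g : GenPos ↑Q' := by
    intro x hx y hy z hz hxy hxz hyz hc
    obtain ⟨p, hp, i, hi, rfl⟩ := memQ' x hx
    obtain ⟨q, hq, j, hj, rfl⟩ := memQ' y hy
    obtain ⟨r, hr, l, hl, rfl⟩ := memQ' z hz
    rw [collinear_iff_det2] at hc
    refine det3 p hp q hq r hr i hi j hj l hl ?_ ?_ ?_ hc
    · rintro rfl rfl; exact hxy rfl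
    · rintro rfl rfl; exact hxz rfl
    · rintro rfl rfl; exact hyz rfl
  obtain ⟨Q, hQQ, hQc⟩ := Finset.exists_subset_card_eq (s := Q') (n := n) (by omega)
  refine ⟨Q, hQc, ?_, ?_⟩
  · intro x hx y hy z hz
    exact hQ'g x (hQQ hx) y (hQQ hy) z (hQQ hz)
  intro F hF
  obtain ⟨hF1, hF2⟩ := hF
  -- two distinct segments share no endpoint
  have disj : ∀ S ∈ F, ∀ T ∈ F, ∀ x, x ∈ S → x ∈ T → S = T := by
    intro S hS T hT x hxS hxT
    by_contra hST
    obtain ⟨y, rfl⟩ := Sym2.mem_iff_exists.1 hxS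
    obtain ⟨z, rfl⟩ := Sym2.mem_iff_exists.1 hxT
    have hxy : x ≠ y := by simpa using (hF1 _ hS).1
    have hxz : x ≠ z := by simpa using (hF1 _ hT).1
    have hyz : y ≠ z := by rintro rfl; exact hST rfl
    have hx := hQQ ((hF1 _ hS).2 x (by simp))
    have hy := hQQ ((hF1 _ hS).2 y (by simp))
    have hz := hQQ ((hF1 _ hT).2 z (by simp))
    have := hF2 _ hS _ hT hST
    refine no_cross_of_share (a := x) (b := y) (c := z) ?_ this
    intro h0
    exact hQ'g x hx y hy z hz hxy hxz hyz ((collinear_iff_det2 _ _ _).2 h0)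
  -- representation of segments
  have rep : ∀ S ∈ F, ∃ p ∈ P, ∃ i < k, ∃ q ∈ P, ∃ j < k,
      S = s(clu s ε p i, clu s ε q j) ∧ (p = q → i ≠ j) := by
    intro S hS
    induction S using Sym2.ind with
    | _ x y =>
      obtain ⟨p, hp, i, hi, rfl⟩ := memQ' x (hQQ ((hF1 _ hS).2 x (by simp)))
      obtain ⟨q, hq, j, hj, rfl⟩ := memQ' y (hQQ ((hF1 _ hS).2 y (by simp)))
      refine ⟨p, hp, i, hi, q, hq, j, hj, rfl, ?_⟩
      rintro rfl rfl
      exact (hF1 _ hS).1 (by simp)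
  by_cases hInternal : ∃ S ∈ F, ∃ p ∈ P, ∃ i < k, ∃ j < k, i ≠ j ∧ S = s(clu s ε p i, clu s ε p j)
  · obtain ⟨S, hS, p, hp, i, hi, j, hj, hij, rfl⟩ := hInternal
    have key : ∀ T ∈ F, ∃ l < k, clu s ε p l ∈ T := by
      intro T hT
      by_cases hTS : T = s(clu s ε p i, clu s ε p j)
      · exact ⟨i, hi, by simp [hTS]⟩
      obtain ⟨q, hq, a, ha, r, hr, b, hb, rfl, hab⟩ := rep T hT
      by_cases hqp : p = q
      · subst hqp; exact ⟨a, ha, by simp⟩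
      by_cases hrp : p = r
      · subst hrp; exact ⟨b, hb, by simp⟩
      exfalso
      by_cases hqr : q = r
      · subst hqr
        refine no_cross_of_same_side ?_ (hF2 _ hS _ hT (Ne.symm hTS))
        have a1 := H2 p hp q hq hqp i hi j hj a ha hij
        have a2 := H2 p hp q hq hqp i hi j hj b hb hij
        have a3 := mul_pos a1 a2
        refine pos_of_mul_pos_left (b := (((j : ℝ) - i) * (lin s q - lin s p)) ^ 2) ?_ (by positivity)
        refine a3.trans_eq ?_
        ring
      · refine no_cross_of_same_side ?_ (hF2 _ hT _ hS hTS)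
        have a1 := H1 q hq r hr p hp hqr (Ne.symm hqp) (Ne.symm hrp) a ha b hb i hi
        have a2 := H1 q hq r hr p hp hqr (Ne.symm hqp) (Ne.symm hrp) a ha b hb j hj
        have a3 := mul_pos a1 a2
        refine pos_of_mul_pos_left (b := (det2 q r p) ^ 2) ?_ (by positivity)
        refine a3.trans_eq ?_
        ring
    have hcard : F.card ≤ k := by
      have key' : ∀ T, ∃ l, T ∈ F → l < k ∧ clu s ε p l ∈ T := by
        intro T
        by_cases hT : T ∈ F
        · obtain ⟨l, hl⟩ := key T hT
          exact ⟨l, fun _ => hl⟩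
        · exact ⟨0, fun h => absurd h hT⟩
      choose g hg using key'
      have := Finset.card_le_card_of_injOn (s := F) (t := Finset.range k) g
        (fun T hT => by simpa using (hg T hT).1)
        (fun T hT U hU hTU => by
          refine disj T hT U hU _ (hg T hT).2 ?_
          rw [hTU]; exact (hg U hU).2)
      simpa using this
    nlinarith
  · have rep2 : ∀ S, ∃ p i q j, S ∈ F → p ∈ P ∧ i < k ∧ q ∈ P ∧ j < k ∧
        S = s(clu s ε p i, clu s ε q j) ∧ lin s p < lin s q := by
      intro S
      by_cases hS : S ∈ F
      · obtain ⟨p, hp, i, hi, q, hq, j, hj, hSe, hne⟩ := rep S hS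
        by_cases hpq : p = q
        · subst hpq
          exact absurd ⟨S, hS, p, hp, i, hi, j, hj, hne rfl, hSe⟩ hInternal
        rcases lt_or_gt_of_ne (hs p hp q hq hpq) with hlt | hlt
        · exact ⟨p, i, q, j, fun _ => ⟨hp, hi, hq, hj, hSe, hlt⟩⟩
        · exact ⟨q, j, p, i, fun _ => ⟨hq, hj, hp, hi, by rw [hSe, Sym2.eq_swap], hlt⟩⟩
      · exact ⟨0, 0, 0, 0, fun h => absurd h hS⟩
    choose a α b β hab using rep2
    by_contra hcon
    have memA : ∀ S ∈ F, clu s ε (a S) (α S) ∈ S := by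
      intro S hS
      obtain ⟨_, _, _, _, h5, _⟩ := hab S hS
      have h6 := Sym2.mem_mk_left (clu s ε (a S) (α S)) (clu s ε (b S) (β S))
      rwa [← h5] at h6
    have memB : ∀ S ∈ F, clu s ε (b S) (β S) ∈ S := by
      intro S hS
      obtain ⟨_, _, _, _, h5, _⟩ := hab S hS
      have h6 := Sym2.mem_mk_right (clu s ε (a S) (α S)) (clu s ε (b S) (β S))
      rwa [← h5] at h6
    obtain ⟨M, hMF, hMc, hMa, hMb⟩ := exists_matching F a b k f
      (by
        intro x
        have := Finset.card_le_card_of_injOn (s := F.filter (fun S => a S = x))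
          (t := Finset.range k) α
          (fun T hT => by
            have hT := Finset.mem_filter.1 hT
            simpa using (hab T hT.1).2.1)
          (fun T hT U hU hTU => by
            have hT := Finset.mem_filter.1 hT
            have hU := Finset.mem_filter.1 hU
            refine disj T hT.1 U hU.1 _ (memA T hT.1) ?_
            rw [hTU, hT.2, ← hU.2]; exact memA U hU.1)
        simpa using this)
      (by
        intro x
        have := Finset.card_le_card_of_injOn (s := F.filter (fun S => b S = x))
          (t := Finset.range k) β
          (fun T hT => by
            have hT := Finset.mem_filter.1 hT
            simpa using (hab T hT.1).2.2.2.1)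
          (fun T hT U hU hTU => by
            have hT := Finset.mem_filter.1 hT
            have hU := Finset.mem_filter.1 hU
            refine disj T hT.1 U hU.1 _ (memB T hT.1) ?_
            rw [hTU, hT.2, ← hU.2]; exact memB U hU.1)
        simpa using this)
      (by omega)
    -- left endpoints are never right endpoints
    have nab : ∀ S ∈ F, ∀ T ∈ F, a S ≠ b T := by
      intro S hS T hT heq
      obtain ⟨h1, h2, h3, h4, h5, h6⟩ := hab S hS
      obtain ⟨g1, g2, g3, g4, g5, g6⟩ := hab T hT
      have hST : S ≠ T := by
        rintro rfl; rw [heq] at h6; exact lt_irrefl _ h6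
      have hne : α S ≠ β T := by
        intro hi
        refine hST (disj S hS T hT _ (memA S hS) ?_)
        rw [heq, hi]; exact memB T hT
      have hcr := hF2 S hS T hT hST
      rw [h5, g5, Sym2.eq_swap (a := clu s ε (a T) (α T))] at hcr
      refine no_cross_of_sep ?_ hcr
      rw [← heq] at g6 ⊢
      have hd : a S ≠ b S := by intro h; rw [h] at h6; exact lt_irrefl _ h6
      have hd' : a S ≠ a T := by intro h; rw [h] at g6; exact lt_irrefl _ g6
      have k1 := H2 _ h1 _ h3 hd _ h2 _ g4 _ h4 hne
      have k2 := H2 _ h1 _ g1 hd' _ h2 _ g4 _ g2 hne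
      have k3 := mul_pos k1 k2
      have k4 : (lin s (b S) - lin s (a S)) * (lin s (a T) - lin s (a S)) < 0 :=
        mul_neg_of_pos_of_neg (by linarith) (by linarith)
      by_contra hge
      push Not at hge
      have k5 := mul_nonneg hge (sq_nonneg ((β T : ℝ) - α S))
      have k6 := mul_nonpos_of_nonneg_of_nonpos k5 k4.le
      refine absurd k3 (not_lt.2 (le_trans (le_of_eq ?_) k6))
      ring
    have hinj : Set.InjOn (fun S => s(a S, b S)) (M : Set (Sym2 Pt)) := by
      intro S hS T hT hST
      simp only [Sym2.eq_iff] at hST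
      rcases hST with ⟨h1, _⟩ | ⟨h1, _⟩
      · exact hMa hS hT h1
      · exact absurd h1 (nab S (hMF hS) T (hMF hT))
    have hfin := hmax (M.image (fun S => s(a S, b S))) (by
      constructor
      · intro S' hS'
        obtain ⟨S, hS, rfl⟩ := Finset.mem_image.1 hS'
        obtain ⟨h1, h2, h3, h4, h5, h6⟩ := hab S (hMF hS)
        refine ⟨?_, ?_⟩
        · simpa using nab S (hMF hS) S (hMF hS)
        · intro x hx
          rcases Sym2.mem_iff.1 hx with rfl | rfl
          · exact h1
          · exact h3
      · intro S' hS' T' hT' hne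
        obtain ⟨S, hS, rfl⟩ := Finset.mem_image.1 hS'
        obtain ⟨T, hT, rfl⟩ := Finset.mem_image.1 hT'
        have hST : S ≠ T := by rintro rfl; exact hne rfl
        obtain ⟨h1, h2, h3, h4, h5, h6⟩ := hab S (hMF hS)
        obtain ⟨g1, g2, g3, g4, g5, g6⟩ := hab T (hMF hT)
        have n1 : a S ≠ a T := fun h => hST (hMa hS hT h)
        have n2 : b S ≠ b T := fun h => hST (hMb hS hT h)
        have n3 := nab S (hMF hS) S (hMF hS)
        have n4 := nab S (hMF hS) T (hMF hT)
        have n5 := nab T (hMF hT) S (hMF hS)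
        have n6 := nab T (hMF hT) T (hMF hT)
        have hcr := hF2 S (hMF hS) T (hMF hT) hST
        have hcr' := hF2 T (hMF hT) S (hMF hS) (Ne.symm hST)
        rw [h5, g5] at hcr hcr'
        have main : ∀ x y z w : ℝ, 0 < x * y → 0 < z * w → ¬ 0 < x * z → y * w < 0 := by
          intro x y z w k1 k2 k3
          have k4 := mul_pos k1 k2
          by_contra k5
          push Not at k3 k5
          have := mul_nonpos_of_nonpos_of_nonneg k3 k5
          nlinarith
        exact cross_of_det (a := a S) (b := b S) (c := a T) (d := b T)
          (main _ _ _ _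
            (H1 _ h1 _ h3 _ g1 n3 n1 (Ne.symm n5) _ h2 _ h4 _ g2)
            (H1 _ h1 _ h3 _ g3 n3 n4 n2 _ h2 _ h4 _ g4)
            (fun hh => no_cross_of_same_side hh hcr))
          (main _ _ _ _
            (H1 _ g1 _ g3 _ h1 n6 (Ne.symm n1) (Ne.symm n4) _ g2 _ g4 _ h2)
            (H1 _ g1 _ g3 _ h3 n6 n5 (Ne.symm n2) _ g2 _ g4 _ h4)
            (fun hh => no_cross_of_same_side hh hcr')))
    rw [Finset.card_image_of_injOn hinj] at hfin
    omega
end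

section
/- Let k ≥ 1 and let π_1, …, π_k be a sequence of linear orders on a set E of k elements that reverses each pair at most once. For each i ∈ {1,…,k}, let d_i be the element in position i of π_i (the i-th smallest element with respect to π_i). If d_1, …, d_k are pairwise distinct, then for every j ∈ {1,…,k} and every i ∈ {1,…,k} with i ≠ j, the element d_i precedes d_j in the order π_j if and only if i < j. -/
/-- A linear order on `E` presented as an arrangement: the equiv sends the position
(an element of `Fin k`) to the element of `E` occupying that position.
`Before σ x y` means `x` precedes `y` in the order `σ`. -/
def Before {k : ℕ} {E : Type*} (σ : Fin k ≃ E) (x y : E) : Prop :=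
  σ.symm x < σ.symm y

/-- A sequence of linear orders on `E` reverses each pair at most once: for distinct
`x, y` there are no indices `i < j < m` with `x` before `y` at `i`, `y` before `x` at `j`,
and `x` before `y` again at `m`. -/
def ReversesAtMostOnce {l k : ℕ} {E : Type*} (σ : Fin l → (Fin k ≃ E)) : Prop :=
  ∀ x y : E, x ≠ y →
    ¬ ∃ i j m : Fin l, i < j ∧ j < m ∧
        Before (σ i) x y ∧ Before (σ j) y x ∧ Before (σ m) x y

theorem diagonal_structure
    (k : ℕ) (hk : 1 ≤ k) (E : Type) (σ : Fin k → (Fin k ≃ E))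
    (hrev : ReversesAtMostOnce σ)
    (hdistinct : Function.Injective (fun i : Fin k => σ i i)) :
    ∀ j i : Fin k, i ≠ j → (Before (σ j) (σ i i) (σ j j) ↔ i < j) := by
  classical
  let S : Fin k → Finset (Fin k) := fun j =>
    Finset.univ.filter (fun i => (σ j).symm (σ i i) < j)
  have memS : ∀ j i, i ∈ S j ↔ (σ j).symm (σ i i) < j := by
    intro j i; simp [S]
  have hcard : ∀ j, (S j).card = (Finset.Iio j).card := by
    intro j
    have hinj : Function.Injective (fun i : Fin k => (σ j).symm (σ i i)) :=
      fun a b h => hdistinct ((σ j).symm.injective h)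
    have hsurj := Finite.surjective_of_injective hinj
    have : (S j).image (fun i : Fin k => (σ j).symm (σ i i)) = Finset.Iio j := by
      ext p
      obtain ⟨i, rfl⟩ := hsurj p
      simp only [Finset.mem_image, Finset.mem_Iio, memS]
      constructor
      · rintro ⟨a, ha, hab⟩
        rwa [← hab]
      · intro h
        exact ⟨i, h, rfl⟩
    rw [← this, Finset.card_image_of_injective _ hinj]
  have h1 : ∀ j, (∀ i, i < j → i ∈ S j) → ∀ m, m ∈ S j → m < j := by
    intro j h m hm
    have hsub : Finset.Iio j ⊆ S j := fun i hi => h i (Finset.mem_Iio.mp hi)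
    have := Finset.eq_of_subset_of_card_le hsub (hcard j).le
    exact Finset.mem_Iio.mp (this ▸ hm)
  have h2 : ∀ j i, i < j → i ∉ S j → ∃ m, j < m ∧ m ∈ S j := by
    intro j i hij hi
    by_contra hcon
    have hsub : S j ⊆ Finset.Iio j := by
      intro m hm
      rw [Finset.mem_Iio]
      by_contra hmj
      rcases lt_or_eq_of_le (not_lt.mp hmj) with h | h
      · exact hcon ⟨m, h, hm⟩
      · subst h
        simp [memS] at hm
    have := Finset.eq_of_subset_of_card_le hsub (hcard j).ge
    exact hi (this ▸ Finset.mem_Iio.mpr hij)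
  -- main induction: `d_j` precedes `d_m` in `π_m` whenever `j < m`
  have key : ∀ n : ℕ, ∀ j : Fin k, j.val = n → ∀ m, j < m → j ∈ S m := by
    intro n
    induction n using Nat.strong_induction_on with
    | _ n ih =>
      intro j hjn
      have ha : ∀ m, m ∈ S j → m < j :=
        h1 j (fun i hi => ih i.val (hjn ▸ hi) i rfl j hi)
      have step : ∀ m, j < m → j ∉ S m → ∃ m', m < m' ∧ j ∉ S m' := by
        intro m hjm hm
        obtain ⟨m', hmm', hm'⟩ := h2 m j hjm hm
        refine ⟨m', hmm', fun hjm' => ?_⟩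
        have hne : j ≠ m' := (hjm.trans hmm').ne
        have hned : σ j j ≠ σ m' m' := fun h => hne (hdistinct h)
        refine hrev _ _ hned ⟨j, m, m', hjm, hmm', ?_, ?_, ?_⟩
        · have h3 : ¬ (σ j).symm (σ m' m') < j := fun h =>
            absurd (ha m' ((memS _ _).mpr h)) (hjm.trans hmm').not_gt
          have h4 : (σ j).symm (σ m' m') ≠ j := fun h =>
            hned ((Equiv.symm_apply_eq _).mp h).symm
          simp only [Before, Equiv.symm_apply_apply]
          exact lt_of_le_of_ne (not_lt.mp h3) h4.symm
        · rw [memS] at hm hm'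
          exact lt_of_lt_of_le hm' (not_lt.mp hm)
        · rw [memS] at hjm'
          simpa [Before] using hjm'
      have climb : ∀ t : ℕ, ∀ m : Fin k, k - m.val = t → j < m → j ∈ S m := by
        intro t
        induction t using Nat.strong_induction_on with
        | _ t iht =>
          intro m hmt hjm
          by_contra hm
          obtain ⟨m', hmm', hm'⟩ := step m hjm hm
          have hlt : m.val < m'.val := hmm'
          exact hm' (iht (k - m'.val) (by omega) m' rfl (hjm.trans hmm'))
      exact fun m hm => climb _ m rfl hm
  intro j i hij
  have hB : Before (σ j) (σ i i) (σ j j) ↔ i ∈ S j := by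
    rw [memS]; simp [Before]
  rw [hB]
  exact ⟨h1 j (fun a h => key _ a rfl j h) i, key _ i rfl j⟩
end

section
/- Let n ≥ 2 and let π_1, …, π_{C(n,2)+1} be a simple allowable sequence of permutations of {1, …, n}. Then there exist indices 1 ≤ s_1 < s_2 < … < s_{n-1} ≤ C(n,2)+1 such that, letting ρ_i denote the linear order on {2, …, n} obtained by restricting π_{s_i} to {2, …, n}, the diagonal entries d_1, …, d_{n-1}, where d_i is the element in position i of ρ_i, are pairwise distinct. -/
/-- A simple allowable sequence of permutations of `Fin n` (as linear orders, written as
position-to-element equivs): it starts with the identity order, each order is obtained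
from the previous one by transposing one pair of adjacent elements, and every pair of
elements reverses its relative order exactly once. -/
def SimpleAllowable (n : ℕ) (σ : Fin (n.choose 2 + 1) → (Fin n ≃ Fin n)) : Prop :=
  σ 0 = Equiv.refl (Fin n) ∧
  (∀ t : Fin (n.choose 2), ∃ a b : Fin n, (a : ℕ) + 1 = (b : ℕ) ∧
      σ t.succ = (Equiv.swap a b).trans (σ t.castSucc)) ∧
  (∀ x y : Fin n, x ≠ y →
      ∃! t : Fin (n.choose 2),
        ¬ (Before (σ t.castSucc) x y ↔ Before (σ t.succ) x y))

theorem not_last_of_unique_change (N : ℕ) (f : Fin (N + 1) → Prop) (h0 : f 0)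
    (h : ∃! t : Fin N, ¬ (f t.castSucc ↔ f t.succ)) : ¬ f (Fin.last N) := by
  obtain ⟨t0, ht0, hu⟩ := h
  have key : ∀ t : Fin (N + 1), f t ↔ t ≤ t0.castSucc := by
    intro t
    induction t using Fin.induction with
    | zero => simp [h0]
    | succ t ih =>
      by_cases ht : t = t0
      · subst ht
        have h1 : f t.castSucc := ih.2 le_rfl
        have h2 : ¬ t.succ ≤ t.castSucc := by simp [Fin.le_def]
        tauto
      · have h1 : f t.castSucc ↔ f t.succ := by
          by_contra hc
          exact ht (hu t hc)
        rw [← h1, ih]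
        have : (t : ℕ) ≠ t0 := fun h => ht (Fin.ext h)
        simp only [Fin.le_def, Fin.val_castSucc, Fin.val_succ]
        omega
  rw [key]
  simp only [Fin.le_def, Fin.val_last, Fin.val_castSucc]
  have := t0.2
  omega

/-- In a simple allowable sequence on `{1, …, n}` (element `1` being `(0 : Fin n)`), there
are indices `s 0 < s 1 < … < s (n-2)` such that in the suborders obtained by deleting the
element `1`, the diagonal entries `d i` (the element in position `i` of the restriction of
the `s i`-th order) are pairwise distinct. -/
theorem simpleAllowable_exists_distinct_diagonal
    (n : ℕ) (hn : 2 ≤ n)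
    (σ : Fin (n.choose 2 + 1) → (Fin n ≃ Fin n))
    (hσ : SimpleAllowable n σ) :
    ∃ s : Fin (n - 1) → Fin (n.choose 2 + 1), StrictMono s ∧
      ∃ d : Fin (n - 1) → Fin n, Function.Injective d ∧
        ∀ i : Fin (n - 1),
          d i ≠ ⟨0, by omega⟩ ∧
          Nat.card {y : Fin n // y ≠ ⟨0, by omega⟩ ∧ Before (σ (s i)) y (d i)} = (i : ℕ) := by
  obtain ⟨h0, hstep, hrev⟩ := hσ
  set z : Fin n := ⟨0, by omega⟩ with hz
  set p : Fin (n.choose 2 + 1) → Fin n := fun t => (σ t).symm z with hp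
  have hp0 : p 0 = z := by simp [hp, h0]
  have hpl : ((p (Fin.last _) : Fin n) : ℕ) = n - 1 := by
    by_contra hne
    set x : Fin n := σ (Fin.last _) ⟨n - 1, by omega⟩ with hx
    have hxs : (σ (Fin.last _)).symm x = ⟨n - 1, by omega⟩ := by simp [hx]
    have hxz : z ≠ x := by
      intro h
      apply hne
      simp only [hp]
      rw [h, hxs]
    have := not_last_of_unique_change _ (fun t => Before (σ t) z x)
      (by
        have : (x : ℕ) ≠ 0 := fun h => hxz (Fin.ext (by simp [hz, h]))
        simp only [Before, h0, Equiv.refl_symm, Equiv.refl_apply, Fin.lt_def, hz]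
        omega)
      (hrev z x hxz)
    apply this
    simp only [Before, hxs, Fin.lt_def]
    have := (p (Fin.last _)).2
    simp only [hp] at this hne
    omega
  -- the last moment at which element `1` is in position at most `i`
  have hex : ∀ i : Fin (n - 1), ∃ t : Fin (n.choose 2),
      (p t.castSucc : ℕ) = i ∧ (p t.succ : ℕ) = i + 1 ∧ 
        ∀ u, (p u : ℕ) ≤ i → u ≤ t.castSucc := by
    intro i
    obtain ⟨t, ht, hmax⟩ := Finset.exists_max_image
      (Finset.univ.filter fun t => (p t : ℕ) ≤ i) id ⟨0, by simp [hp0, hz]⟩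
    simp only [Finset.mem_filter, Finset.mem_univ, true_and, id] at ht hmax
    have hi := i.2
    induction t using Fin.lastCases with
    | last => omega
    | cast t =>
      have h1 : ¬ ((p t.succ : ℕ) ≤ i) := by
        intro h
        have := hmax _ h
        simp [Fin.le_def] at this
      obtain ⟨a, b, hab, hs⟩ := hstep t
      have h2 : p t.succ = Equiv.swap a b (p t.castSucc) := by
        simp only [hp, hs]
        simp [Equiv.symm_trans_apply]
      have h3 : (p t.succ : ℕ) ≤ p t.castSucc + 1 := by
        rw [h2, Equiv.swap_apply_def]
        split_ifs with h h' <;> simp_all <;> omega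
      exact ⟨t, by omega, by omega, hmax⟩
  choose t ht1 ht2 htmax using hex
  have hin : ∀ i : Fin (n - 1), (i : ℕ) + 1 < n := fun i => by have := i.2; omega
  refine ⟨fun i => (t i).castSucc, ?_, fun i => σ (t i).castSucc ⟨i + 1, hin i⟩, ?_, ?_⟩
  · intro i j hij
    have hij' : (i : ℕ) < j := hij
    refine lt_of_le_of_ne (htmax j _ (by rw [ht1]; omega)) ?_
    intro h
    have h1 := ht1 i
    have h2 := ht1 j
    simp only at h
    rw [h] at h1
    omega
  · have hd : ∀ i, z ≠ σ (t i).castSucc ⟨i + 1, hin i⟩ ∧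
        ¬ (Before (σ (t i).castSucc) z (σ (t i).castSucc ⟨i + 1, hin i⟩) ↔
          Before (σ (t i).succ) z (σ (t i).castSucc ⟨i + 1, hin i⟩)) := by
      intro i
      have h1 := ht1 i
      have h2 := ht2 i
      constructor
      · intro h
        have : p (t i).castSucc = ⟨i + 1, hin i⟩ := by
          simp only [hp]; rw [Equiv.symm_apply_eq]; exact h
        rw [this] at h1
        simp at h1
      · obtain ⟨a, b, hab, hs⟩ := hstep (t i)
        have h3 : p (t i).succ = Equiv.swap a b (p (t i).castSucc) := by
          simp only [hp, hs]
          simp [Equiv.symm_trans_apply]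
        have h4 : (σ (t i).succ).symm (σ (t i).castSucc ⟨i + 1, hin i⟩) =
            Equiv.swap a b ⟨i + 1, hin i⟩ := by
          rw [hs]; simp [Equiv.symm_trans_apply]
        have ha : p (t i).castSucc = a ∧ b = ⟨i + 1, hin i⟩ := by
          rw [Equiv.swap_apply_def] at h3
          split_ifs at h3 with h h'
          · refine ⟨h, Fin.ext ?_⟩
            rw [h] at h1
            simp only
            omega
          · rw [h3] at h2
            rw [h'] at h1
            omega
          · rw [h3] at h2; omega
        rw [← ha.2, Equiv.swap_apply_right] at h4
        have h5 : p (t i).succ = b := by rw [h3, ha.1, Equiv.swap_apply_left]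
        have h6 := ha.1
        simp only [hp] at h5 h6
        rw [← ha.2]
        simp only [Before, h4, h5, h6, Equiv.symm_apply_apply, Fin.lt_def]
        omega
    intro i j hij
    simp only at hij
    have hi := hd i
    have hj := hd j
    rw [← hij] at hj
    have := (hrev _ _ hi.1).unique hi.2 hj.2
    have h1 := ht1 i
    have h2 := ht1 j
    rw [this] at h1
    exact Fin.ext (by omega)
  · intro i
    have h1 := ht1 i
    constructor
    · intro h
      have : p (t i).castSucc = ⟨i + 1, hin i⟩ := by
        simp only [hp]; rw [Equiv.symm_apply_eq]; exact h.symm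
      rw [this] at h1
      simp at h1
    · have hc : Nat.card {y : Fin n // y ≠ z ∧
          Before (σ (t i).castSucc) y (σ (t i).castSucc ⟨i + 1, hin i⟩)} =
          Nat.card {w : Fin n // w < p (t i).castSucc} := by
        refine Nat.card_congr ((σ (t i).castSucc).symm.subtypeEquiv ?_)
        intro y
        have h2 : y ≠ z ↔ (((σ (t i).castSucc).symm y : Fin n) : ℕ) ≠ p (t i).castSucc := by
          rw [not_iff_not, Fin.val_inj]
          simp [hp]
        rw [h2]
        simp only [Before, Equiv.symm_apply_apply, Fin.lt_def]
        omega
      simp only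
      rw [hc, Nat.card_eq_fintype_card, Fintype.card_subtype]
      have : (Finset.univ.filter fun w => w < p (t i).castSucc) =
          Finset.Iio (p (t i).castSucc) := by ext; simp
      rw [this, Fin.card_Iio, h1]
end

section
/- For every integer n ≥ 4 there exists a sequence Π_1, …, Π_l of permutations of {1, …, n} with l = ⌊n/2⌋² + n − 1 such that: Π_1 is the identity permutation; for each i < l, Π_{i+1} either equals Π_i or is obtained from Π_i by exchanging the positions of exactly one pair of elements; every pair of elements reverses its relative order at most once along the sequence; and for every choice of indices 1 ≤ s_1 < s_2 < … < s_n ≤ l, the n entries d_1, …, d_n, where d_i is the element in position i of Π_{s_i}, are not pairwise distinct. -/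
/-- The time from which the positions `a` and `n - 1 - a` carry exchanged elements. -/
def swTime (n a : ℕ) : ℕ := n / 2 + (n / 2 - min a (n - 1 - a)) * (n / 2 - min a (n - 1 - a) - 1)

theorem swTime_anti {n a b : ℕ} (h : min a (n - 1 - a) ≤ min b (n - 1 - b)) :
    swTime n b ≤ swTime n a := by
  unfold swTime
  gcongr

theorem swTime_rev {n : ℕ} (i : Fin n) : swTime n i.rev.val = swTime n i.val := by
  have hi := i.isLt
  have : min (i.rev.val) (n - 1 - i.rev.val) = min i.val (n - 1 - i.val) := by
    rw [Fin.val_rev]; omega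
  unfold swTime
  rw [this]

/-- The arrangement at time `t`. -/
def arrFun (n t : ℕ) (i : Fin n) : Fin n := if swTime n i.val ≤ t then i.rev else i

theorem arrFun_invol (n t : ℕ) : Function.Involutive (arrFun n t) := by
  intro i
  by_cases h : swTime n i.val ≤ t
  · have h2 : swTime n i.rev.val ≤ t := by rw [swTime_rev]; exact h
    have h3 : arrFun n t i = i.rev := if_pos h
    rw [h3]
    unfold arrFun
    rw [if_pos h2, Fin.rev_rev]
  · have h3 : arrFun n t i = i := if_neg h
    rw [h3, h3]

/-- The arrangement at time `t` as an equivalence. -/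
def arr (n t : ℕ) : Fin n ≃ Fin n := (arrFun_invol n t).toPerm

theorem arr_apply (n t : ℕ) (i : Fin n) :
    arr n t i = if swTime n i.val ≤ t then i.rev else i := rfl

theorem arr_symm_apply (n t : ℕ) (i : Fin n) :
    (arr n t).symm i = if swTime n i.val ≤ t then i.rev else i := rfl

theorem swapped_of_inverted {n t : ℕ} {x y : Fin n} (hxy : x < y)
    (h : Before (arr n t) y x) : swTime n x.val ≤ t ∧ swTime n y.val ≤ t := by
  unfold Before at h
  rw [arr_symm_apply, arr_symm_apply] at h
  have hx := x.isLt
  have hy := y.isLt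
  rw [Fin.lt_def] at hxy
  split_ifs at h with h1 h2 h2
  · exact ⟨h2, h1⟩
  · exfalso
    rw [Fin.lt_def, Fin.val_rev] at h
    exact h2 ((swTime_anti (by omega)).trans h1)
  · exfalso
    rw [Fin.lt_def, Fin.val_rev] at h
    exact h1 ((swTime_anti (by omega)).trans h2)
  · exfalso
    rw [Fin.lt_def] at h
    omega

theorem inverted_of_swapped {n t : ℕ} {x y : Fin n} (hxy : x < y)
    (hx : swTime n x.val ≤ t) (hy : swTime n y.val ≤ t) : Before (arr n t) y x := by
  unfold Before
  rw [arr_symm_apply, arr_symm_apply, if_pos hx, if_pos hy]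
  exact Fin.rev_lt_rev.mpr hxy

theorem inverted_mono {n t u : ℕ} {x y : Fin n} (hxy : x < y) (htu : t ≤ u)
    (h : Before (arr n t) y x) : Before (arr n u) y x := by
  obtain ⟨h1, h2⟩ := swapped_of_inverted hxy h
  exact inverted_of_swapped hxy (h1.trans htu) (h2.trans htu)

theorem before_asymm {n : ℕ} {σ : Fin n ≃ Fin n} {x y : Fin n} (h : Before σ x y)
    (h' : Before σ y x) : False := lt_asymm h h'

/-- On the lower half the switching times are strictly antitone. -/
theorem swTime_inj {n a b : ℕ} (ha : a < n / 2) (hb : b < a) :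
    swTime n a < swTime n b := by
  unfold swTime
  have h1 : min a (n - 1 - a) = a := by omega
  have h2 : min b (n - 1 - b) = b := by omega
  rw [h1, h2]
  obtain ⟨k, hk⟩ : ∃ k, n / 2 - a = k + 1 := ⟨n / 2 - a - 1, by omega⟩
  obtain ⟨j, hj⟩ : ∃ j, n / 2 - b = k + 1 + (j + 1) := ⟨a - b - 1, by omega⟩
  rw [hk, hj]
  have : k + 1 + (j + 1) - 1 = k + 1 + j := by omega
  rw [this, Nat.add_sub_cancel]
  nlinarith

theorem arr_step (n t : ℕ) : arr n (t + 1) = arr n t ∨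
    ∃ x y : Fin n, x ≠ y ∧ arr n (t + 1) = (arr n t).trans (Equiv.swap x y) := by
  by_cases h : ∃ a : Fin n, a.val < n / 2 ∧ swTime n a.val = t + 1
  · right
    obtain ⟨a, ha, hat⟩ := h
    have hne : a ≠ a.rev := by
      intro he
      have := congrArg Fin.val he
      rw [Fin.val_rev] at this
      omega
    refine ⟨a, a.rev, hne, ?_⟩
    ext1 i
    rw [Equiv.trans_apply, arr_apply, arr_apply]
    by_cases hia : i = a
    · subst hia
      rw [if_pos (by omega), if_neg (by omega), Equiv.swap_apply_left]
    · by_cases hir : i = a.rev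
      · subst hir
        rw [swTime_rev, if_pos (by omega), if_neg (by omega), Equiv.swap_apply_right, Fin.rev_rev]
      · have hri : i.rev ≠ a := fun h => hir (by rw [← h, Fin.rev_rev])
        have hrr : i.rev ≠ a.rev := fun h => hia (Fin.rev_injective h)
        by_cases h1 : swTime n i.val ≤ t
        · rw [if_pos (by omega), if_pos h1, Equiv.swap_apply_of_ne_of_ne hri hrr]
        · rw [if_neg h1, Equiv.swap_apply_of_ne_of_ne hia hir]
          split_ifs with h2
          · have h3 : swTime n i.val = t + 1 := by omega
            have hi := i.isLt
            -- the folded index of `i`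
            rcases lt_or_ge i.val (n / 2) with hl | hl
            · exfalso
              rcases lt_trichotomy i.val a.val with hh | hh | hh
              · have := swTime_inj ha hh; omega
              · exact hia (Fin.ext hh)
              · have := swTime_inj hl hh; omega
            · rcases lt_or_ge i.rev.val (n / 2) with hl' | hl'
              · exfalso
                rw [← swTime_rev] at h3
                rcases lt_trichotomy i.rev.val a.val with hh | hh | hh
                · have := swTime_inj ha hh; omega
                · exact hri (Fin.ext hh)
                · have := swTime_inj hl' hh; omega
              · apply Fin.ext
                rw [Fin.val_rev] at hl' ⊢
                omega
          · rfl
  · left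
    ext1 i
    rw [arr_apply, arr_apply]
    have hi := i.isLt
    by_cases h1 : swTime n i.val ≤ t
    · rw [if_pos h1, if_pos (by omega)]
    · rw [if_neg h1]
      split_ifs with h2
      · have h3 : swTime n i.val = t + 1 := by omega
        rcases lt_or_ge i.val (n / 2) with hl | hl
        · exact absurd ⟨i, hl, h3⟩ h
        · rcases lt_or_ge i.rev.val (n / 2) with hl' | hl'
          · exact absurd ⟨i.rev, hl', by rw [swTime_rev]; exact h3⟩ h
          · apply Fin.ext
            rw [Fin.val_rev] at hl' ⊢
            omega
      · rfl

theorem strictMono_gap {n : ℕ} {s : Fin n → ℕ} (hs : StrictMono s) (d : ℕ) :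
    ∀ i j : Fin n, i.val + d = j.val → s i + d ≤ s j := by
  induction d with
  | zero =>
    intro i j h
    have : i = j := Fin.ext (by omega)
    rw [this]; omega
  | succ d ih =>
    intro i j h
    have hj := j.isLt
    have h1 := ih i ⟨i.val + d, by omega⟩ rfl
    have h2 : s ⟨i.val + d, by omega⟩ < s j := hs (by rw [Fin.lt_def]; simp only; omega)
    omega

/-- Injectivity forces mirror positions to be sampled on the same side of the switch. -/
theorem same_side {n : ℕ} {s : Fin n → ℕ}
    (hinj : Function.Injective (fun i : Fin n => arr n (s i) i)) (i : Fin n)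
    (hi : i.val < n / 2) (h : s i < swTime n i.val) : s i.rev < swTime n i.val := by
  by_contra hc
  have hne : i ≠ i.rev := by
    intro he
    have := congrArg Fin.val he
    rw [Fin.val_rev] at this
    omega
  apply hne
  apply hinj
  show arr n (s i) i = arr n (s i.rev) i.rev
  rw [arr_apply, arr_apply, swTime_rev, if_neg (by omega), if_pos (by omega), Fin.rev_rev]

theorem late_bound {n : ℕ} (hn : 4 ≤ n) {s : Fin n → ℕ} (hs : StrictMono s)
    (hb : ∀ i, s i < (n / 2) ^ 2 + n - 1)
    (hinj : Function.Injective (fun i : Fin n => arr n (s i) i)) (a : ℕ) :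
    ∀ ha : a < n / 2, s (Fin.rev ⟨a, by omega⟩) < swTime n a := by
  induction a with
  | zero =>
    intro ha
    refine same_side hinj ⟨0, by omega⟩ ha ?_
    have h1 := strictMono_gap hs (n - 1) ⟨0, by omega⟩ ⟨n - 1, by omega⟩ (by simp)
    have h2 := hb ⟨n - 1, by omega⟩
    have h3 : swTime n 0 = (n / 2) ^ 2 := by
      unfold swTime
      rw [Nat.zero_min, Nat.sub_zero]
      obtain ⟨k, hk⟩ : ∃ k, n / 2 = k + 1 := ⟨n / 2 - 1, by omega⟩
      rw [hk, Nat.add_sub_cancel]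
      ring
    simp only [h3]
    omega
  | succ a ih =>
    intro ha
    have h0 := ih (by omega)
    refine same_side hinj ⟨a + 1, by omega⟩ ha ?_
    have h1 := strictMono_gap hs (n - 1 - 2 * (a + 1)) ⟨a + 1, by omega⟩
      (Fin.rev ⟨a + 1, by omega⟩) (by rw [Fin.val_rev]; simp only; omega)
    have h2 := strictMono_gap hs 1 (Fin.rev ⟨a + 1, by omega⟩)
      (Fin.rev ⟨a, by omega⟩) (by rw [Fin.val_rev, Fin.val_rev]; simp only; omega)
    have h3 : swTime n a = swTime n (a + 1) + 2 * (n / 2 - (a + 1)) := by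
      unfold swTime
      have e1 : min a (n - 1 - a) = a := by omega
      have e2 : min (a + 1) (n - 1 - (a + 1)) = a + 1 := by omega
      rw [e1, e2]
      obtain ⟨k, hk⟩ : ∃ k, n / 2 = a + 1 + (k + 1) := ⟨n / 2 - a - 2, by omega⟩
      have e3 : n / 2 - a = k + 2 := by omega
      have e4 : n / 2 - (a + 1) = k + 1 := by omega
      rw [e3, e4, Nat.add_sub_cancel]
      have e5 : k + 2 - 1 = k + 1 := rfl
      rw [e5]
      ring
    simp only
    omega

theorem no_transversal {n : ℕ} (hn : 4 ≤ n) {s : Fin n → ℕ} (hs : StrictMono s)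
    (hb : ∀ i, s i < (n / 2) ^ 2 + n - 1) :
    ¬ Function.Injective (fun i : Fin n => arr n (s i) i) := by
  intro hinj
  have h := late_bound hn hs hb hinj (n / 2 - 1) (by omega)
  have h1 := strictMono_gap hs (n - n / 2) ⟨0, by omega⟩ (Fin.rev ⟨n / 2 - 1, by omega⟩)
    (by rw [Fin.val_rev]; simp only; omega)
  have h3 : swTime n (n / 2 - 1) = n / 2 := by
    unfold swTime
    have e1 : min (n / 2 - 1) (n - 1 - (n / 2 - 1)) = n / 2 - 1 := by omega
    have e2 : n / 2 - (n / 2 - 1) = 1 := by omega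
    rw [e1, e2]; omega
  omega

/-- There is a sequence `Π_1, …, Π_l` (here `σ 0, …, σ (l-1)`) of permutations of
`{1, …, n}` with `l = ⌊n/2⌋² + n − 1`, starting at the identity, where each permutation
equals the previous one or is obtained from it by exchanging the positions of exactly one
pair of elements, every pair of elements reverses its relative order at most once, and no
strictly increasing choice of `n` indices yields pairwise distinct diagonal entries. -/
theorem exists_long_sequence_without_distinct_diagonal
    (n : ℕ) (hn : 4 ≤ n) :
    ∃ σ : ℕ → (Fin n ≃ Fin n),
      σ 0 = Equiv.refl (Fin n) ∧
      (∀ i : ℕ, i + 1 < (n / 2) ^ 2 + n - 1 →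
        σ (i + 1) = σ i ∨
          ∃ x y : Fin n, x ≠ y ∧ σ (i + 1) = (σ i).trans (Equiv.swap x y)) ∧
      (∀ x y : Fin n, x ≠ y →
        ¬ ∃ i j m : ℕ, i < j ∧ j < m ∧ m < (n / 2) ^ 2 + n - 1 ∧
            Before (σ i) x y ∧ Before (σ j) y x ∧ Before (σ m) x y) ∧
      (∀ s : Fin n → ℕ, StrictMono s → (∀ i, s i < (n / 2) ^ 2 + n - 1) →
        ¬ Function.Injective (fun i : Fin n => σ (s i) i)) := by
  refine ⟨arr n, ?_, fun i _ => arr_step n i, ?_, fun s hs hb => no_transversal hn hs hb⟩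
  · ext1 i
    rw [arr_apply, if_neg]
    · rfl
    · unfold swTime
      omega
  · rintro x y hxy ⟨i, j, m, hij, hjm, -, h1, h2, h3⟩
    rcases lt_or_gt_of_ne hxy with h | h
    · exact before_asymm h3 (inverted_mono h hjm.le h2)
    · exact before_asymm h2 (inverted_mono h hij.le h1)
end

section
/- Let n be an even positive integer and let l = n(n−1)/2. For every complete bar stack B_{l,n} on n pillars (a bar stack with l bars in which every pair (a,b) with 1 ≤ a < b ≤ n occurs as a bar), there exists a sequence W of n integers from {0, …, l} such that every side compatible subset for W in B_{l,n} has size at most n/2. -/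
/-- A bar stack `B_{l,n}`: a sequence of `l` bars on `n` pillars. The bar at index
`i : Fin l` is said to be at height `i + 1` and is the pair `(left i, right i)` of
pillars with `left i < right i`; no two bars are equal as pairs. -/
structure BarStack (l n : ℕ) where
  left : Fin l → Fin n
  right : Fin l → Fin n
  lt : ∀ i, left i < right i
  nodup : ∀ i j, left i = left j → right i = right j → i = j

/-- `C` is a side compatible subset for the sequence `w` in the bar stack `S`: there is
an injection `g` of `C` into the index set of `w` such that, writing `f c = w (g c)`,
every bar at height `h` both of whose pillars lie in `C` satisfies either
(P1) both `f`-values are `< h`, or (P2) both `f`-values are `≥ h`. -/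
def SideCompat {l n m : ℕ} (S : BarStack l n) (w : Fin m → ℕ) (C : Finset (Fin n)) : Prop :=
  ∃ g : Fin n → Fin m, Set.InjOn g ↑C ∧
    ∀ i : Fin l, S.left i ∈ C → S.right i ∈ C →
      (w (g (S.left i)) < (i : ℕ) + 1 ∧ w (g (S.right i)) < (i : ℕ) + 1) ∨
      ((i : ℕ) + 1 ≤ w (g (S.left i)) ∧ (i : ℕ) + 1 ≤ w (g (S.right i)))

/-- Ordered side compatible subset: as `SideCompat`, with moreover `f (left i) < f (right i)`
in case (P1) and `f (left i) > f (right i)` in case (P2). -/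
def OrderedSideCompat {l n m : ℕ} (S : BarStack l n) (w : Fin m → ℕ) (C : Finset (Fin n)) :
    Prop :=
  ∃ g : Fin n → Fin m, Set.InjOn g ↑C ∧
    ∀ i : Fin l, S.left i ∈ C → S.right i ∈ C →
      (w (g (S.left i)) < (i : ℕ) + 1 ∧ w (g (S.right i)) < (i : ℕ) + 1 ∧
        w (g (S.left i)) < w (g (S.right i))) ∨
      ((i : ℕ) + 1 ≤ w (g (S.left i)) ∧ (i : ℕ) + 1 ≤ w (g (S.right i)) ∧
        w (g (S.right i)) < w (g (S.left i)))

theorem exists_wires_bounding_sideCompat_complete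
    (n : ℕ) (hn : 0 < n) (hev : Even n)
    (S : BarStack (n * (n - 1) / 2) n)
    (hcomplete : ∀ a b : Fin n, a < b → ∃ i, S.left i = a ∧ S.right i = b) :
    ∃ w : Fin n → ℕ, (∀ j, w j ≤ n * (n - 1) / 2) ∧
      ∀ C : Finset (Fin n), SideCompat S w C → C.card ≤ n / 2 := by
  obtain ⟨k, rfl⟩ := hev
  refine ⟨fun j => if (j : ℕ) < k then 0 else (k + k) * (k + k - 1) / 2, ?_, ?_⟩
  · intro j
    dsimp only
    split_ifs <;> omega
  rintro C ⟨g, hg, hbar⟩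
  have hk : (k + k) / 2 = k := by omega
  rw [hk]
  -- all wires used on `C` lie in the same half
  have key : ∀ a ∈ C, ∀ b ∈ C, a < b → (((g a : ℕ) < k) ↔ ((g b : ℕ) < k)) := by
    intro a ha b hb hab
    obtain ⟨i, rfl, rfl⟩ := hcomplete a b hab
    have h := hbar i ha hb
    have hi := i.isLt
    dsimp only at h
    split_ifs at h <;> first | omega | tauto
  have key2 : ∀ a ∈ C, ∀ b ∈ C, (((g a : ℕ) < k) ↔ ((g b : ℕ) < k)) := by
    intro a ha b hb
    rcases lt_trichotomy a b with h | h | h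
    · exact key a ha b hb h
    · rw [h]
    · exact (key b hb a ha h).symm
  have hinj : Set.InjOn (fun c => (g c : ℕ)) (C : Set (Fin (k + k))) := by
    intro a ha b hb h
    exact hg ha hb (Fin.ext h)
  rcases C.eq_empty_or_nonempty with rfl | ⟨c, hc⟩
  · simp
  by_cases h : (g c : ℕ) < k
  · have := Finset.card_le_card_of_injOn (t := Finset.range k) (fun c => (g c : ℕ))
      (fun a ha => by simpa using (key2 a ha c hc).2 h) hinj
    simpa using this
  · have := Finset.card_le_card_of_injOn (t := Finset.Ico k (k + k)) (fun c => (g c : ℕ))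
      (fun a ha => by
        have h1 : ¬ (g a : ℕ) < k := fun h2 => h ((key2 a ha c hc).1 h2)
        have h3 := (g a).isLt
        simp only [Finset.coe_Ico, Set.mem_Ico]
        omega) hinj
    simpa using this
end

section
/- For every positive integer n and every bar stack B_{n,n} (n bars on n pillars), there exists a strictly increasing sequence W = (w_1 < w_2 < … < w_n) of integers from {0, 1, …, n} such that the full set C = {1, …, n} is a side compatible subset for W in B_{n,n}; that is, there is an injection g : {1,…,n} → {1,…,n} such that, writing f(c) = w_{g(c)}, every bar B_i = (a_i, b_i) satisfies either f(a_i) < i and f(b_i) < i, or f(a_i) ≥ i and f(b_i) ≥ i. -/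
/-- Greedy construction: the first `k + 1` pillars, starting with `c`. -/
theorem greedy_aux {n : ℕ} (S : BarStack n n) (m : Fin n) (hm : (m : ℕ) + 2 = n) (c : Fin n)
    (hc : c = S.left m ∨ c = S.right m)
    (hc0 : ∀ i : Fin n, (i : ℕ) = 0 → c ≠ S.left i ∧ c ≠ S.right i) :
    ∀ k : ℕ, k + 1 ≤ n → ∃ l : List (Fin n), l.Nodup ∧ l.length = k + 1 ∧ c ∈ l ∧
      ∀ i : Fin n, (i : ℕ) ≤ k →
        (S.left i ∈ l.take ((i : ℕ) + 1) ↔ S.right i ∈ l.take ((i : ℕ) + 1)) := by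
  intro k
  induction k with
  | zero =>
    intro _
    refine ⟨[c], by simp, by simp, by simp, ?_⟩
    intro i hi
    obtain ⟨h1, h2⟩ := hc0 i (by omega)
    simp [h1.symm, h2.symm]
  | succ k ih =>
    intro hk
    obtain ⟨l, hnd, hlen, hcl, hl⟩ := ih (by omega)
    let j : Fin n := ⟨k + 1, by omega⟩
    have hne : S.left j ≠ S.right j := (S.lt j).ne
    have hcard : l.toFinset.card = k + 1 := by rw [List.toFinset_card_of_nodup hnd, hlen]
    suffices h : ∃ v, v ∉ l ∧ (S.left j ∈ l ++ [v] ↔ S.right j ∈ l ++ [v]) by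
      obtain ⟨v, hv, hvj⟩ := h
      refine ⟨l ++ [v], ?_, by simp [hlen], by simp [hcl], ?_⟩
      · rw [List.nodup_append]
        refine ⟨hnd, by simp, ?_⟩
        intro a ha b hb hab
        simp only [List.mem_singleton] at hb
        exact hv (hb ▸ hab ▸ ha)
      · intro i hi
        by_cases hik : (i : ℕ) ≤ k
        · rw [List.take_append_of_le_length (by omega)]
          exact hl i hik
        · have hij : i = j := Fin.ext (by simp only [j]; omega)
          rw [List.take_of_length_le (by simp; omega), hij]
          exact hvj
    by_cases h1 : S.left j ∈ l
    · by_cases h2 : S.right j ∈ l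
      · have : ∃ v, v ∉ l.toFinset := by
          by_contra! hcon
          have h := congrArg Finset.card (Finset.eq_univ_of_forall hcon)
          rw [hcard, Finset.card_univ, Fintype.card_fin] at h
          omega
        obtain ⟨v, hv⟩ := this
        exact ⟨v, by simpa using hv, by simp [h1, h2]⟩
      · exact ⟨S.right j, h2, by simp [h1]⟩
    · by_cases h2 : S.right j ∈ l
      · exact ⟨S.left j, h1, by simp [h2]⟩
      · have hc2 : (insert (S.left j) (insert (S.right j) l.toFinset)).card = k + 3 := by
          rw [Finset.card_insert_of_notMem (by simp [h1, hne]),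
            Finset.card_insert_of_notMem (by simp [h2]), hcard]
        have hle := Finset.card_le_univ (insert (S.left j) (insert (S.right j) l.toFinset))
        rw [hc2, Fintype.card_fin] at hle
        have hjm : j ≠ m := by
          intro h
          rw [← h] at hc
          rcases hc with rfl | rfl
          · exact h1 hcl
          · exact h2 hcl
        have hjm' : k + 1 ≠ (m : ℕ) := fun h => hjm (Fin.ext h)
        have : ∃ v, v ∉ insert (S.left j) (insert (S.right j) l.toFinset) := by
          by_contra! hcon
          have h := congrArg Finset.card (Finset.eq_univ_of_forall hcon)
          rw [hc2, Finset.card_univ, Fintype.card_fin] at h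
          omega
        obtain ⟨v, hv⟩ := this
        simp only [Finset.mem_insert, List.mem_toFinset, not_or] at hv
        refine ⟨v, hv.2.2, ?_⟩
        simp [h1, h2, Ne.symm hv.1, Ne.symm hv.2.1]

theorem exists_wires_full_sideCompat
    (n : ℕ) (hn : 0 < n) (S : BarStack n n) :
    ∃ w : Fin n → ℕ, StrictMono w ∧ (∀ j, w j ≤ n) ∧
      SideCompat S w (Finset.univ : Finset (Fin n)) := by
  have hn3 : 3 ≤ n := by
    by_contra hlt
    have h12 : n = 1 ∨ n = 2 := by omega
    rcases h12 with rfl | rfl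
    · have := S.lt 0
      omega
    · have h0 := S.lt 0
      have h1 := S.lt 1
      have := S.nodup 0 1 (by omega) (by omega)
      simp at this
  let m : Fin n := ⟨n - 2, by omega⟩
  let z : Fin n := ⟨0, by omega⟩
  have hmz : m ≠ z := by
    intro h
    have := congrArg Fin.val h
    simp only [m, z] at this
    omega
  have hex : ∃ c, (c = S.left m ∨ c = S.right m) ∧ c ≠ S.left z ∧ c ≠ S.right z := by
    by_contra! hcon
    have ha := hcon (S.left m) (Or.inl rfl)
    have hb := hcon (S.right m) (Or.inr rfl)
    have hm := S.lt m
    have hz := S.lt z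
    by_cases h1 : S.left m = S.left z
    · by_cases h2 : S.right m = S.left z
      · rw [h1, h2] at hm
        exact lt_irrefl _ hm
      · exact hmz (S.nodup _ _ h1 (hb h2))
    · have h3 := ha h1
      by_cases h2 : S.right m = S.left z
      · rw [h3, h2] at hm
        exact lt_asymm hm hz
      · rw [h3, hb h2] at hm
        exact lt_irrefl _ hm
  obtain ⟨c, hc, hc0⟩ := hex
  obtain ⟨l, hnd, hlen, -, hl⟩ := greedy_aux S m (by simp only [m]; omega) c hc
    (fun i hi => by
      have : i = z := Fin.ext hi
      rw [this]
      exact hc0) (n - 1) (by omega)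
  have hlen' : l.length = n := by omega
  have hmem : ∀ v, v ∈ l := by
    intro v
    have h := Finset.eq_univ_of_card l.toFinset
      (by rw [List.toFinset_card_of_nodup hnd, hlen', Fintype.card_fin])
    rw [← List.mem_toFinset, h]
    exact Finset.mem_univ v
  refine ⟨fun j => j, fun a b h => h, fun j => j.isLt.le,
    fun v => ⟨l.idxOf v, (List.idxOf_lt_length_of_mem (hmem v)).trans_eq hlen'⟩, ?_, ?_⟩
  · intro a _ b _ hab
    exact (List.idxOf_inj (hmem a)).1 (congrArg Fin.val hab)
  · intro i _ _
    have h := hl i (by omega)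
    rw [List.mem_take_iff_idxOf_lt (hmem _), List.mem_take_iff_idxOf_lt (hmem _)] at h
    simp only
    omega
end

section
/- For every positive integer n and every bar stack B_{n,n} (n bars on n pillars), there exists a strictly increasing sequence W of ⌊n/2⌋ integers from {0, 1, …, n} together with an ordered side compatible subset for W in B_{n,n} of size ⌊n/2⌋. -/
theorem exists_wires_half_orderedSideCompat
    (n : ℕ) (hn : 0 < n) (S : BarStack n n) :
    ∃ w : Fin (n / 2) → ℕ, StrictMono w ∧ (∀ j, w j ≤ n) ∧
      ∃ C : Finset (Fin n), OrderedSideCompat S w C ∧ C.card = n / 2 := by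
  have hk : 0 < n / 2 := by
    have h1 := S.lt ⟨0, hn⟩
    have h2 := (S.right ⟨0, hn⟩).isLt
    have h3 : (S.left ⟨0, hn⟩ : ℕ) < (S.right ⟨0, hn⟩ : ℕ) := h1
    omega
  refine ⟨fun j => (j : ℕ), fun _ _ h => h, fun j => by have := j.isLt; show (j : ℕ) ≤ n; omega, ?_⟩
  -- delete the left pillar of each of the lowest `n / 2 - 1` bars
  let L : Finset (Fin n) :=
    (Finset.univ : Finset (Fin (n / 2 - 1))).image (fun i : Fin (n / 2 - 1) => S.left ⟨i.1, by omega⟩)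
  have hL : L.card ≤ n / 2 - 1 := by
    simpa using (Finset.card_image_le (s := (Finset.univ : Finset (Fin (n / 2 - 1))))
      (f := fun i : Fin (n / 2 - 1) => S.left ⟨i.1, by omega⟩))
  have hLc : n / 2 ≤ Lᶜ.card := by
    rw [Finset.card_compl, Fintype.card_fin]
    omega
  obtain ⟨C, hCL, hC⟩ := Finset.exists_subset_card_eq hLc
  refine ⟨C, ?_, hC⟩
  -- place the remaining pillars in increasing order at `0, 1, …, n / 2 - 1`
  let e := C.orderIsoOfFin hC
  refine ⟨fun c => if h : c ∈ C then e.symm ⟨c, h⟩ else ⟨0, hk⟩, ?_, ?_⟩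
  · intro x hx y hy hxy
    have hx' : x ∈ C := hx
    have hy' : y ∈ C := hy
    simp only [hx', hy', dif_pos] at hxy
    simpa using e.symm.injective hxy
  · intro i hl hr
    left
    simp only [hl, hr, dif_pos]
    have hi : n / 2 ≤ (i : ℕ) + 1 := by
      by_contra hlt
      have h1 := hCL hl
      rw [Finset.mem_compl] at h1
      exact h1 (Finset.mem_image.mpr ⟨⟨i, by omega⟩, Finset.mem_univ _, rfl⟩)
    have h1 := (e.symm ⟨S.left i, hl⟩).isLt
    have h2 := (e.symm ⟨S.right i, hr⟩).isLt
    refine ⟨by omega, by omega, ?_⟩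
    exact e.symm.strictMono (show (⟨S.left i, hl⟩ : C) < ⟨S.right i, hr⟩ from S.lt i)
end

section
/- Suppose that for every positive integer n, every bar stack B_{n,n}, and every sequence W of 2n+2 integers from {0, …, n}, there is a side compatible subset of size n for W in B_{n,n}. Then for every positive integer n, every bar stack B_{n,n}, and every sequence W of n integers from {0, …, n}, there is a side compatible subset of size at least ⌊n/2⌋ − 2 for W in B_{n,n}. -/
/-- There are at least `m` ordered pairs on `m ≥ 3` pillars. -/
lemma card_pairs_ge (m : ℕ) (hm : 3 ≤ m) :
    m ≤ (Finset.univ.filter (fun p : Fin m × Fin m => p.1 < p.2)).card := by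
  classical
  let F : Fin m → Fin m × Fin m := fun i =>
    if h : (i : ℕ) + 1 < m then (i, ⟨i + 1, h⟩) else (⟨0, by omega⟩, ⟨m - 1, by omega⟩)
  have hF : Function.Injective F := by
    intro i j hij
    have hi := i.2
    have hj := j.2
    apply Fin.ext
    by_cases h1 : (i : ℕ) + 1 < m <;> by_cases h2 : (j : ℕ) + 1 < m <;>
      simp only [F, h1, h2, dif_pos, dif_neg, not_false_eq_true, Prod.mk.injEq, Fin.ext_iff] at hij <;>
      omega
  have := Finset.card_le_card_of_injOn (s := (Finset.univ : Finset (Fin m)))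
    (t := Finset.univ.filter (fun p : Fin m × Fin m => p.1 < p.2)) F
    (by
      intro i _
      have hi := i.2
      by_cases h1 : (i : ℕ) + 1 < m <;>
        simp only [F, h1, dif_pos, dif_neg, not_false_eq_true, Finset.coe_filter, Finset.mem_univ,
          true_and, Set.mem_setOf_eq, Fin.lt_def] <;> omega)
    hF.injOn
  simpa using this

/-- Half of the pillars (minus one) can be chosen with few induced bars. -/
lemma exists_sparse (n : ℕ) (S : BarStack n n) (hn : 2 ≤ n) :
    ∃ D : Finset (Fin n), D.card = n / 2 - 1 ∧
      (Finset.univ.filter (fun i => S.left i ∈ D ∧ S.right i ∈ D)).card ≤ n / 2 - 1 := by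
  classical
  obtain ⟨A, hA, hE⟩ : ∃ A : Finset (Fin n), n / 2 ≤ A.card ∧
      (Finset.univ.filter (fun i => S.left i ∈ A ∧ S.right i ∈ A)).card ≤ n / 2 := by
    obtain ⟨A, -, hA⟩ := Finset.exists_subset_card_eq (s := (Finset.univ : Finset (Fin n)))
      (n := n / 2) (by simp; omega)
    have hAc : Aᶜ.card = n - n / 2 := by rw [Finset.card_compl, hA]; simp
    by_cases h : (Finset.univ.filter (fun i => S.left i ∈ A ∧ S.right i ∈ A)).card ≤ n / 2
    · exact ⟨A, hA.ge, h⟩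
    · refine ⟨Aᶜ, by omega, ?_⟩
      have hd : Disjoint (Finset.univ.filter (fun i => S.left i ∈ A ∧ S.right i ∈ A))
          (Finset.univ.filter (fun i => S.left i ∈ Aᶜ ∧ S.right i ∈ Aᶜ)) := by
        rw [Finset.disjoint_left]
        intro i hi hi'
        simp only [Finset.mem_filter, Finset.mem_compl] at hi hi'
        exact hi'.2.1 hi.2.1
      have := Finset.card_le_univ (Finset.disjUnion _ _ hd)
      rw [Finset.card_disjUnion, Fintype.card_fin] at this
      omega
  by_cases hne : (Finset.univ.filter (fun i => S.left i ∈ A ∧ S.right i ∈ A)).Nonempty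
  · obtain ⟨i, hi⟩ := hne
    have hi' := hi
    simp only [Finset.mem_filter, Finset.mem_univ, true_and] at hi'
    obtain ⟨D, hD, hDc⟩ := Finset.exists_subset_card_eq (s := A.erase (S.left i))
      (n := n / 2 - 1) (by rw [Finset.card_erase_of_mem hi'.1]; omega)
    refine ⟨D, hDc, ?_⟩
    have hsub : (Finset.univ.filter (fun i => S.left i ∈ D ∧ S.right i ∈ D)) ⊆
        (Finset.univ.filter (fun i => S.left i ∈ A ∧ S.right i ∈ A)).erase i := by
      intro j hj
      simp only [Finset.mem_filter, Finset.mem_univ, true_and, Finset.mem_erase] at hj ⊢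
      have h1 := Finset.mem_erase.1 (hD hj.1)
      have h2 := Finset.mem_erase.1 (hD hj.2)
      refine ⟨?_, h1.2, h2.2⟩
      rintro rfl
      exact h1.1 rfl
    have := Finset.card_le_card hsub
    rw [Finset.card_erase_of_mem hi] at this
    omega
  · obtain ⟨D, hD, hDc⟩ := Finset.exists_subset_card_eq (s := A) (n := n / 2 - 1) (by omega)
    refine ⟨D, hDc, ?_⟩
    have : (Finset.univ.filter (fun i => S.left i ∈ D ∧ S.right i ∈ D)) = ∅ := by
      rw [Finset.not_nonempty_iff_eq_empty] at hne
      rw [← Finset.subset_empty, ← hne]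
      intro j hj
      simp only [Finset.mem_filter, Finset.mem_univ, true_and] at hj ⊢
      exact ⟨hD hj.1, hD hj.2⟩
    rw [this]; simp

/-- Compressing heights along an increasing enumeration. -/
lemma count_iff {e n : ℕ} (ψ : Fin e ↪o Fin n) (v : ℕ) (i : Fin e) :
    (i : ℕ) + 1 ≤ (Finset.univ.filter (fun k : Fin e => (ψ k : ℕ) + 1 ≤ v)).card ↔
      (ψ i : ℕ) + 1 ≤ v := by
  constructor
  · intro h
    by_contra hc
    have hsub : (Finset.univ.filter (fun k : Fin e => (ψ k : ℕ) + 1 ≤ v)) ⊆ Finset.Iio i := by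
      intro k hk
      simp only [Finset.mem_filter, Finset.mem_univ, true_and, Finset.mem_Iio] at hk ⊢
      by_contra hik
      have := Fin.le_def.1 (ψ.monotone (not_lt.1 hik))
      omega
    have := Finset.card_le_card hsub
    rw [Fin.card_Iio] at this
    omega
  · intro h
    have hsub : Finset.Iic i ⊆ (Finset.univ.filter (fun k : Fin e => (ψ k : ℕ) + 1 ≤ v)) := by
      intro k hk
      simp only [Finset.mem_filter, Finset.mem_univ, true_and, Finset.mem_Iic] at hk ⊢
      have := Fin.le_def.1 (ψ.monotone hk)
      omega
    have := Finset.card_le_card hsub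
    rwa [Fin.card_Iic] at this

theorem sideCompat_two_n_wires_implies_n_wires
    (H : ∀ n : ℕ, 0 < n → ∀ S : BarStack n n, ∀ w : Fin (2 * n + 2) → ℕ,
      (∀ j, w j ≤ n) → ∃ C : Finset (Fin n), SideCompat S w C ∧ C.card = n) :
    ∀ n : ℕ, 0 < n → ∀ S : BarStack n n, ∀ w : Fin n → ℕ, (∀ j, w j ≤ n) →
      ∃ C : Finset (Fin n), SideCompat S w C ∧ n / 2 - 2 ≤ C.card := by
  classical
  intro n hn S w hw
  by_cases hsmall : n / 2 - 1 < 3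
  · refine ⟨{⟨0, hn⟩}, ⟨id, Function.injective_id.injOn, ?_⟩, by simp; omega⟩
    intro i h1 h2
    rw [Finset.mem_singleton] at h1 h2
    have := S.lt i
    rw [h1, h2] at this
    exact absurd this (lt_irrefl _)
  obtain ⟨D, hD, hE⟩ := exists_sparse n S (by omega)
  obtain ⟨m, hm⟩ : ∃ m, m = n / 2 - 1 := ⟨_, rfl⟩
  rw [← hm] at hD hE hsmall
  set E := Finset.univ.filter (fun i => S.left i ∈ D ∧ S.right i ∈ D) with hEdef
  obtain ⟨e, he⟩ : ∃ e, E.card = e := ⟨_, rfl⟩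
  rw [he] at hE
  let φ := D.orderEmbOfFin hD
  let ψ := E.orderEmbOfFin he
  have hφ : ∀ c ∈ D, ∃ i, φ i = c := by
    intro c hc
    have : c ∈ Set.range (D.orderEmbOfFin hD) := by
      rw [Finset.range_orderEmbOfFin]; exact hc
    exact this
  have hψ : ∀ c ∈ E, ∃ i, ψ i = c := by
    intro c hc
    have : c ∈ Set.range (E.orderEmbOfFin he) := by
      rw [Finset.range_orderEmbOfFin]; exact hc
    exact this
  have hψE : ∀ k, S.left (ψ k) ∈ D ∧ S.right (ψ k) ∈ D := by
    intro k
    have : ψ k ∈ E := Finset.orderEmbOfFin_mem E he k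
    simpa [hEdef] using this
  choose L hL using fun k => hφ _ (hψE k).1
  choose R hR using fun k => hφ _ (hψE k).2
  let f : Fin m → Fin m × Fin m := fun i =>
    if h : (i : ℕ) < e then (L ⟨i, h⟩, R ⟨i, h⟩) else (⟨0, by omega⟩, ⟨0, by omega⟩)
  let s : Finset (Fin m) := Finset.univ.filter (fun i => (i : ℕ) < e)
  have hfs : Set.InjOn f s := by
    intro i hi j hj hij
    have hi : (i : ℕ) < e := by simpa [s] using hi
    have hj : (j : ℕ) < e := by simpa [s] using hj
    simp only [f, hi, hj, dif_pos, Prod.mk.injEq] at hij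
    have h1 := hL ⟨i, hi⟩
    have h2 := hR ⟨i, hi⟩
    rw [hij.1, hL] at h1
    rw [hij.2, hR] at h2
    have := ψ.injective (S.nodup _ _ h1 h2)
    simp only [Fin.mk.injEq] at this
    exact Fin.ext this.symm
  let P := Finset.univ.filter (fun p : Fin m × Fin m => p.1 < p.2)
  have hsP : s.image f ⊆ P := by
    intro p hp
    obtain ⟨i, hi, rfl⟩ := Finset.mem_image.1 hp
    have hi : (i : ℕ) < e := by simpa [s] using hi
    simp only [P, f, hi, dif_pos, Finset.mem_filter, Finset.mem_univ, true_and]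
    rw [← φ.lt_iff_lt, hL, hR]
    exact S.lt _
  obtain ⟨t, hst, htP, htc⟩ := Finset.exists_subsuperset_card_eq hsP (n := m)
    (by
      refine Finset.card_image_le.trans ?_
      simpa using Finset.card_le_univ s)
    (card_pairs_ge m (by omega))
  obtain ⟨G, hG⟩ := Finset.exists_equiv_extend_of_card_eq (t := t) (by simpa using htc.symm)
    hst hfs
  let T : BarStack m m :=
    { left := fun i => (G i : Fin m × Fin m).1
      right := fun i => (G i : Fin m × Fin m).2
      lt := fun i => by simpa [P] using htP (G i).2
      nodup := fun i j h1 h2 => G.injective (Subtype.ext (Prod.ext h1 h2)) }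
  let ι : Fin (2 * m + 2) → Fin n := Fin.castLE (by omega)
  have hι : Function.Injective ι := Fin.castLE_injective _
  let w' : Fin (2 * m + 2) → ℕ := fun j =>
    (Finset.univ.filter (fun k : Fin e => (ψ k : ℕ) + 1 ≤ w (ι j))).card
  obtain ⟨C, ⟨g, hg, hgc⟩, hC⟩ := H m (by omega) T w' (by
    intro j
    refine (Finset.card_le_univ _).trans ?_
    simpa using hE)
  have hCu : C = Finset.univ := by
    rw [← Finset.card_eq_iff_eq_univ, hC, Fintype.card_fin]
  subst hCu
  haveI : Nonempty (Fin m) := ⟨⟨0, by omega⟩⟩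
  have hinv : ∀ i, Function.invFun φ (φ i) = i := Function.leftInverse_invFun φ.injective
  refine ⟨D, ⟨fun c => ι (g (Function.invFun φ c)), ?_, ?_⟩, by omega⟩
  · intro a ha b hb hab
    obtain ⟨a, rfl⟩ := hφ a ha
    obtain ⟨b, rfl⟩ := hφ b hb
    simp only [hinv] at hab
    rw [hg (by simp) (by simp) (hι hab)]
  · intro i h1 h2
    obtain ⟨k, rfl⟩ := hψ i (by simp [hEdef, h1, h2])
    have hke : (k : ℕ) < m := lt_of_lt_of_le k.2 hE
    have hGk : (G ⟨k, hke⟩ : Fin m × Fin m) = (L k, R k) := by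
      rw [hG _ (by simp [s])]
      simp [f]
    have := hgc ⟨k, hke⟩ (by simp) (by simp)
    simp only [T, hGk, w'] at this
    simp only [← hL, ← hR, hinv]
    have c1 := count_iff ψ (w (ι (g (L k)))) k
    have c2 := count_iff ψ (w (ι (g (R k)))) k
    rcases this with ⟨p, q⟩ | ⟨p, q⟩
    · left
      constructor
      · by_contra hc
        have := c1.2 (by omega)
        omega
      · by_contra hc
        have := c2.2 (by omega)
        omega
    · exact Or.inr ⟨c1.1 p, c2.1 q⟩
end

section
/- For every positive integer n, every bar stack B_{n,n}, and every sequence W of 2n+2 integers from {0, …, n}, there exists a side compatible subset for W in B_{n,n} of size at least ⌊n/2⌋. -/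
theorem exists_inj_aux {n m : ℕ} (s : Finset (Fin m)) (h : n ≤ s.card) :
    ∃ g : Fin n → Fin m, Function.Injective g ∧ ∀ i, g i ∈ s := by
  refine ⟨fun i => s.orderEmbOfFin rfl (Fin.castLE h i), ?_, ?_⟩
  · intro i j hij
    exact Fin.castLE_injective h ((s.orderEmbOfFin rfl).injective hij)
  · intro i
    exact s.orderEmbOfFin_mem rfl _

theorem sideCompat_of_two_n_plus_two_wires
    (n : ℕ) (hn : 0 < n) (S : BarStack n n)
    (w : Fin (2 * n + 2) → ℕ) (hw : ∀ j, w j ≤ n) :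
    ∃ C : Finset (Fin n), SideCompat S w C ∧ n / 2 ≤ C.card := by
  classical
  -- It suffices to use wires none of which is separated by the bars outside a small set `bad`.
  have key : ∀ (g : Fin n → Fin (2 * n + 2)) (bad : Finset (Fin n)), Function.Injective g →
      bad.card ≤ n - n / 2 →
      (∀ i, i ∉ bad → (∀ j, w (g j) < (i : ℕ) + 1) ∨ (∀ j, (i : ℕ) + 1 ≤ w (g j))) →
      ∃ C : Finset (Fin n), SideCompat S w C ∧ n / 2 ≤ C.card := by
    intro g bad hg hb h
    refine ⟨(bad.image S.left)ᶜ, ⟨g, hg.injOn, ?_⟩, ?_⟩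
    · intro i hl _
      have hi : i ∉ bad := fun hi =>
        (Finset.mem_compl.1 hl) (Finset.mem_image_of_mem _ hi)
      rcases h i hi with h | h
      · exact Or.inl ⟨h _, h _⟩
      · exact Or.inr ⟨h _, h _⟩
    · have h1 : (bad.image S.left).card ≤ bad.card := Finset.card_image_le
      rw [Finset.card_compl, Fintype.card_fin]
      omega
  have hsum := Finset.card_filter_add_card_filter_not
    (s := (Finset.univ : Finset (Fin (2 * n + 2)))) (fun j => w j ≤ n / 2)
  rw [Finset.card_univ, Fintype.card_fin] at hsum
  have hbnd : ∀ (bad : Finset (Fin n)) (a b : ℕ), (∀ i ∈ bad, a ≤ (i : ℕ) ∧ (i : ℕ) < b) →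
      bad.card ≤ b - a := by
    intro bad a b h
    rw [← Nat.card_Ico, ← Finset.card_map Fin.valEmbedding]
    apply Finset.card_le_card
    intro x hx
    obtain ⟨i, hi, rfl⟩ := Finset.mem_map.1 hx
    exact Finset.mem_Ico.2 (h i hi)
  by_cases hA : n ≤ (Finset.univ.filter (fun j => w j ≤ n / 2)).card
  · obtain ⟨g, hg, hm⟩ := exists_inj_aux _ hA
    refine key g (Finset.univ.filter (fun i => (i : ℕ) < n / 2)) hg ?_ ?_
    · have := hbnd (Finset.univ.filter (fun i => (i : ℕ) < n / 2)) 0 (n / 2) (by simp)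
      omega
    · intro i hi
      left
      intro j
      have := hm j
      simp at this hi
      omega
  · obtain ⟨g, hg, hm⟩ := exists_inj_aux (n := n)
      (Finset.univ.filter (fun j => ¬ w j ≤ n / 2)) (by omega)
    refine key g (Finset.univ.filter (fun i => n / 2 + 1 ≤ (i : ℕ))) hg ?_ ?_
    · have := hbnd (Finset.univ.filter (fun i => n / 2 + 1 ≤ (i : ℕ))) (n / 2 + 1) n
        (fun i hi => ⟨(Finset.mem_filter.1 hi).2, i.2⟩)
      omega
    · intro i hi
      right
      intro j
      have := (Finset.mem_filter.1 (hm j)).2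
      have h2 : ¬ (n / 2 + 1 ≤ (i : ℕ)) := fun h =>
        hi (Finset.mem_filter.2 ⟨Finset.mem_univ _, h⟩)
      omega
end

section
/- For every even integer n ≥ 2, letting l = n(n−1)/2, there exist a complete bar stack B_{l,n} on n pillars (a bar stack with l bars in which every pair (a,b) with 1 ≤ a < b ≤ n occurs as a bar) and a sequence W of (n/2 + 1)(n − 1) integers from {0, …, l} such that every side compatible subset for W in B_{l,n} has size at most n − 1. -/
/-- Rotation of `d` by `k` modulo `n`. -/
def zzRot (n k d : ℕ) : ℕ := if k + d < n then k + d else k + d - n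

/-- Predecessor of `d` on the zigzag path `0, 1, -1, 2, -2, …` modulo `n`. -/
def zzPar (n d : ℕ) : ℕ := if d = 1 then 0 else if 2 * d ≤ n then n + 1 - d else n - d

theorem zz_lt (m k d : ℕ) (hk : k < m) (hd : d < 2 * m) : zzRot (2 * m) k d < 2 * m := by
  unfold zzRot; split_ifs <;> omega

theorem zzPar_lt (m d : ℕ) (hd1 : 1 ≤ d) (hd : d < 2 * m) : zzPar (2 * m) d < 2 * m := by
  unfold zzPar; split_ifs <;> omega

theorem zz_ne (m k d : ℕ) (hk : k < m) (hd1 : 1 ≤ d) (hd : d < 2 * m) :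
    zzRot (2 * m) k d ≠ zzRot (2 * m) k (zzPar (2 * m) d) := by
  unfold zzRot zzPar; split_ifs <;> omega

theorem zz_inj (m k d k' d' : ℕ) (hk : k < m) (hd1 : 1 ≤ d) (hd : d < 2 * m)
    (hk' : k' < m) (hd1' : 1 ≤ d') (hd' : d' < 2 * m)
    (h1 : min (zzRot (2 * m) k d) (zzRot (2 * m) k (zzPar (2 * m) d)) =
      min (zzRot (2 * m) k' d') (zzRot (2 * m) k' (zzPar (2 * m) d')))
    (h2 : max (zzRot (2 * m) k d) (zzRot (2 * m) k (zzPar (2 * m) d)) =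
      max (zzRot (2 * m) k' d') (zzRot (2 * m) k' (zzPar (2 * m) d'))) :
    k = k' ∧ d = d' := by
  have key : ∀ k d : ℕ, k < m → 1 ≤ d → d < 2 * m → ∃ c e : ℕ, c < 2 ∧ e < 2 ∧
      (c = 1 ↔ d ≤ m) ∧
      zzRot (2 * m) k d + zzRot (2 * m) k (zzPar (2 * m) d) = 2 * k + c + e * (2 * m) := by
    intro k d hk hd1 hd
    unfold zzRot zzPar
    by_cases hdm : d ≤ m
    · refine ⟨1, if 2 * k + 1 ≤ (if k + d < 2 * m then k + d else k + d - 2 * m) +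
        (if k + zzPar (2 * m) d < 2 * m then k + zzPar (2 * m) d
          else k + zzPar (2 * m) d - 2 * m) - 2 * m ∧ 2 * m ≤ (if k + d < 2 * m then k + d else k + d - 2 * m) +
        (if k + zzPar (2 * m) d < 2 * m then k + zzPar (2 * m) d
          else k + zzPar (2 * m) d - 2 * m) then 1 else 0, by omega, by split_ifs <;> omega,
          by omega, ?_⟩
      unfold zzPar
      split_ifs <;> omega
    · refine ⟨0, if 2 * k ≤ (if k + d < 2 * m then k + d else k + d - 2 * m) +
        (if k + zzPar (2 * m) d < 2 * m then k + zzPar (2 * m) d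
          else k + zzPar (2 * m) d - 2 * m) - 2 * m ∧ 2 * m ≤ (if k + d < 2 * m then k + d else k + d - 2 * m) +
        (if k + zzPar (2 * m) d < 2 * m then k + zzPar (2 * m) d
          else k + zzPar (2 * m) d - 2 * m) then 1 else 0, by omega, by split_ifs <;> omega,
          by omega, ?_⟩
      unfold zzPar
      split_ifs <;> omega
  obtain ⟨c, e, hc, he, hcd, hs⟩ := key k d hk hd1 hd
  obtain ⟨c', e', hc', he', hcd', hs'⟩ := key k' d' hk' hd1' hd'
  have hsum : 2 * k + c + e * (2 * m) = 2 * k' + c' + e' * (2 * m) := by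
    rw [← hs, ← hs']; omega
  have hkk : k = k' ∧ c = c' := by
    interval_cases e <;> interval_cases e' <;> omega
  obtain ⟨rfl, rfl⟩ := hkk
  refine ⟨rfl, ?_⟩
  have hor : zzRot (2 * m) k d = zzRot (2 * m) k d' ∨
    zzRot (2 * m) k d = zzRot (2 * m) k (zzPar (2 * m) d') := by omega
  clear h1 h2 hs hs' hsum key
  unfold zzRot zzPar at hor
  split_ifs at hor <;> omega

theorem zz_surj (m a b : ℕ) (hab : a < b) (hb : b < 2 * m) :
    ∃ k d, k < m ∧ 1 ≤ d ∧ d < 2 * m ∧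
      min (zzRot (2 * m) k d) (zzRot (2 * m) k (zzPar (2 * m) d)) = a ∧
      max (zzRot (2 * m) k d) (zzRot (2 * m) k (zzPar (2 * m) d)) = b := by
  obtain ⟨k, c, e, hk, hc, he, hs⟩ : ∃ k c e : ℕ, k < m ∧ c < 2 ∧ e < 2 ∧
      a + b = 2 * k + c + e * (2 * m) := by
    by_cases h : a + b < 2 * m
    · exact ⟨(a + b) / 2, (a + b) % 2, 0, by omega, by omega, by omega, by omega⟩
    · exact ⟨(a + b - 2 * m) / 2, (a + b) % 2, 1, by omega, by omega, by omega, by omega⟩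
  have main : ∀ x y : ℕ, x < 2 * m → y < 2 * m → x ≠ y → a + b = x + y →
      min x y = a → max x y = b → ∀ d, d < 2 * m → 1 ≤ d → (c = 1 ↔ d ≤ m) →
      (x = k + d ∨ x + 2 * m = k + d) → 
      ∃ k d, k < m ∧ 1 ≤ d ∧ d < 2 * m ∧
      min (zzRot (2 * m) k d) (zzRot (2 * m) k (zzPar (2 * m) d)) = a ∧
      max (zzRot (2 * m) k d) (zzRot (2 * m) k (zzPar (2 * m) d)) = b := by
    intro x y hx hy hxy hsum hmin hmax d hd hd1 hcd hxd
    have e1 : zzRot (2 * m) k d = x := by unfold zzRot; split_ifs <;> omega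
    have e2 : zzRot (2 * m) k (zzPar (2 * m) d) = y := by
      unfold zzRot zzPar
      interval_cases e <;> interval_cases c <;> split_ifs <;> omega
    exact ⟨k, d, hk, hd1, hd, by rw [e1, e2, hmin], by rw [e1, e2, hmax]⟩
  obtain ⟨da, hda, hda'⟩ : ∃ d, d < 2 * m ∧ (a = k + d ∨ a + 2 * m = k + d) := by
    by_cases h : k ≤ a
    · exact ⟨a - k, by omega, by omega⟩
    · exact ⟨a + 2 * m - k, by omega, by omega⟩
  obtain ⟨db, hdb, hdb'⟩ : ∃ d, d < 2 * m ∧ (b = k + d ∨ b + 2 * m = k + d) := by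
    by_cases h : k ≤ b
    · exact ⟨b - k, by omega, by omega⟩
    · exact ⟨b + 2 * m - k, by omega, by omega⟩
  by_cases h : 1 ≤ da ∧ (c = 1 ↔ da ≤ m)
  · exact main a b (by omega) hb (by omega) rfl (by omega) (by omega) da hda h.1 h.2 hda'
  · refine main b a hb (by omega) (by omega) (by omega) (by omega) (by omega) db hdb ?_ ?_ hdb'
    · interval_cases e <;> interval_cases c <;> omega
    · interval_cases e <;> interval_cases c <;> omega

theorem zz_conn (m k : ℕ) (hk : k < m) (P : ℕ → Prop)
    (h : ∀ d, 1 ≤ d → d < 2 * m →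
      (P (zzRot (2 * m) k d) ↔ P (zzRot (2 * m) k (zzPar (2 * m) d)))) :
    ∀ v, v < 2 * m → (P v ↔ P k) := by
  have hk0 : zzRot (2 * m) k 0 = k := by unfold zzRot; split_ifs <;> omega
  have key : ∀ q d, d < 2 * m → (if d ≤ m then 2 * d else 2 * (2 * m - d) + 1) ≤ q →
      (P (zzRot (2 * m) k d) ↔ P k) := by
    intro q
    induction q with
    | zero =>
      intro d hd hq
      have : d = 0 := by split_ifs at hq <;> omega
      rw [this, hk0]
    | succ q ih =>
      intro d hd hq
      by_cases hd0 : d = 0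
      · rw [hd0, hk0]
      · rw [h d (by omega) hd]
        refine ih _ (zzPar_lt m d (by omega) hd) ?_
        unfold zzPar
        split_ifs at hq ⊢ <;> omega
  intro v hv
  by_cases hvk : k ≤ v
  · have e : zzRot (2 * m) k (v - k) = v := by unfold zzRot; split_ifs <;> omega
    have := key _ (v - k) (by omega) le_rfl
    rwa [e] at this
  · have e : zzRot (2 * m) k (v + 2 * m - k) = v := by unfold zzRot; split_ifs <;> omega
    have := key _ (v + 2 * m - k) (by omega) le_rfl
    rwa [e] at this

theorem exists_complete_barStack_small_sideCompat
    (n : ℕ) (hn : 2 ≤ n) (hev : Even n) :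
    ∃ S : BarStack (n * (n - 1) / 2) n,
      (∀ a b : Fin n, a < b → ∃ i, S.left i = a ∧ S.right i = b) ∧
      ∃ w : Fin ((n / 2 + 1) * (n - 1)) → ℕ, (∀ j, w j ≤ n * (n - 1) / 2) ∧
        ∀ C : Finset (Fin n), SideCompat S w C → C.card ≤ n - 1 := by
  obtain ⟨m, hm⟩ := hev
  obtain rfl : n = 2 * m := by omega
  obtain ⟨N, hN⟩ : ∃ N, N = 2 * m - 1 := ⟨_, rfl⟩
  have hNpos : 0 < N := by omega
  have hl : 2 * m * (2 * m - 1) / 2 = m * N := by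
    rw [← hN, mul_assoc]; exact Nat.mul_div_cancel_left _ (by norm_num)
  have hm2 : 2 * m / 2 = m := by omega
  rw [hl, hm2, ← hN]
  have hik : ∀ i : Fin (m * N), (i : ℕ) / N < m := fun i =>
    (Nat.div_lt_iff_lt_mul hNpos).2 i.2
  have hid : ∀ i : ℕ, i % N + 1 < 2 * m := fun i => by
    have := Nat.mod_lt i hNpos
    omega
  have hA : ∀ i : Fin (m * N), zzRot (2 * m) (i / N) (i % N + 1) < 2 * m := fun i =>
    zz_lt m _ _ (hik i) (hid i)
  have hB : ∀ i : Fin (m * N),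
      zzRot (2 * m) (i / N) (zzPar (2 * m) (i % N + 1)) < 2 * m := fun i =>
    zz_lt m _ _ (hik i) (zzPar_lt m _ (by omega) (hid i))
  have hne : ∀ i : Fin (m * N), zzRot (2 * m) (i / N) (i % N + 1) ≠
      zzRot (2 * m) (i / N) (zzPar (2 * m) (i % N + 1)) := fun i =>
    zz_ne m _ _ (hik i) (by omega) (hid i)
  let S : BarStack (m * N) (2 * m) :=
    { left := fun i => ⟨min (zzRot (2 * m) (i / N) (i % N + 1))
        (zzRot (2 * m) (i / N) (zzPar (2 * m) (i % N + 1))), by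
          have := hA i; omega⟩
      right := fun i => ⟨max (zzRot (2 * m) (i / N) (i % N + 1))
        (zzRot (2 * m) (i / N) (zzPar (2 * m) (i % N + 1))), by
          have := hA i; have := hB i; omega⟩
      lt := fun i => by
        have := hne i
        rw [Fin.mk_lt_mk]; omega
      nodup := fun i j h1 h2 => by
        have h := zz_inj m _ _ _ _ (hik i) (by omega) (hid i) (hik j) (by omega) (hid j)
          (Fin.mk.inj_iff.1 h1) (Fin.mk.inj_iff.1 h2)
        apply Fin.ext
        rw [← Nat.div_add_mod (i : ℕ) N, ← Nat.div_add_mod (j : ℕ) N, h.1,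
          Nat.add_right_cancel h.2] }
  have hidx : ∀ k d : ℕ, k < m → 1 ≤ d → d < 2 * m →
      ∃ i : Fin (m * N), (i : ℕ) / N = k ∧ (i : ℕ) % N + 1 = d := by
    intro k d hk hd1 hd
    have hr : d - 1 < N := by omega
    refine ⟨⟨N * k + (d - 1), ?_⟩, ?_, ?_⟩
    · calc N * k + (d - 1) < N * (k + 1) := by rw [mul_add]; omega
        _ ≤ N * m := Nat.mul_le_mul_left _ hk
        _ = m * N := mul_comm _ _
    · simp only
      rw [Nat.mul_add_div hNpos, Nat.div_eq_of_lt hr, add_zero]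
    · simp only
      rw [Nat.mul_add_mod, Nat.mod_eq_of_lt hr]; omega
  refine ⟨S, ?_, fun j => (j / N) * N, ?_, ?_⟩
  · intro a b hab
    obtain ⟨k, d, hk, hd1, hd, h1, h2⟩ := zz_surj m a b hab b.2
    obtain ⟨i, hi1, hi2⟩ := hidx k d hk hd1 hd
    refine ⟨i, Fin.ext ?_, Fin.ext ?_⟩
    · simp only [S, hi1, hi2, h1]
    · simp only [S, hi1, hi2, h2]
  · intro j
    have : (j : ℕ) / N < m + 1 := (Nat.div_lt_iff_lt_mul hNpos).2 j.2
    exact Nat.mul_le_mul_right _ (by omega)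
  · rintro C ⟨g, hg, hbar⟩
    by_contra hcard
    have hCu : C = Finset.univ := by
      apply Finset.eq_univ_of_card
      have := Finset.card_le_univ C
      rw [Fintype.card_fin] at this ⊢
      omega
    subst hCu
    -- block index of the value assigned to a pillar
    obtain ⟨T, hT⟩ : ∃ T : Fin (2 * m) → ℕ, ∀ v, T v = (g v : ℕ) / N := ⟨_, fun _ => rfl⟩
    have hTm : ∀ v, T v ≤ m := fun v => by
      rw [hT]
      exact Nat.lt_succ_iff.1 ((Nat.div_lt_iff_lt_mul hNpos).2 (g v).2)
    have hlr : ∀ i : Fin (m * N), T (S.left i) ≤ (i : ℕ) / N ↔ T (S.right i) ≤ (i : ℕ) / N := by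
      intro i
      have hiff : ∀ t : ℕ, t * N < (i : ℕ) + 1 ↔ t ≤ (i : ℕ) / N := fun t => by
        rw [Nat.le_div_iff_mul_le hNpos, Nat.lt_succ_iff]
      have h := hbar i (Finset.mem_univ _) (Finset.mem_univ _)
      simp only [← hT] at h
      rw [← hiff, ← hiff]
      rcases h with h | h <;> omega
    have hblock : ∀ k (hk : k < m) (v : Fin (2 * m)),
        T v ≤ k ↔ T ⟨k, by omega⟩ ≤ k := by
      intro k hk v
      have := zz_conn m k hk (fun x => ∃ hx : x < 2 * m, T ⟨x, hx⟩ ≤ k) (by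
        intro d hd1 hd
        obtain ⟨i, hi1, hi2⟩ := hidx k d hk hd1 hd
        have h := hlr i
        have ha := hA i
        have hb := hB i
        simp only [S, hi1, hi2] at h ha hb
        simp only [ha, hb, exists_true_left]
        rcases le_total (zzRot (2 * m) k d) (zzRot (2 * m) k (zzPar (2 * m) d)) with hle | hle
        · simpa only [min_eq_left hle, max_eq_right hle] using h
        · simpa only [min_eq_right hle, max_eq_left hle] using h.symm) v v.2
      have hk2 : k < 2 * m := by omega
      simpa only [v.2, hk2, exists_true_left] using this
    have hconst : ∀ u v, T u ≤ T v := by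
      intro u v
      by_contra hlt
      have hk : T v < m := by have := hTm u; omega
      have h1 := hblock _ hk u
      have h2 := hblock _ hk v
      have := h1.2 (h2.1 le_rfl)
      omega
    -- all pillars receive the same value, which occurs only `N` times
    have hc := Fintype.card_le_of_injective
      (fun v : Fin (2 * m) => (⟨(g v : ℕ) % N, Nat.mod_lt _ hNpos⟩ : Fin N)) (by
        intro u v huv
        apply hg (by simp) (by simp)
        apply Fin.ext
        have h1 : (g u : ℕ) / N = (g v : ℕ) / N := by
          rw [← hT, ← hT]; exact le_antisymm (hconst _ _) (hconst _ _)
        rw [← Nat.div_add_mod (g u : ℕ) N, ← Nat.div_add_mod (g v : ℕ) N, h1,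
          Fin.mk.inj_iff.1 huv])
    simp only [Fintype.card_fin] at hc
    omega
end

section
/- There exists a constant c such that for every positive integer n there is a 1-avoiding 2n-point set P = B ∪ R in general position (with |B| = |R| = n) in which every focal parallel set has size at most c. -/
open Set

/-- The line `{x | a x₁ + b x₂ = c}` determined by the triple `v = (a, b, c)`. -/
def lineSet (v : ℝ × ℝ × ℝ) : Set Pt := {x | v.1 * x.1 + v.2.1 * x.2 = v.2.2}

/-- The complement of the union of the lines of `L`. -/
def linesCompl (L : Finset (ℝ × ℝ × ℝ)) : Set Pt := {y | ∀ v ∈ L, y ∉ lineSet v}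

/-- `L` is a spoke set for `P`: a finite set of (nondegenerate) pairwise non-parallel
lines such that every unbounded connected component of the complement of their union
contains at least one point of `P`. -/
def IsSpokeSet (P : Set Pt) (L : Finset (ℝ × ℝ × ℝ)) : Prop :=
  (∀ v ∈ L, (v.1, v.2.1) ≠ ((0 : ℝ), (0 : ℝ))) ∧
  (∀ v ∈ L, ∀ u ∈ L, v ≠ u → v.1 * u.2.1 ≠ u.1 * v.2.1) ∧
  (∀ x : Pt, x ∈ linesCompl L →
    ¬ Bornology.IsBounded (connectedComponentIn (linesCompl L) x) →
    ∃ p ∈ P, p ∈ connectedComponentIn (linesCompl L) x)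

/-- `p` is strictly above the non-vertical line `y = l.1 * x + l.2`. -/
def Above (l : ℝ × ℝ) (p : Pt) : Prop := l.1 * p.1 + l.2 < p.2

/-- The two-coloured point set `B ∪ R` has a parallel set of size `k`: there are
non-vertical lines `L 0, …, L k` and subsets `B' ⊆ B` and `R' ⊆ R` of size `k` such that
the sets of points of `B'` (resp. `R'`) strictly above the lines are strictly increasing. -/
def HasParallelSet (B R : Finset Pt) (k : ℕ) : Prop :=
  ∃ L : Fin (k + 1) → ℝ × ℝ, ∃ B' ⊆ B, ∃ R' ⊆ R, B'.card = k ∧ R'.card = k ∧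
    ∀ i : Fin k,
      {p ∈ (↑B' : Set Pt) | Above (L i.castSucc) p} ⊂
        {p ∈ (↑B' : Set Pt) | Above (L i.succ) p} ∧
      {p ∈ (↑R' : Set Pt) | Above (L i.castSucc) p} ⊂
        {p ∈ (↑R' : Set Pt) | Above (L i.succ) p}

/-- `A` avoids `B`: no line through two distinct points of `A` meets the convex hull
of `B`. -/
def Avoids (A B : Set Pt) : Prop :=
  ∀ p ∈ A, ∀ q ∈ A, p ≠ q → ∀ x ∈ convexHull ℝ B, det2 p q x ≠ 0

/-- `B ∪ R` is a colour-separable `2n`-point set. -/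
def ColourSep (n : ℕ) (B R : Finset Pt) : Prop :=
  Disjoint B R ∧ B.card = n ∧ R.card = n ∧ GenPos (↑B ∪ ↑R) ∧ LineSeparated ↑B ↑R

/-- `B ∪ R` is a `1`-avoiding point set with colour classes of size `n`:
colour-separable and `B` avoids `R`. -/
def OneAvoiding (n : ℕ) (B R : Finset Pt) : Prop :=
  ColourSep n B R ∧ Avoids ↑B ↑R

/-- `B ∪ R` has a focal parallel set of size `k`: a parallel set all of whose lines pass
through a common point. -/
def HasFocalParallelSet (B R : Finset Pt) (k : ℕ) : Prop :=
  ∃ L : Fin (k + 1) → ℝ × ℝ,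
    (∃ q : Pt, ∀ i, q.2 = (L i).1 * q.1 + (L i).2) ∧
    ∃ B' ⊆ B, ∃ R' ⊆ R, B'.card = k ∧ R'.card = k ∧
      ∀ i : Fin k,
        {p ∈ (↑B' : Set Pt) | Above (L i.castSucc) p} ⊂
          {p ∈ (↑B' : Set Pt) | Above (L i.succ) p} ∧
        {p ∈ (↑R' : Set Pt) | Above (L i.castSucc) p} ⊂
          {p ∈ (↑R' : Set Pt) | Above (L i.succ) p}

lemma chain_points (S : Set Pt) (k : ℕ) (L : Fin (k + 1) → ℝ × ℝ)
    (h : ∀ i : Fin k, {p ∈ S | Above (L i.castSucc) p} ⊂ {p ∈ S | Above (L i.succ) p}) :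
    ∀ i : Fin k, ∃ p ∈ S, (∀ j : Fin (k + 1), j ≤ i.castSucc → ¬ Above (L j) p) ∧
      (∀ j : Fin (k + 1), i.castSucc < j → Above (L j) p) := by
  intro i
  have hm : StrictMono (fun j : Fin (k + 1) => {p ∈ S | Above (L j) p}) :=
    Fin.strictMono_iff_lt_succ.2 h
  obtain ⟨p, hp, hp'⟩ := Set.exists_of_ssubset (h i)
  refine ⟨p, hp.1, fun j hj ha => hp' (hm.monotone hj ⟨hp.1, ha⟩), fun j hj => ?_⟩
  have : i.succ ≤ j := Fin.castSucc_lt_iff_succ_le.1 hj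
  exact (hm.monotone this hp).2

lemma slope_bound (ε M m c x y x' y' : ℝ) (hx0 : 0 ≤ x) (hx : x ≤ M) (hy0 : 0 ≤ y) (hy : y ≤ M)
    (hx0' : 0 ≤ x') (hx' : x' ≤ M) (hy0' : 0 ≤ y') (hy' : y' ≤ M)
    (hM : 1 ≤ M) (he : 0 < ε) (heM : ε * M ^ 2 ≤ 1 / 16)
    (h1 : m * (ε * x ^ 2) + c < x) (h2 : y ≤ m * (1 + ε * y ^ 2) + c)
    (h3 : x' ≤ m * (ε * x' ^ 2) + c) (h4 : m * (1 + ε * y' ^ 2) + c < y') :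
    |m| ≤ 2 * M := by
  have key : ∀ z : ℝ, 0 ≤ z → z ≤ M → 0 ≤ ε * z ^ 2 ∧ ε * z ^ 2 ≤ 1 / 16 := by
    intro z h0 h1
    refine ⟨by positivity, le_trans ?_ heM⟩
    gcongr
  have a1 := key x hx0 hx
  have a2 := key y hy0 hy
  have a3 := key x' hx0' hx'
  have a4 := key y' hy0' hy'
  rw [abs_le]
  constructor
  · by_contra hc
    push Not at hc
    nlinarith [mul_le_mul_of_nonneg_right hc.le (show 0 ≤ 1 + ε * y ^ 2 - ε * x ^ 2 - 1/2 by linarith)]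
  · by_contra hc
    push Not at hc
    nlinarith [mul_le_mul_of_nonneg_right hc.le (show 0 ≤ 1 + ε * y' ^ 2 - ε * x' ^ 2 - 1/2 by linarith)]

lemma core (n K : ℕ) (ε M : ℝ) (hK : K = 6 * n + 12) (hM : 1 ≤ M) (he : 0 < ε)
    (heM : ε * M ^ 2 ≤ 1 / 16) (heM' : 2 * M * (ε * M ^ 2) ≤ 1 / 8)
    (r e : ℕ → ℕ) (m c : ℕ → ℝ) (u v : ℝ)
    (hrn : ∀ i < 6, r i < n)
    (hrM : ∀ i < 6, (r i : ℝ) ≤ M) (hbM : ∀ i < 6, ((K : ℝ) ^ (e i)) ≤ M)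
    (hq : ∀ i ≤ 6, v = m i * u + c i)
    (hr1 : ∀ i < 6, ∀ j ≤ i, (r i : ℝ) ≤ m j * (ε * (r i : ℝ) ^ 2) + c j)
    (hr2 : ∀ i < 6, ∀ j ≤ 6, i < j → m j * (ε * (r i : ℝ) ^ 2) + c j < r i)
    (hb1 : ∀ i < 6, ∀ j ≤ i, ((K : ℝ) ^ (e i)) ≤ m j * (1 + ε * ((K : ℝ) ^ (e i)) ^ 2) + c j)
    (hb2 : ∀ i < 6, ∀ j ≤ 6, i < j → m j * (1 + ε * ((K : ℝ) ^ (e i)) ^ 2) + c j < (K : ℝ) ^ (e i)) :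
    False := by
  have hm : ∀ j, 1 ≤ j → j ≤ 5 → |m j| ≤ 2 * M := by
    intro j h1 h5
    exact slope_bound ε M (m j) (c j) (r 0) ((K : ℝ) ^ (e j)) (r j) ((K : ℝ) ^ (e 0))
      (by positivity) (hrM 0 (by omega)) (by positivity) (hbM j (by omega))
      (by positivity) (hrM j (by omega)) (by positivity) (hbM 0 (by omega))
      hM he heM (hr2 0 (by omega) j (by omega) (by omega)) (hb1 j (by omega) j le_rfl)
      (hr1 j (by omega) j le_rfl) (hb2 0 (by omega) j (by omega) (by omega))
  have pert : ∀ j, 1 ≤ j → j ≤ 5 → ∀ z : ℝ, 0 ≤ z → z ≤ M → |m j * (ε * z ^ 2)| ≤ 1 / 8 := by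
    intro j h1 h5 z hz0 hz
    rw [abs_mul, abs_of_nonneg (show 0 ≤ ε * z ^ 2 by positivity)]
    refine le_trans ?_ heM'
    have := hm j h1 h5
    gcongr
  have R1 : ∀ i, 1 ≤ i → i ≤ 5 → (r i : ℝ) - 1 / 8 ≤ c i := by
    intro i h1 h5
    have := hr1 i (by omega) i le_rfl
    have := abs_le.1 (pert i h1 h5 (r i) (by positivity) (hrM i (by omega)))
    linarith
  have R2 : ∀ i, i ≤ 4 → c (i + 1) < r i + 1 / 8 := by
    intro i h5
    have := hr2 i (by omega) (i + 1) (by omega) (by omega)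
    have := abs_le.1 (pert (i + 1) (by omega) (by omega) (r i) (by positivity) (hrM i (by omega)))
    linarith
  have B1 : ∀ i, 1 ≤ i → i ≤ 5 → (K : ℝ) ^ (e i) - 1 / 8 ≤ m i + c i := by
    intro i h1 h5
    have := hb1 i (by omega) i le_rfl
    have := abs_le.1 (pert i h1 h5 ((K : ℝ) ^ (e i)) (by positivity) (hbM i (by omega)))
    linarith
  have B2 : ∀ i, i ≤ 4 → m (i + 1) + c (i + 1) < (K : ℝ) ^ (e i) + 1 / 8 := by
    intro i h5
    have := hb2 i (by omega) (i + 1) (by omega) (by omega)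
    have := abs_le.1 (pert (i + 1) (by omega) (by omega) ((K : ℝ) ^ (e i)) (by positivity) (hbM i (by omega)))
    linarith
  have rdec : ∀ i, i ≤ 4 → r (i + 1) < r i := by
    intro i hi
    have h1 := R1 (i + 1) (by omega) (by omega)
    have h2 := R2 i hi
    have h3 : (r (i + 1) : ℝ) < (r i + 1 : ℕ) := by push_cast; linarith
    have h4 : r (i + 1) < r i + 1 := by exact_mod_cast h3
    have h5 : r (i + 1) ≠ r i := by
      intro h
      have a := hr1 (i + 1) (by omega) (i + 1) le_rfl
      have b := hr2 i (by omega) (i + 1) (by omega) (by omega)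
      rw [h] at a
      linarith
    omega
  have bdec : ∀ i, i ≤ 4 → e (i + 1) < e i := by
    intro i hi
    have h1 := B1 (i + 1) (by omega) (by omega)
    have h2 := B2 i hi
    have h3 : ((K ^ e (i + 1) : ℕ) : ℝ) < (K ^ e i + 1 : ℕ) := by push_cast; linarith
    have h4 : K ^ e (i + 1) < K ^ e i + 1 := by exact_mod_cast h3
    have h5 : e (i + 1) ≠ e i := by
      intro h
      have a := hb1 (i + 1) (by omega) (i + 1) le_rfl
      have b := hb2 i (by omega) (i + 1) (by omega) (by omega)
      rw [h] at a
      linarith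
    have h6 : e (i + 1) ≤ e i := (Nat.pow_le_pow_iff_right (by omega : 1 < K)).1 (by omega)
    omega
  have hK1 : (1 : ℝ) ≤ K := by exact_mod_cast (by omega : 1 ≤ K)
  have hKr : (K : ℝ) = 6 * n + 12 := by exact_mod_cast hK
  set b2 : ℝ := (K : ℝ) ^ (e 2) with hb2def
  have hb2 : 1 ≤ b2 := one_le_pow₀ hK1
  have hb12 : (K : ℝ) * b2 ≤ (K : ℝ) ^ (e 1) := by
    rw [hb2def, ← pow_succ']
    exact pow_le_pow_right₀ hK1 (bdec 1 (by norm_num))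
  have hb5 : 0 ≤ (K : ℝ) ^ (e 5) := by positivity
  have hr34 : (r 4 : ℝ) + 1 ≤ r 3 := by exact_mod_cast rdec 3 (by norm_num)
  have hr0 : (r 0 : ℝ) ≤ n := by exact_mod_cast (hrn 0 (by norm_num)).le
  have hr30 : (0 : ℝ) ≤ r 3 := by positivity
  have c1 := R2 0 (by norm_num)
  have c3 := R1 3 (by norm_num) (by norm_num)
  have c5 := R2 4 (by norm_num)
  have g1 := B1 1 (by norm_num) (by norm_num)
  have g3 := B2 2 (by norm_num)
  have g5 := B1 5 (by norm_num) (by norm_num)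
  norm_num at c1 c5 g3
  have q1 := hq 1 (by norm_num)
  have q3 := hq 3 (by norm_num)
  have q5 := hq 5 (by norm_num)
  have ident : (c 1 - c 3) * ((m 3 + c 3) - (m 5 + c 5)) =
      (c 3 - c 5) * ((m 1 + c 1) - (m 3 + c 3)) := by
    have e1 : c 1 - c 3 = -u * (m 1 - m 3) := by linarith
    have e2 : c 3 - c 5 = -u * (m 3 - m 5) := by linarith
    linear_combination (m 3 - m 5) * e1 - (m 1 - m 3) * e2
  have x1 : c 1 - c 3 ≤ n + 1 := by linarith
  have x2 : (m 3 + c 3) - (m 5 + c 5) ≤ 2 * b2 := by linarith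
  have x3 : 1 / 2 ≤ c 3 - c 5 := by linarith
  have x4 : (K - 2) * b2 ≤ (m 1 + c 1) - (m 3 + c 3) := by linarith
  have hn : (0 : ℝ) ≤ n := by positivity
  have y1 : 1 / 2 * ((K - 2) * b2) ≤ (c 3 - c 5) * ((m 1 + c 1) - (m 3 + c 3)) :=
    mul_le_mul x3 x4 (by nlinarith) (by linarith)
  have hg35 : 0 ≤ (m 3 + c 3) - (m 5 + c 5) := by
    have := B1 3 (by norm_num) (by norm_num)
    have := B2 4 (by norm_num)
    have h7 : (K : ℝ) * (K : ℝ) ^ (e 4) ≤ (K : ℝ) ^ (e 3) := by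
      rw [← pow_succ']
      exact pow_le_pow_right₀ hK1 (bdec 3 (by norm_num))
    have h8 : 1 ≤ (K : ℝ) ^ (e 4) := one_le_pow₀ hK1
    norm_num at this
    nlinarith
  have y2 : (c 1 - c 3) * ((m 3 + c 3) - (m 5 + c 5)) ≤ (n + 1) * (2 * b2) :=
    mul_le_mul x1 x2 hg35 (by linarith)
  nlinarith

/-- Points on the parabola `x = s + ε y²`. -/
noncomputable def ppt (ε s y : ℝ) : Pt := (s + ε * y ^ 2, y)

lemma collinear_det2 (p q r : Pt) (h : Collinear ℝ ({p, q, r} : Set Pt)) :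
    det2 p q r = 0 := by
  rw [collinear_iff_of_mem (p₀ := p) (by simp)] at h
  obtain ⟨w, hw⟩ := h
  obtain ⟨a, ha⟩ := hw q (by simp)
  obtain ⟨b, hb⟩ := hw r (by simp)
  subst ha hb
  simp [det2]
  ring

lemma eps_bound (ε M a b c d : ℝ) (he : 0 < ε) (heM : ε * M ^ 2 ≤ 1 / 16)
    (ha : |a - b| ≤ M) (hc : |c - d| ≤ M) : |ε * (a - b) * (c - d)| ≤ 1 / 16 := by
  rw [abs_mul, abs_mul, abs_of_pos he]
  have : 0 ≤ M := (abs_nonneg _).trans ha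
  calc ε * |a - b| * |c - d| ≤ ε * M * M := by gcongr
    _ ≤ 1 / 16 := by nlinarith

lemma ppt_det (ε M s t w x y z : ℝ) (hs : s = 0 ∨ s = 1) (ht : t = 0 ∨ t = 1) (hw : w = 0 ∨ w = 1)
    (he : 0 < ε) (heM : ε * M ^ 2 ≤ 1 / 16)
    (hx0 : 0 ≤ x) (hx : x ≤ M) (hy0 : 0 ≤ y) (hy : y ≤ M) (hz0 : 0 ≤ z) (hz : z ≤ M)
    (hxy : s = t → x ≠ y) (hxz : s = w → x ≠ z) (hyz : t = w → y ≠ z) :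
    det2 (ppt ε s x) (ppt ε t y) (ppt ε w z) ≠ 0 := by
  have e : det2 (ppt ε s x) (ppt ε t y) (ppt ε w z) =
      (t - s) * (z - x) - (w - s) * (y - x) + ε * (y - x) * (z - x) * (y - z) := by
    simp only [det2, ppt]; ring
  rw [e]
  have dxy : |y - x| ≤ M := abs_le.2 ⟨by linarith, by linarith⟩
  have dxz : |z - x| ≤ M := abs_le.2 ⟨by linarith, by linarith⟩
  have dyz : |y - z| ≤ M := abs_le.2 ⟨by linarith, by linarith⟩
  have b1 := abs_le.1 (eps_bound ε M y x z x he heM dxy dxz)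
  have b2 := abs_le.1 (eps_bound ε M y x y z he heM dxy dyz)
  have b3 := abs_le.1 (eps_bound ε M z x y z he heM dxz dyz)
  have hd : (t - s = 1 ∨ t - s = -1 ∨ s = t) ∧ (w - s = 1 ∨ w - s = -1 ∨ s = w) := by
    rcases hs with rfl | rfl <;> rcases ht with rfl | rfl <;> rcases hw with rfl | rfl <;> norm_num
  by_cases h1 : s = t
  · replace hxy := hxy h1
    subst h1
    by_cases h2 : s = w
    · have n1 := hxz h2
      have n2 := hyz h2
      subst h2
      simp only [sub_self, zero_mul, zero_add]
      exact mul_ne_zero (mul_ne_zero (mul_ne_zero he.ne' (sub_ne_zero.2 hxy.symm))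
        (sub_ne_zero.2 n1.symm)) (sub_ne_zero.2 n2)
    · have : (s - s) * (z - x) - (w - s) * (y - x) + ε * (y - x) * (z - x) * (y - z) =
          (y - x) * (ε * (z - x) * (y - z) - (w - s)) := by ring
      rw [this]
      refine mul_ne_zero (sub_ne_zero.2 hxy.symm) ?_
      rcases hd.2 with h | h | h
      · rw [h]; intro h0; linarith
      · rw [h]; intro h0; linarith
      · exact absurd h h2
  · by_cases h2 : s = w
    · have n1 := hxz h2
      subst h2
      have : (t - s) * (z - x) - (s - s) * (y - x) + ε * (y - x) * (z - x) * (y - z) =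
          (z - x) * (ε * (y - x) * (y - z) + (t - s)) := by ring
      rw [this]
      refine mul_ne_zero (sub_ne_zero.2 n1.symm) ?_
      rcases hd.1 with h | h | h
      · rw [h]; intro h0; linarith
      · rw [h]; intro h0; linarith
      · exact absurd h h1
    · have h3 : t = w := by
        rcases hs with rfl | rfl <;> rcases ht with rfl | rfl <;> rcases hw with rfl | rfl <;> simp_all
      have n1 := hyz h3
      subst h3
      have : (t - s) * (z - x) - (t - s) * (y - x) + ε * (y - x) * (z - x) * (y - z) =
          (y - z) * (ε * (y - x) * (z - x) - (t - s)) := by ring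
      rw [this]
      refine mul_ne_zero (sub_ne_zero.2 n1) ?_
      rcases hd.1 with h | h | h
      · rw [h]; intro h0; linarith
      · rw [h]; intro h0; linarith
      · exact absurd h h1

lemma avoid_det (ε M y z : ℝ) (x : Pt) (hM : 1 ≤ M) (he : 0 < ε) (heM : ε * M ^ 2 ≤ 1 / 16)
    (hy0 : 0 ≤ y) (hy : y ≤ M) (hz0 : 0 ≤ z) (hz : z ≤ M) (hyz : y ≠ z)
    (hx1 : x.1 ≤ 1 / 16) (hx2 : 0 ≤ x.2) (hx2' : x.2 ≤ M) :
    det2 (ppt ε 1 y) (ppt ε 1 z) x ≠ 0 := by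
  have e : det2 (ppt ε 1 y) (ppt ε 1 z) x =
      (z - y) * (1 - x.1 + ε * (y - 0) * (x.2 - 0) + ε * (z - 0) * (x.2 - y)) := by
    simp only [det2, ppt]; ring
  rw [e]
  refine mul_ne_zero (sub_ne_zero.2 hyz.symm) ?_
  have b1 := abs_le.1 (eps_bound ε M y 0 x.2 0 he heM (abs_le.2 ⟨by linarith, by linarith⟩)
    (abs_le.2 ⟨by linarith, by linarith⟩))
  have b2 := abs_le.1 (eps_bound ε M z 0 x.2 y he heM (abs_le.2 ⟨by linarith, by linarith⟩)
    (abs_le.2 ⟨by linarith, by linarith⟩))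
  intro h
  linarith

theorem exists_oneAvoiding_focalParallelSet_bounded :
    ∃ c : ℕ, ∀ n : ℕ, 0 < n → ∃ B R : Finset Pt, OneAvoiding n B R ∧
      ∀ k : ℕ, HasFocalParallelSet B R k → k ≤ c := by
  refine ⟨5, fun n hn => ?_⟩
  obtain ⟨K, hK⟩ : ∃ K : ℕ, K = 6 * n + 12 := ⟨_, rfl⟩
  obtain ⟨M, hMdef⟩ : ∃ M : ℝ, M = (K : ℝ) ^ n := ⟨_, rfl⟩
  obtain ⟨ε, hε⟩ : ∃ ε : ℝ, ε = 1 / (16 * M ^ 3) := ⟨_, rfl⟩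
  have hK1 : (1 : ℝ) ≤ K := by exact_mod_cast (by omega : 1 ≤ K)
  have hM : 1 ≤ M := hMdef ▸ one_le_pow₀ hK1
  have hM0 : 0 < M := by linarith
  have he : 0 < ε := by rw [hε]; positivity
  have heM3 : ε * M ^ 3 = 1 / 16 := by rw [hε]; field_simp
  have heM' : 2 * M * (ε * M ^ 2) ≤ 1 / 8 := by nlinarith
  have heM : ε * M ^ 2 ≤ 1 / 16 := by
    rw [← heM3]
    gcongr
    norm_num
  have hnM : (n : ℝ) ≤ M := by
    rw [hMdef]
    exact_mod_cast (Nat.lt_pow_self (by omega : 1 < K)).le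
  have hRM : ∀ j < n, (j : ℝ) ≤ M := fun j hj =>
    le_trans (by exact_mod_cast hj.le) hnM
  have hBM : ∀ j < n, (K : ℝ) ^ j ≤ M := fun j hj => by
    rw [hMdef]; exact pow_le_pow_right₀ hK1 hj.le
  have hpinj : ∀ s t x y : ℝ, ppt ε s x = ppt ε t y → s = t ∧ x = y := by
    intro s t x y h
    simp only [ppt, Prod.mk.injEq] at h
    obtain ⟨h1, rfl⟩ := h
    exact ⟨by linarith, rfl⟩
  classical
  obtain ⟨B, hB⟩ : ∃ B : Finset Pt, B = (Finset.range n).image (fun j => ppt ε 1 ((K : ℝ) ^ j)) :=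
    ⟨_, rfl⟩
  obtain ⟨R, hR⟩ : ∃ R : Finset Pt, R = (Finset.range n).image (fun j : ℕ => ppt ε 0 (j : ℝ)) :=
    ⟨_, rfl⟩
  have memB : ∀ p ∈ B, ∃ j < n, p = ppt ε 1 ((K : ℝ) ^ j) := by
    intro p hp
    rw [hB] at hp
    obtain ⟨j, hj, rfl⟩ := Finset.mem_image.1 hp
    exact ⟨j, Finset.mem_range.1 hj, rfl⟩
  have memR : ∀ p ∈ R, ∃ j < n, p = ppt ε 0 (j : ℝ) := by
    intro p hp
    rw [hR] at hp
    obtain ⟨j, hj, rfl⟩ := Finset.mem_image.1 hp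
    exact ⟨j, Finset.mem_range.1 hj, rfl⟩
  have memU : ∀ p ∈ (↑B ∪ ↑R : Set Pt), ∃ s y : ℝ, (s = 0 ∨ s = 1) ∧ 0 ≤ y ∧ y ≤ M ∧
      p = ppt ε s y := by
    rintro p (hp | hp)
    · obtain ⟨j, hj, rfl⟩ := memB p hp
      exact ⟨1, _, Or.inr rfl, by positivity, hBM j hj, rfl⟩
    · obtain ⟨j, hj, rfl⟩ := memR p hp
      exact ⟨0, _, Or.inl rfl, by positivity, hRM j hj, rfl⟩
  have small : ∀ y : ℝ, 0 ≤ y → y ≤ M → 0 ≤ ε * y ^ 2 ∧ ε * y ^ 2 ≤ 1 / 16 := by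
    intro z h0 h1
    refine ⟨by positivity, le_trans ?_ heM⟩
    gcongr
  refine ⟨B, R, ⟨⟨?_, ?_, ?_, ?_, ?_⟩, ?_⟩, ?_⟩
  · rw [Finset.disjoint_left]
    intro p hp hp'
    obtain ⟨i, -, rfl⟩ := memB p hp
    obtain ⟨j, -, h⟩ := memR _ hp'
    have := (hpinj _ _ _ _ h).1
    norm_num at this
  · rw [hB, Finset.card_image_of_injective, Finset.card_range]
    intro i j h
    have h2 := (hpinj _ _ _ _ h).2
    have h3 : K ^ i = K ^ j := by exact_mod_cast h2
    exact Nat.pow_right_injective (by omega : 2 ≤ K) h3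
  · rw [hR, Finset.card_image_of_injective, Finset.card_range]
    intro i j h
    exact_mod_cast (hpinj _ _ _ _ h).2
  · intro p hp q hq r hr hpq hpr hqr hcol
    have hd := collinear_det2 p q r hcol
    obtain ⟨s, x, hs, hx0, hx, rfl⟩ := memU p hp
    obtain ⟨t, y, ht, hy0, hy, rfl⟩ := memU q hq
    obtain ⟨w, z, hw, hz0, hz, rfl⟩ := memU r hr
    refine ppt_det ε M s t w x y z hs ht hw he heM hx0 hx hy0 hy hz0 hz ?_ ?_ ?_ hd
    · rintro rfl rfl; exact hpq rfl
    · rintro rfl rfl; exact hpr rfl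
    · rintro rfl rfl; exact hqr rfl
  · refine ⟨-1, 0, -1 / 2, by simp, ?_, ?_⟩
    · intro p hp
      obtain ⟨j, hj, rfl⟩ := memB p hp
      have := small _ (by positivity) (hBM j hj)
      simp only [ppt]; linarith
    · intro p hp
      obtain ⟨j, hj, rfl⟩ := memR p hp
      have := small _ (by positivity) (hRM j hj)
      simp only [ppt]; linarith
  · intro p hp q hq hpq x hx
    have hsub : convexHull ℝ (↑R : Set Pt) ⊆ Set.Iic (1 / 16 : ℝ) ×ˢ Set.Icc (0 : ℝ) M := by
      refine convexHull_min ?_ ((convex_Iic _).prod (convex_Icc _ _))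
      intro r hr
      obtain ⟨j, hj, rfl⟩ := memR r hr
      have := small _ (by positivity) (hRM j hj)
      refine ⟨?_, ?_, hRM j hj⟩
      · simp only [ppt, Set.mem_Iic]; linarith
      · simp only [ppt]; positivity
    obtain ⟨hx1, hx2, hx3⟩ := hsub hx
    obtain ⟨i, hi, rfl⟩ := memB p hp
    obtain ⟨j, hj, rfl⟩ := memB q hq
    exact avoid_det ε M _ _ x hM he heM (by positivity) (hBM i hi) (by positivity) (hBM j hj)
      (fun h => hpq (by rw [h])) hx1 hx2 hx3
  · rintro k ⟨L, ⟨⟨u, v⟩, hq⟩, B', hB', R', hR', -, -, h⟩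
    by_contra hk
    push Not at hk
    have cB : ∀ i : Fin k, ∃ e : ℕ, e < n ∧
        (∀ j : Fin (k + 1), j ≤ i.castSucc → ¬ Above (L j) (ppt ε 1 ((K : ℝ) ^ e))) ∧
        (∀ j : Fin (k + 1), i.castSucc < j → Above (L j) (ppt ε 1 ((K : ℝ) ^ e))) := by
      intro i
      obtain ⟨p, hp, h1, h2⟩ := chain_points _ k L (fun i => (h i).1) i
      obtain ⟨e, he, rfl⟩ := memB p (hB' hp)
      exact ⟨e, he, h1, h2⟩
    have cR : ∀ i : Fin k, ∃ e : ℕ, e < n ∧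
        (∀ j : Fin (k + 1), j ≤ i.castSucc → ¬ Above (L j) (ppt ε 0 (e : ℝ))) ∧
        (∀ j : Fin (k + 1), i.castSucc < j → Above (L j) (ppt ε 0 (e : ℝ))) := by
      intro i
      obtain ⟨p, hp, h1, h2⟩ := chain_points _ k L (fun i => (h i).2) i
      obtain ⟨e, he, rfl⟩ := memR p (hR' hp)
      exact ⟨e, he, h1, h2⟩
    choose e he1 he2 he3 using cB
    choose r hr1 hr2 hr3 using cR
    let T : ℕ → ℝ × ℝ := fun i => if hi : i < k + 1 then L ⟨i, hi⟩ else (0, 0)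
    have hT : ∀ i (hi : i < k + 1), T i = L ⟨i, hi⟩ := fun i hi => dif_pos hi
    let e' : ℕ → ℕ := fun i => if hi : i < k then e ⟨i, hi⟩ else 0
    have he' : ∀ i (hi : i < k), e' i = e ⟨i, hi⟩ := fun i hi => dif_pos hi
    let r' : ℕ → ℕ := fun i => if hi : i < k then r ⟨i, hi⟩ else 0
    have hr' : ∀ i (hi : i < k), r' i = r ⟨i, hi⟩ := fun i hi => dif_pos hi
    refine core n K ε M hK hM he heM heM' r' e' (fun i => (T i).1) (fun i => (T i).2) u v
      ?_ ?_ ?_ ?_ ?_ ?_ ?_ ?_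
    · intro i hi
      rw [hr' i (by omega)]; exact hr1 _
    · intro i hi
      rw [hr' i (by omega)]; exact hRM _ (hr1 _)
    · intro i hi
      rw [he' i (by omega)]; exact hBM _ (he1 _)
    · intro i hi
      simp only [hT i (by omega)]
      exact hq _
    · intro i hi j hj
      have := hr2 ⟨i, by omega⟩ ⟨j, by omega⟩ hj
      simp only [hT j (by omega), hr' i (by omega)]
      simpa [Above, ppt] using this
    · intro i hi j hj6 hj
      have := hr3 ⟨i, by omega⟩ ⟨j, by omega⟩ hj
      simp only [hT j (by omega), hr' i (by omega)]
      simpa [Above, ppt] using this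
    · intro i hi j hj
      have := he2 ⟨i, by omega⟩ ⟨j, by omega⟩ hj
      simp only [hT j (by omega), he' i (by omega)]
      simpa [Above, ppt] using this
    · intro i hi j hj6 hj
      have := he3 ⟨i, by omega⟩ ⟨j, by omega⟩ hj
      simp only [hT j (by omega), he' i (by omega)]
      simpa [Above, ppt] using this
end
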